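/- arXiv:2003.12709 — 3 statements merged into one kernel-verified Lean document; each statement's English description precedes it below -/
import Mathlib

section
/- For a convex polyhedron, taking the right angle as unit, the sum of the angles of all its faces equals 4(n0 - 2), where n0 is the number of vertices. Equivalently, the sum of all face angles equals 2π(n0 - 2). -/
/-!
For a standard Gaussian vector `x`, the probability that `⟪x, a⟫` and `⟪x, b⟫` have opposite signs
is additive in the angle between `a` and `b` by rotation invariance, hence equals that angle divided
by `π`. So the angle of a face `F` at a vertex `v` is `π` times the probability that the functional
`⟪x, ·⟫` takes values on `F` on both sides of its value at `v`. Almost surely this functional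
separates the vertices. Projecting the polyhedron centrally from a vertex `v` to a plane gives a
convex polygon, whose boundary meets the image of the level plane of `⟪x, ·⟫` through `v` in two
edges, unless `⟪x, ·⟫` is extremal at `v`. Thus each of the `n₀ - 2` vertices other than the
maximum and the minimum accounts for exactly two such faces, and the total angle is
`π * 2 * (n₀ - 2)`.
-/

open MeasureTheory ProbabilityTheory Module Real Set
open InnerProductGeometry (angle)
open scoped RealInnerProductSpace

section Additive

theorem eq_zero_of_additive_of_bounded {g : ℝ → ℝ} {L M : ℝ}
    (hadd : ∀ s t, 0 ≤ s → 0 ≤ t → s + t ≤ L → g (s + t) = g s + g t) (hL : g L = 0)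
    (hM : ∀ t ∈ Icc 0 L, |g t| ≤ M) {t : ℝ} (ht : t ∈ Icc 0 L) : g t = 0 := by
  have hdyadic : ∀ n : ℕ, ∀ t ∈ Icc 0 L, |g t| ≤ M / 2 ^ n := by
    intro n
    induction n with
    | zero => simpa using hM
    | succ n ih =>
      have hhalf : ∀ t, 0 ≤ t → t ≤ L / 2 → |g t| ≤ M / 2 ^ (n + 1) := by
        intro t h0 h1
        have hdouble := ih (t + t) ⟨by linarith, by linarith⟩
        rw [hadd t t h0 h0 (by linarith), ← two_mul, abs_mul, abs_two] at hdouble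
        rw [pow_succ, ← div_div]
        linarith
      rintro t ⟨h0, h1⟩
      rcases le_total t (L / 2) with h | h
      · exact hhalf t h0 h
      · have hrefl := hadd t (L - t) h0 (by linarith) (by linarith)
        rw [add_sub_cancel, hL] at hrefl
        rw [eq_neg_of_add_eq_zero_left hrefl.symm, abs_neg]
        exact hhalf _ (by linarith) (by linarith)
  have hlim : Filter.Tendsto (fun n : ℕ ↦ M / 2 ^ n) Filter.atTop (nhds 0) :=
    tendsto_const_nhds.div_atTop (tendsto_pow_atTop_atTop_of_one_lt one_lt_two)
  exact abs_nonpos_iff.mp (ge_of_tendsto' hlim fun n ↦ hdyadic n t ht)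

theorem eq_div_mul_of_additive_of_bounded {f : ℝ → ℝ} {L M : ℝ} (hLpos : 0 < L)
    (hadd : ∀ s t, 0 ≤ s → 0 ≤ t → s + t ≤ L → f (s + t) = f s + f t)
    (hM : ∀ t ∈ Icc 0 L, |f t| ≤ M) {t : ℝ} (ht : t ∈ Icc 0 L) : f t = t / L * f L := by
  rw [← sub_eq_zero]
  refine eq_zero_of_additive_of_bounded (g := fun t ↦ f t - t / L * f L) (M := M + M)
    (fun s t hs ht hst ↦ ?_) (by simp [hLpos.ne']) (fun t ht ↦ ?_) ht
  · simp only [hadd s t hs ht hst]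
    ring
  · have hfrac : |t / L| ≤ 1 := by
      rw [abs_of_nonneg (div_nonneg ht.1 hLpos.le)]
      exact (div_le_one hLpos).mpr ht.2
    calc |f t - t / L * f L| ≤ |f t| + |t / L * f L| := abs_sub _ _
      _ ≤ M + M := by
        rw [abs_mul]
        exact add_le_add (hM t ht) ((mul_le_of_le_one_left (abs_nonneg _) hfrac).trans
          (hM L ⟨hLpos.le, le_rfl⟩))

end Additive

section Circle

variable {E : Type*} [NormedAddCommGroup E] [InnerProductSpace ℝ E]

/-- The point at angle `t` on the circle with orthogonal radii `a` and `b`, starting at `a`. -/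
noncomputable def circlePoint (a b : E) (t : ℝ) : E :=
  cos t • a + sin t • b

variable {a b : E}

theorem circlePoint_zero : circlePoint a b 0 = a := by simp [circlePoint]

theorem circlePoint_pi : circlePoint a b π = -a := by simp [circlePoint]

theorem circlePoint_circlePoint (s t : ℝ) :
    circlePoint (circlePoint a b s) (circlePoint a b (s + π / 2)) t = circlePoint a b (s + t) := by
  simp only [circlePoint, cos_add_pi_div_two, sin_add_pi_div_two]
  rw [cos_add, sin_add]
  module

theorem sin_add_smul_circlePoint (s t : ℝ) :
    sin (s + t) • circlePoint a b s = sin t • a + sin s • circlePoint a b (s + t) := by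
  have hcos : sin (s + t) * cos s = sin t + sin s * cos (s + t) := by
    rw [sin_add, cos_add]
    linear_combination sin t * sin_sq_add_cos_sq s
  simp only [circlePoint, smul_add, smul_smul, hcos, mul_comm (sin (s + t)) (sin s)]
  module

theorem orthonormal_pair_iff :
    Orthonormal ℝ ![a, b] ↔ ‖a‖ = 1 ∧ ‖b‖ = 1 ∧ ⟪a, b⟫ = 0 := by
  simp [orthonormal_vecCons_iff, and_comm]

theorem orthonormal_circlePoint (hab : Orthonormal ℝ ![a, b]) (t : ℝ) :
    Orthonormal ℝ ![circlePoint a b t, circlePoint a b (t + π / 2)] := by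
  obtain ⟨ha, hb, h⟩ := orthonormal_pair_iff.mp hab
  have hinner : ∀ s t : ℝ, ⟪circlePoint a b s, circlePoint a b t⟫ = cos (t - s) := by
    intro s t
    simp only [circlePoint, inner_add_left, inner_add_right, real_inner_smul_left,
      real_inner_smul_right, real_inner_self_eq_norm_sq, ha, hb, h, real_inner_comm a b, cos_sub]
    ring
  have hnorm : ∀ t : ℝ, ‖circlePoint a b t‖ = 1 := fun t ↦ by
    rw [norm_eq_sqrt_real_inner, hinner, sub_self, cos_zero, sqrt_one]
  exact orthonormal_pair_iff.mpr ⟨hnorm _, hnorm _, by simp [hinner]⟩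

theorem circlePoint_ne_zero (hab : Orthonormal ℝ ![a, b]) (t : ℝ) : circlePoint a b t ≠ 0 :=
  (orthonormal_circlePoint hab t).ne_zero 0

theorem exists_circlePoint_angle_eq (ha : ‖a‖ = 1) (hb : ‖b‖ = 1) (h : sin (angle a b) ≠ 0) :
    ∃ c, Orthonormal ℝ ![a, c] ∧ circlePoint a c (angle a b) = b := by
  set θ := angle a b
  have hcos : ⟪a, b⟫ = cos θ := by
    simpa [ha, hb] using (InnerProductGeometry.cos_angle_mul_norm_mul_norm a b).symm
  have hnorm : ‖b - cos θ • a‖ = sin θ := by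
    rw [norm_eq_sqrt_real_inner, sqrt_eq_iff_eq_sq real_inner_self_nonneg
      (InnerProductGeometry.sin_angle_nonneg a b), inner_sub_sub_self]
    simp only [real_inner_smul_left, real_inner_smul_right, real_inner_self_eq_norm_sq, ha, hb,
      hcos, real_inner_comm a b, norm_smul, mul_pow, norm_eq_abs, sq_abs]
    linear_combination -sin_sq_add_cos_sq θ
  refine ⟨(sin θ)⁻¹ • (b - cos θ • a), orthonormal_pair_iff.mpr ⟨ha, ?_, ?_⟩, ?_⟩
  · rw [← hnorm, norm_smul, norm_inv, norm_norm, inv_mul_cancel₀ (hnorm ▸ h)]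
  · simp [real_inner_smul_right, inner_sub_right, hcos, ha]
  · rw [circlePoint, smul_inv_smul₀ h, add_sub_cancel]

theorem exists_linearIsometryEquiv_of_orthonormal [FiniteDimensional ℝ E] {ι : Type*}
    {v w : ι → E} (hv : Orthonormal ℝ v) (hw : Orthonormal ℝ w) :
    ∃ e : E ≃ₗᵢ[ℝ] E, ∀ i, e (v i) = w i := by
  have hspan {u : ι → E} (hu : Orthonormal ℝ u) :
      Orthonormal ℝ (Basis.span hu.linearIndependent) := by
    convert! orthonormal_span hu
    simp [Basis.span_apply]
  let L := (Submodule.span ℝ (range w)).subtypeₗᵢ.comp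
    ((hspan hv).equiv (hspan hw) (Equiv.refl ι)).toLinearIsometry
  refine ⟨L.extend.toLinearIsometryEquiv rfl, fun i ↦ ?_⟩
  have hvi : v i = Basis.span hv.linearIndependent i := by simp [Basis.span_apply]
  rw [LinearIsometry.toLinearIsometryEquiv_apply, hvi, LinearIsometry.extend_apply]
  change ((hspan hv).equiv (hspan hw) (Equiv.refl ι) (Basis.span hv.linearIndependent i) : E) = w i
  rw [Orthonormal.equiv_apply, Equiv.refl_apply, Basis.span_apply]

end Circle

section SignChange

variable {E : Type*} [NormedAddCommGroup E] [InnerProductSpace ℝ E]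

/-- The vectors forming an acute angle with one of `a`, `b` and an obtuse angle with the other. -/
def signChange (a b : E) : Set E :=
  {x | ⟪x, a⟫ * ⟪x, b⟫ < 0}

theorem signChange_self (a : E) : signChange a a = ∅ := by
  ext x
  simp [signChange, mul_self_nonneg]

theorem signChange_smul {r s : ℝ} (hr : 0 < r) (hs : 0 < s) (a b : E) :
    signChange (r • a) (s • b) = signChange a b := by
  ext x
  simp only [signChange, mem_ofPred_eq, real_inner_smul_right, mul_mul_mul_comm r]
  exact smul_neg_iff_of_pos_left (mul_pos hr hs)

theorem disjoint_signChange_circlePoint {a b : E} {s t : ℝ} (hs : 0 < s) (ht : 0 < t)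
    (hst : s + t ≤ π) : Disjoint (signChange a (circlePoint a b s))
      (signChange (circlePoint a b s) (circlePoint a b (s + t))) := by
  rw [disjoint_left]
  intro x h₁ h₂
  simp only [signChange, mem_ofPred_eq] at h₁ h₂
  have hsin_s : 0 < sin s := sin_pos_of_pos_of_lt_pi hs (by linarith)
  have hsin_t : 0 < sin t := sin_pos_of_pos_of_lt_pi ht (by linarith)
  have hsin_st : 0 ≤ sin (s + t) := sin_nonneg_of_nonneg_of_le_pi (by linarith) hst
  have hinner := congrArg (⟪x, ·⟫) (sin_add_smul_circlePoint (a := a) (b := b) s t)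
  simp only [inner_add_right, real_inner_smul_right] at hinner
  have hsq : sin (s + t) * (⟪x, circlePoint a b s⟫ * ⟪x, circlePoint a b s⟫) =
      sin t * (⟪x, a⟫ * ⟪x, circlePoint a b s⟫) +
        sin s * (⟪x, circlePoint a b s⟫ * ⟪x, circlePoint a b (s + t)⟫) := by
    linear_combination ⟪x, circlePoint a b s⟫ * hinner
  linarith [mul_nonneg hsin_st (mul_self_nonneg ⟪x, circlePoint a b s⟫),
    mul_neg_of_pos_of_neg hsin_t h₁, mul_neg_of_pos_of_neg hsin_s h₂]

theorem mul_neg_iff_xor_of_ne_zero {x y z : ℝ} (hx : x ≠ 0) (hy : y ≠ 0) (hz : z ≠ 0) :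
    x * z < 0 ↔ Xor (x * y < 0) (y * z < 0) := by
  rcases hx.lt_or_gt with hx | hx <;> rcases hy.lt_or_gt with hy | hy <;>
    rcases hz.lt_or_gt with hz | hz <;>
    simp [Xor, mul_neg_iff, hx, hy, hz, hx.not_gt, hy.not_gt, hz.not_gt]

variable [FiniteDimensional ℝ E] [MeasurableSpace E] [BorelSpace E]

theorem measurableSet_signChange (a b : E) : MeasurableSet (signChange a b) :=
  measurableSet_lt (by fun_prop) (by fun_prop)

theorem ae_stdGaussian_inner_ne_zero {a : E} (ha : a ≠ 0) : ∀ᵐ x ∂stdGaussian E, ⟪x, a⟫ ≠ 0 := by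
  have hvar : (Var[innerSL ℝ a; stdGaussian E]).toNNReal ≠ 0 := by
    rw [variance_dual_stdGaussian]
    simpa [innerSL_apply_norm] using ha
  have := nullSingletonClass_gaussianReal (μ := (stdGaussian E)[innerSL ℝ a]) hvar
  have hmap := IsGaussian.map_eq_gaussianReal (μ := stdGaussian E) (innerSL ℝ a)
  have hae : ∀ᵐ y ∂(stdGaussian E).map (innerSL ℝ a), y ≠ 0 := by
    rw [hmap]
    exact Measure.ae_ne _ 0
  filter_upwards [ae_of_ae_map (innerSL ℝ a).continuous.aemeasurable hae] with x hx
  rwa [real_inner_comm]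

variable {a b : E}

theorem stdGaussian_real_signChange_circlePoint_rotate (hab : Orthonormal ℝ ![a, b]) (s t : ℝ) :
    (stdGaussian E).real (signChange (circlePoint a b s) (circlePoint a b (s + t))) =
      (stdGaussian E).real (signChange a (circlePoint a b t)) := by
  obtain ⟨e, he⟩ := exists_linearIsometryEquiv_of_orthonormal hab (orthonormal_circlePoint hab s)
  have hea : e a = circlePoint a b s := he 0
  have heb : e b = circlePoint a b (s + π / 2) := he 1
  have het : e (circlePoint a b t) = circlePoint a b (s + t) := by
    rw [← circlePoint_circlePoint, ← hea, ← heb]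
    simp [circlePoint]
  have hpre : e ⁻¹' signChange (circlePoint a b s) (circlePoint a b (s + t)) =
      signChange a (circlePoint a b t) := by
    ext x
    simp [signChange, ← hea, ← het]
  have he_meas : MeasurePreserving e (stdGaussian E) (stdGaussian E) :=
    ⟨e.continuous.measurable, stdGaussian_map e⟩
  rw [← hpre, he_meas.measureReal_preimage (measurableSet_signChange _ _).nullMeasurableSet]

theorem stdGaussian_real_signChange_circlePoint_add (hab : Orthonormal ℝ ![a, b]) {s t : ℝ}
    (hs : 0 ≤ s) (ht : 0 ≤ t) (hst : s + t ≤ π) :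
    (stdGaussian E).real (signChange a (circlePoint a b (s + t))) =
      (stdGaussian E).real (signChange a (circlePoint a b s)) +
        (stdGaussian E).real (signChange a (circlePoint a b t)) := by
  rcases hs.eq_or_lt with rfl | hs
  · simp [circlePoint_zero, signChange_self]
  rcases ht.eq_or_lt with rfl | ht
  · simp [circlePoint_zero, signChange_self]
  have hdisj := disjoint_signChange_circlePoint (a := a) (b := b) hs ht hst
  rw [← stdGaussian_real_signChange_circlePoint_rotate hab s t,
    ← measureReal_union hdisj (measurableSet_signChange _ _)]
  apply measureReal_congr
  rw [Filter.eventuallyEq_set]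
  have ha : a ≠ 0 := hab.ne_zero 0
  filter_upwards [ae_stdGaussian_inner_ne_zero ha,
    ae_stdGaussian_inner_ne_zero (circlePoint_ne_zero hab s),
    ae_stdGaussian_inner_ne_zero (circlePoint_ne_zero hab (s + t))] with x h₀ h₁ h₂
  have hx : ¬ (x ∈ signChange a (circlePoint a b s) ∧
      x ∈ signChange (circlePoint a b s) (circlePoint a b (s + t))) :=
    fun h ↦ disjoint_left.mp hdisj h.1 h.2
  have hxor := mul_neg_iff_xor_of_ne_zero h₀ h₁ h₂
  rw [xor_iff_or_and_not_and] at hxor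
  exact hxor.trans (and_iff_left hx)

theorem stdGaussian_real_signChange_neg (ha : a ≠ 0) :
    (stdGaussian E).real (signChange a (-a)) = 1 := by
  rw [← probReal_univ (μ := stdGaussian E)]
  apply measureReal_congr
  rw [Filter.eventuallyEq_set]
  filter_upwards [ae_stdGaussian_inner_ne_zero ha] with x hx
  simpa [signChange] using mul_self_pos.mpr hx

theorem stdGaussian_real_signChange_circlePoint (hab : Orthonormal ℝ ![a, b]) {t : ℝ}
    (ht : t ∈ Icc 0 π) :
    (stdGaussian E).real (signChange a (circlePoint a b t)) = t / π := by
  have hbound : ∀ t ∈ Icc 0 π, |(stdGaussian E).real (signChange a (circlePoint a b t))| ≤ 1 :=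
    fun t _ ↦ by
      rw [abs_of_nonneg measureReal_nonneg]
      exact measureReal_le_one
  have hlinear := eq_div_mul_of_additive_of_bounded
    (f := fun t ↦ (stdGaussian E).real (signChange a (circlePoint a b t))) pi_pos
    (fun s t ↦ stdGaussian_real_signChange_circlePoint_add hab) hbound ht
  have ha : a ≠ 0 := hab.ne_zero 0
  simpa only [circlePoint_pi, stdGaussian_real_signChange_neg ha, mul_one] using hlinear

theorem stdGaussian_real_signChange_of_norm_eq_one (ha : ‖a‖ = 1) (hb : ‖b‖ = 1) :
    (stdGaussian E).real (signChange a b) = angle a b / π := by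
  by_cases hsin : sin (angle a b) = 0
  · have ha₀ : a ≠ 0 := norm_ne_zero_iff.mp (by simp [ha])
    rcases InnerProductGeometry.sin_eq_zero_iff_angle_eq_zero_or_angle_eq_pi.mp hsin with h | h
    · have hab : a = b := by
        rw [← inner_eq_one_iff_of_norm_eq_one (𝕜 := ℝ) ha hb]
        simpa [h, ha, hb] using (InnerProductGeometry.cos_angle_mul_norm_mul_norm a b).symm
      rw [h, ← hab, signChange_self, measureReal_empty, zero_div]
    · have hab : b = -a := by
        rw [← neg_eq_iff_eq_neg, eq_comm, ← inner_eq_one_iff_of_norm_eq_one (𝕜 := ℝ) ha (by simpa)]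
        rw [inner_neg_right, neg_eq_iff_eq_neg]
        simpa [h, ha, hb] using (InnerProductGeometry.cos_angle_mul_norm_mul_norm a b).symm
      rw [h, hab, stdGaussian_real_signChange_neg ha₀, div_self pi_ne_zero]
  · obtain ⟨c, hc, hcb⟩ := exists_circlePoint_angle_eq ha hb hsin
    rw [← stdGaussian_real_signChange_circlePoint hc
      ⟨InnerProductGeometry.angle_nonneg a b, InnerProductGeometry.angle_le_pi a b⟩, hcb]

theorem stdGaussian_real_signChange (ha : a ≠ 0) (hb : b ≠ 0) :
    (stdGaussian E).real (signChange a b) = angle a b / π := by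
  have ha' : 0 < ‖a‖⁻¹ := inv_pos.mpr (norm_pos_iff.mpr ha)
  have hb' : 0 < ‖b‖⁻¹ := inv_pos.mpr (norm_pos_iff.mpr hb)
  have hnorm {c : E} (hc : c ≠ 0) : ‖‖c‖⁻¹ • c‖ = 1 := by
    rw [norm_smul, norm_inv, norm_norm, inv_mul_cancel₀ (norm_ne_zero_iff.mpr hc)]
  rw [← signChange_smul ha' hb', stdGaussian_real_signChange_of_norm_eq_one (hnorm ha) (hnorm hb),
    InnerProductGeometry.angle_smul_left_of_pos _ _ ha',
    InnerProductGeometry.angle_smul_right_of_pos _ _ hb']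

end SignChange

section SupportingChord

variable {α : Type*} {T : Finset α} {p q : α → ℝ}

/-- The line of height `ρ + τ * p` over the abscissa `p` lies above the planar points
`(p x, q x)`, `x ∈ T`, and passes through one of them on either side of the vertical axis. -/
def IsSupportingChord (T : Finset α) (p q : α → ℝ) (ρ τ : ℝ) : Prop :=
  (∀ x ∈ T, q x ≤ ρ + τ * p x) ∧
    (∃ s ∈ T, 0 < p s ∧ q s = ρ + τ * p s) ∧ ∃ t ∈ T, p t < 0 ∧ q t = ρ + τ * p t

theorem exists_isSupportingChord (hp : ∀ x ∈ T, p x ≠ 0) (hpos : ∃ s ∈ T, 0 < p s)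
    (hneg : ∃ t ∈ T, p t < 0) : ∃ ρ τ, IsSupportingChord T p q ρ τ := by
  obtain ⟨s', hs'⟩ := hpos
  obtain ⟨t', ht'⟩ := hneg
  let height (s t : α) : ℝ := (p s * q t - p t * q s) / (p s - p t)
  -- The chord meeting the vertical axis at the highest point lies above all the points.
  obtain ⟨⟨s, t⟩, hst, hmax⟩ :=
    ((T.filter (0 < p ·)) ×ˢ (T.filter (p · < 0))).exists_max_image (fun z ↦ height z.1 z.2)
      ⟨(s', t'), Finset.mk_mem_product (Finset.mem_filter.mpr hs') (Finset.mem_filter.mpr ht')⟩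
  simp only [Finset.mem_product, Finset.mem_filter, Prod.forall, and_imp] at hst hmax
  obtain ⟨⟨hsT, hs⟩, htT, ht⟩ := hst
  set ρ := height s t
  have hchord : ρ * (p s - p t) = p s * q t - p t * q s := div_mul_cancel₀ _ (by linarith)
  have hs_eq : q s = ρ + (q s - ρ) / p s * p s := by field_simp; ring
  have ht_eq : q t = ρ + (q s - ρ) / p s * p t := by
    field_simp
    linear_combination -hchord
  refine ⟨ρ, (q s - ρ) / p s, fun x hx ↦ ?_, ⟨s, hsT, hs, hs_eq⟩, t, htT, ht, ht_eq⟩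
  rcases (hp x hx).lt_or_gt with hx₀ | hx₀
  · have hle := hmax s x hsT hs hx hx₀
    rw [div_le_iff₀ (by linarith)] at hle
    rw [← mul_le_mul_iff_of_pos_left hs]
    linear_combination hle + p x * hs_eq
  · have hle := hmax x t hx hx₀ htT ht
    rw [div_le_iff₀ (by linarith)] at hle
    rw [← mul_le_mul_iff_of_pos_left (neg_pos.mpr ht)]
    linear_combination hle - p x * ht_eq

theorem IsSupportingChord.height_le {ρ τ ρ' τ' : ℝ} (h : IsSupportingChord T p q ρ τ)
    (h' : IsSupportingChord T p q ρ' τ') : ρ ≤ ρ' := by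
  obtain ⟨-, ⟨s, hsT, hs, hs_eq⟩, t, htT, ht, ht_eq⟩ := h
  have hs_le := mul_le_mul_of_nonneg_left (hs_eq ▸ h'.1 s hsT) (neg_nonneg.mpr ht.le)
  have ht_le := mul_le_mul_of_nonneg_left (ht_eq ▸ h'.1 t htT) hs.le
  nlinarith

theorem IsSupportingChord.unique {ρ τ ρ' τ' : ℝ} (h : IsSupportingChord T p q ρ τ)
    (h' : IsSupportingChord T p q ρ' τ') : ρ = ρ' ∧ τ = τ' := by
  have hρ : ρ = ρ' := le_antisymm (h.height_le h') (h'.height_le h)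
  obtain ⟨-, ⟨s, hsT, hs, hs_eq⟩, t, htT, ht, ht_eq⟩ := h
  have hs_le := h'.1 s hsT
  have ht_le := h'.1 t htT
  exact ⟨hρ, le_antisymm (by nlinarith) (by nlinarith)⟩

end SupportingChord

section Straddling

variable {E : Type*} [NormedAddCommGroup E] [NormedSpace ℝ E] {V : Finset E}
  {l f m h : StrongDual ℝ E} {v : E}

/-- The functional `l` takes values on `F` on both sides of its value at `v`. -/
def Straddles (l : StrongDual ℝ E) (v : E) (F : Set E) : Prop :=
  (∃ x ∈ F, l v < l x) ∧ ∃ x ∈ F, l x < l v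

theorem Straddles.mono {F G : Set E} (hF : Straddles l v F) (hFG : F ⊆ G) : Straddles l v G :=
  ⟨hF.1.imp fun _ hx ↦ ⟨hFG hx.1, hx.2⟩, hF.2.imp fun _ hx ↦ ⟨hFG hx.1, hx.2⟩⟩

theorem straddles_convexHull_iff {W : Set E} :
    Straddles l v (convexHull ℝ W) ↔ Straddles l v W := by
  refine ⟨fun ⟨⟨x, hx, hvx⟩, y, hy, hyv⟩ ↦ ?_, fun hW ↦ hW.mono (subset_convexHull ℝ W)⟩
  obtain ⟨x', hx', hxx'⟩ := (l.toLinearMap.convexOn convex_univ).exists_ge_of_mem_convexHull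
    (subset_univ W) hx
  obtain ⟨y', hy', hyy'⟩ := (l.toLinearMap.concaveOn convex_univ).exists_le_of_mem_convexHull
    (subset_univ W) hy
  exact ⟨⟨x', hx', hvx.trans_le hxx'⟩, y', hy', hyy'.trans_lt hyv⟩

/-- The functional `h` is maximal on `V` at `v` and at two other points that `l` separates
from `v` in opposite directions: `h` exposes a face at `v` which `l` straddles. -/
def IsStraddlingSupport (V : Set E) (l : StrongDual ℝ E) (v : E) (h : StrongDual ℝ E) : Prop :=
  v ∈ h.toExposed V ∧ Straddles l v (h.toExposed V)

theorem mem_toExposed_iff {W : Set E} (hv : v ∈ h.toExposed W) {x : E} :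
    x ∈ h.toExposed W ↔ x ∈ W ∧ h x = h v :=
  ⟨fun hx ↦ ⟨hx.1, le_antisymm (hv.2 x hx.1) (hx.2 v hv.1)⟩,
    fun hx ↦ ⟨hx.1, fun y hy ↦ hx.2 ▸ hv.2 y hy⟩⟩

theorem toExposed_smul {r : ℝ} (hr : 0 < r) (h : StrongDual ℝ E) (W : Set E) :
    (r • h).toExposed W = h.toExposed W := by
  ext x
  simp [ContinuousLinearMap.toExposed, hr]

theorem isStraddlingSupport_iff [DecidableEq E] (hv : v ∈ V) :
    IsStraddlingSupport V l v h ↔ (∀ x ∈ V.erase v, h x ≤ h v) ∧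
      (∃ s ∈ V.erase v, l v < l s ∧ h s = h v) ∧ ∃ t ∈ V.erase v, l t < l v ∧ h t = h v := by
  have hmax : v ∈ h.toExposed V ↔ ∀ x ∈ V.erase v, h x ≤ h v := by
    refine ⟨fun h x hx ↦ h.2 x (Finset.mem_of_mem_erase hx), fun hV ↦ ⟨hv, fun x hx ↦ ?_⟩⟩
    rcases eq_or_ne x v with rfl | hxv
    · exact le_rfl
    · exact hV x (Finset.mem_erase.mpr ⟨hxv, hx⟩)
  rw [← hmax, IsStraddlingSupport, and_congr_right_iff]
  intro hvh
  refine and_congr (exists_congr fun x ↦ ?_) (exists_congr fun x ↦ ?_) <;>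
    rw [mem_toExposed_iff hvh, Finset.mem_erase, Finset.mem_coe]
  · exact ⟨fun hx ↦ ⟨⟨ne_of_apply_ne l hx.2.ne', hx.1.1⟩, hx.2, hx.1.2⟩,
      fun hx ↦ ⟨⟨hx.1.2, hx.2.2⟩, hx.2.1⟩⟩
  · exact ⟨fun hx ↦ ⟨⟨ne_of_apply_ne l hx.2.ne, hx.1.1⟩, hx.2, hx.1.2⟩,
      fun hx ↦ ⟨⟨hx.1.2, hx.2.2⟩, hx.2.1⟩⟩

-- Central projection from `v` to the plane `f = f v - 1` turns faces at `v` into planar edges.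
theorem isStraddlingSupport_iff_isSupportingChord [DecidableEq E] (hv : v ∈ V)
    (hf : ∀ x ∈ V.erase v, f x < f v) {ρ τ : ℝ} :
    IsStraddlingSupport V l v (m + ρ • f - τ • l) ↔
      IsSupportingChord (V.erase v) (fun x ↦ (l x - l v) / (f v - f x))
        (fun x ↦ (m x - m v) / (f v - f x)) ρ τ := by
  have hdepth (x) (hx : x ∈ V.erase v) : 0 < f v - f x := sub_pos.mpr (hf x hx)
  have hline (x) (hx : x ∈ V.erase v) : (ρ + τ * ((l x - l v) / (f v - f x))) * (f v - f x) =
      ρ * (f v - f x) + τ * (l x - l v) := by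
    rw [add_mul, mul_assoc, div_mul_cancel₀ _ (hdepth x hx).ne']
  have hright (x) (hx : x ∈ V.erase v) : l v < l x ↔ 0 < (l x - l v) / (f v - f x) := by
    rw [div_pos_iff_of_pos_right (hdepth x hx), sub_pos]
  have hleft (x) (hx : x ∈ V.erase v) : l x < l v ↔ (l x - l v) / (f v - f x) < 0 := by
    rw [div_lt_iff₀ (hdepth x hx), zero_mul, sub_neg]
  have heq (x) (hx : x ∈ V.erase v) :
      (m + ρ • f - τ • l) x = (m + ρ • f - τ • l) v ↔
        (m x - m v) / (f v - f x) = ρ + τ * ((l x - l v) / (f v - f x)) := by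
    rw [div_eq_iff (hdepth x hx).ne', hline x hx]
    simp only [sub_apply, add_apply, smul_apply, smul_eq_mul]
    constructor <;> intro <;> linarith
  rw [isStraddlingSupport_iff hv]
  refine and_congr (forall₂_congr fun x hx ↦ ?_) (and_congr
    (exists_congr fun x ↦ and_congr_right fun hx ↦ and_congr (hright x hx) (heq x hx))
    (exists_congr fun x ↦ and_congr_right fun hx ↦ and_congr (hleft x hx) (heq x hx)))
  rw [div_le_iff₀ (hdepth x hx), hline x hx]
  simp only [sub_apply, add_apply, smul_apply, smul_eq_mul]
  constructor <;> intro <;> linarith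

theorem isStraddlingSupport_zero {W : Set E} (hv : v ∈ W) (hl : Straddles l v W) :
    IsStraddlingSupport W l v 0 := by
  have hW : (0 : StrongDual ℝ E).toExposed W = W := by simp [ContinuousLinearMap.toExposed]
  exact ⟨hW.symm ▸ hv, hW.symm ▸ hl⟩

theorem exists_isStraddlingSupport [DecidableEq E] (hv : v ∈ V)
    (hf : ∀ x ∈ V.erase v, f x < f v) (hl : ∀ x ∈ V.erase v, l x ≠ l v)
    (hlV : Straddles l v V) (m : StrongDual ℝ E) :
    ∃ ρ τ : ℝ, IsStraddlingSupport V l v (m + ρ • f - τ • l) := by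
  have hzero : IsStraddlingSupport V l v (0 + (0 : ℝ) • f - (0 : ℝ) • l) := by
    simpa using isStraddlingSupport_zero hv hlV
  obtain ⟨-, ⟨s, hs, hs₀, -⟩, t, ht, ht₀, -⟩ :=
    (isStraddlingSupport_iff_isSupportingChord hv hf).mp hzero
  simp only [isStraddlingSupport_iff_isSupportingChord hv hf]
  exact exists_isSupportingChord
    (fun x hx ↦ div_ne_zero (sub_ne_zero.mpr (hl x hx)) (sub_pos.mpr (hf x hx)).ne')
    ⟨s, hs, hs₀⟩ ⟨t, ht, ht₀⟩

theorem IsStraddlingSupport.unique [DecidableEq E] (hf : ∀ x ∈ V.erase v, f x < f v)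
    {ρ τ ρ' τ' : ℝ} (h : IsStraddlingSupport V l v (m + ρ • f - τ • l))
    (h' : IsStraddlingSupport V l v (m + ρ' • f - τ' • l)) : ρ = ρ' ∧ τ = τ' := by
  have hv := h.1.1
  rw [isStraddlingSupport_iff_isSupportingChord hv hf] at h h'
  exact h.unique h'

theorem IsStraddlingSupport.coeff_eq_zero [DecidableEq E] (hf : ∀ x ∈ V.erase v, f x < f v)
    {ρ τ : ℝ} (h : IsStraddlingSupport V l v (ρ • f - τ • l)) : ρ = 0 ∧ τ = 0 := by
  have hlV : Straddles l v V := h.2.mono fun _ hx ↦ hx.1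
  refine IsStraddlingSupport.unique (m := 0) hf (by rwa [zero_add]) ?_
  simpa using isStraddlingSupport_zero h.1.1 hlV

theorem linearIndependent_of_straddles [DecidableEq E] (hv : v ∈ V)
    (hf : ∀ x ∈ V.erase v, f x < f v) (hlV : Straddles l v V) :
    LinearIndependent ℝ ![f, l] := by
  rw [LinearIndependent.pair_iff]
  intro ρ τ hρτ
  have hsupp : IsStraddlingSupport V l v (ρ • f - (-τ) • l) := by
    have h₀ : ρ • f - (-τ) • l = 0 := by
      rw [← hρτ]
      module
    rw [h₀]
    exact isStraddlingSupport_zero hv hlV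
  simpa using hsupp.coeff_eq_zero hf

theorem IsStraddlingSupport.smul {W : Set E} {r : ℝ} (hr : 0 < r)
    (h' : IsStraddlingSupport W l v h) : IsStraddlingSupport W l v (r • h) := by
  rwa [IsStraddlingSupport, toExposed_smul hr]

theorem IsStraddlingSupport.eq_smul [DecidableEq E] (hf : ∀ x ∈ V.erase v, f x < f v)
    {a b c ρ τ : ℝ} (ha : 0 < a) (h : IsStraddlingSupport V l v (m + ρ • f - τ • l))
    (h' : IsStraddlingSupport V l v (a • m + b • f - c • l)) :
    a • m + b • f - c • l = a • (m + ρ • f - τ • l) := by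
  have hscale : a⁻¹ • (a • m + b • f - c • l) = m + (a⁻¹ * b) • f - (a⁻¹ * c) • l := by
    rw [smul_sub, smul_add, inv_smul_smul₀ ha.ne', smul_smul, smul_smul]
  obtain ⟨rfl, rfl⟩ := h.unique hf (hscale ▸ h'.smul (inv_pos.mpr ha))
  rw [← hscale, smul_inv_smul₀ ha.ne']

theorem toExposed_subset_toExposed_add {W : Set E} {h₁ h₂ : StrongDual ℝ E}
    (h : h₁.toExposed W = h₂.toExposed W) : h₁.toExposed W ⊆ (h₁ + h₂).toExposed W :=
  fun _ hx ↦ ⟨hx.1, fun y hy ↦ add_le_add (hx.2 y hy) ((h ▸ hx).2 y hy)⟩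

theorem vectorSpan_le_ker {W : Set E} (hh : ∀ x ∈ W, h x = h v) :
    vectorSpan ℝ W ≤ h.ker := by
  rw [vectorSpan_def, Submodule.span_le]
  rintro _ ⟨x, hx, y, hy, rfl⟩
  simp [hh x hx, hh y hy]

theorem eq_zero_of_forall_eq {W : Set E} (hW : vectorSpan ℝ W = ⊤) (hh : ∀ x ∈ W, h x = h v) :
    h = 0 := by
  have hker : h.ker = ⊤ := top_le_iff.mp (hW ▸ vectorSpan_le_ker hh)
  exact ContinuousLinearMap.coe_injective (LinearMap.ker_eq_top.mp hker)

theorem toExposed_ne [DecidableEq E] (hf : ∀ x ∈ V.erase v, f x < f v)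
    (hV : vectorSpan ℝ (V : Set E) = ⊤) {ρ₁ τ₁ ρ₂ τ₂ : ℝ}
    (h₁ : IsStraddlingSupport V l v (m + ρ₁ • f - τ₁ • l))
    (h₂ : IsStraddlingSupport V l v (-m + ρ₂ • f - τ₂ • l)) (hne : m + ρ₁ • f - τ₁ • l ≠ 0) :
    (m + ρ₁ • f - τ₁ • l).toExposed (V : Set E) ≠ (-m + ρ₂ • f - τ₂ • l).toExposed V := by
  intro heq
  have hsum : (m + ρ₁ • f - τ₁ • l) + (-m + ρ₂ • f - τ₂ • l) =
      (ρ₁ + ρ₂) • f - (τ₁ + τ₂) • l := by module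
  have hsub := hsum ▸ toExposed_subset_toExposed_add heq
  have hsupp : IsStraddlingSupport V l v ((ρ₁ + ρ₂) • f - (τ₁ + τ₂) • l) :=
    ⟨hsub h₁.1, h₁.2.mono hsub⟩
  obtain ⟨hρ, hτ⟩ := hsupp.coeff_eq_zero hf
  rw [hρ, hτ, zero_smul, zero_smul, sub_zero] at hsum
  rw [eq_neg_of_add_eq_zero_right hsum] at h₂
  refine hne (eq_zero_of_forall_eq (v := v) hV fun x hx ↦ le_antisymm (h₁.1.2 x hx) ?_)
  exact neg_le_neg_iff.mp (h₂.1.2 x hx)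

theorem exists_functional_lt [DecidableEq E]
    (hV : ConvexIndependent ℝ ((↑) : ↥(V : Set E) → E)) (hv : v ∈ V) :
    ∃ f : StrongDual ℝ E, ∀ x ∈ V.erase v, f x < f v := by
  have hnot : v ∉ convexHull ℝ (V.erase v : Set E) := by
    rw [Finset.coe_erase]
    exact convexIndependent_set_iff_notMem_convexHull_sdiff.mp hV v hv
  obtain ⟨f, u, hu, hu'⟩ := geometric_hahn_banach_closed_point (convex_convexHull ℝ _)
    ((V.erase v).finite_toSet.isClosed_convexHull (𝕜 := ℝ)) hnot
  exact ⟨f, fun x hx ↦ (hu x (subset_convexHull ℝ _ hx)).trans hu'⟩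

end Straddling

section Polytope

variable {E : Type*} [NormedAddCommGroup E] [NormedSpace ℝ E] {V : Finset E}
  {l f h : StrongDual ℝ E} {v : E} {F : Set E}

theorem convexHull_extremePoints_of_finite (hF : IsCompact F) (hFconv : Convex ℝ F)
    (hfin : (F.extremePoints ℝ).Finite) : convexHull ℝ (F.extremePoints ℝ) = F := by
  rw [← (hfin.isClosed_convexHull (𝕜 := ℝ)).closure_eq,
    closure_convexHull_extremePoints hF hFconv]

theorem exists_finset_eq_extremePoints_convexHull (S : Finset E) :
    ∃ V : Finset E, (V : Set E) = (convexHull ℝ (S : Set E)).extremePoints ℝ ∧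
      convexHull ℝ (V : Set E) = convexHull ℝ (S : Set E) := by
  have hfin := S.finite_toSet.subset (extremePoints_convexHull_subset (𝕜 := ℝ))
  obtain ⟨V, hV⟩ := hfin.exists_finset_coe
  exact ⟨V, hV, hV ▸ convexHull_extremePoints_of_finite
    (S.finite_toSet.isCompact_convexHull (𝕜 := ℝ)) (convex_convexHull ℝ _) hfin⟩

theorem isExposed_convexHull_eq (hF : IsExposed ℝ (convexHull ℝ (V : Set E)) F) :
    F = convexHull ℝ (F ∩ V) := by
  have hFconv := hF.convex (convex_convexHull ℝ _)
  have hext : F.extremePoints ℝ ⊆ F ∩ V := by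
    rw [hF.isExtreme.extremePoints_eq]
    exact inter_subset_inter_right F extremePoints_convexHull_subset
  refine (convexHull_min inter_subset_left hFconv).antisymm' ?_
  calc F = convexHull ℝ (F.extremePoints ℝ) :=
        (convexHull_extremePoints_of_finite
          (hF.isCompact (V.finite_toSet.isCompact_convexHull (𝕜 := ℝ))) hFconv
          (V.finite_toSet.subset (hext.trans inter_subset_right))).symm
    _ ⊆ convexHull ℝ (F ∩ V) := convexHull_mono hext

/-- The two-dimensional faces of `P`. -/
def twoFaces (P : Set E) : Set (Set E) :=
  {F | IsExposed ℝ P F ∧ finrank ℝ (vectorSpan ℝ F) = 2}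

theorem finite_twoFaces_convexHull (V : Finset E) : (twoFaces (convexHull ℝ (V : Set E))).Finite :=
  (V.finite_toSet.finite_subsets.image (convexHull ℝ)).subset fun F hF ↦
    ⟨F ∩ V, inter_subset_right, (isExposed_convexHull_eq hF.1).symm⟩

theorem toExposed_convexHull_inter {W : Set E} :
    h.toExposed (convexHull ℝ W) ∩ W = h.toExposed W := by
  ext x
  refine ⟨fun ⟨hx, hxW⟩ ↦ ⟨hxW, fun y hy ↦ hx.2 y (subset_convexHull ℝ W hy)⟩,
    fun hx ↦ ⟨⟨subset_convexHull ℝ W hx.1, fun y hy ↦ ?_⟩, hx.1⟩⟩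
  obtain ⟨z, hz, hyz⟩ := (h.toLinearMap.convexOn convex_univ).exists_ge_of_mem_convexHull
    (subset_univ W) hy
  exact hyz.trans (hx.2 z hz)

theorem toExposed_convexHull :
    h.toExposed (convexHull ℝ (V : Set E)) = convexHull ℝ (h.toExposed (V : Set E)) := by
  have hF := isExposed_convexHull_eq (V := V) (ContinuousLinearMap.toExposed.isExposed (l := h))
  rwa [toExposed_convexHull_inter] at hF

theorem isStraddlingSupport_iff_toExposed_convexHull (hv : v ∈ V) :
    IsStraddlingSupport V l v h ↔ v ∈ h.toExposed (convexHull ℝ (V : Set E)) ∧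
      Straddles l v (h.toExposed (convexHull ℝ (V : Set E))) := by
  rw [IsStraddlingSupport, ← toExposed_convexHull_inter, mem_inter_iff, Finset.mem_coe,
    and_iff_left hv, toExposed_convexHull_inter, ← straddles_convexHull_iff,
    toExposed_convexHull]

theorem vectorSpan_convexHull (W : Set E) :
    vectorSpan ℝ (convexHull ℝ W) = vectorSpan ℝ W := by
  rw [← direction_affineSpan, affineSpan_convexHull, direction_affineSpan]

theorem linearIndependent_sub_sub {s t : E} (hfs : f s < f v) (hft : f t < f v) (hls : l v < l s)
    (hlt : l t < l v) : LinearIndependent ℝ ![s - v, t - v] := by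
  rw [LinearIndependent.pair_iff]
  intro a b hab
  have hf := congrArg f hab
  have hl := congrArg l hab
  simp only [map_add, map_smul, map_sub, smul_eq_mul, map_zero] at hf hl
  have hdet : 0 < (f v - f s) * (l v - l t) + (f v - f t) * (l s - l v) := by
    have := sub_pos.mpr hfs
    have := sub_pos.mpr hft
    have := sub_pos.mpr hls
    have := sub_pos.mpr hlt
    positivity
  have ha : a = 0 := by
    refine (mul_eq_zero.mp ?_).resolve_right hdet.ne'
    linear_combination (l t - l v) * hf - (f t - f v) * hl
  rw [ha, zero_mul, zero_add] at hl
  exact ⟨ha, (mul_eq_zero.mp hl).resolve_right (sub_neg.mpr hlt).ne⟩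

theorem IsStraddlingSupport.finrank_vectorSpan [DecidableEq E] (hE : finrank ℝ E = 3)
    (hf : ∀ x ∈ V.erase v, f x < f v) (hh : IsStraddlingSupport V l v h) (h₀ : h ≠ 0) :
    finrank ℝ (vectorSpan ℝ (h.toExposed (V : Set E))) = 2 := by
  have : FiniteDimensional ℝ E := .of_finrank_eq_succ hE
  have hker : finrank ℝ h.ker = 2 := by
    have hdim := Module.Dual.finrank_ker_add_one_of_ne_zero (f := h.toLinearMap)
      fun h' ↦ h₀ (ContinuousLinearMap.coe_injective h')
    omega
  apply le_antisymm
  · rw [← hker]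
    exact Submodule.finrank_mono
      (vectorSpan_le_ker fun x hx ↦ ((mem_toExposed_iff hh.1).mp hx).2)
  · obtain ⟨hv, ⟨s, hs, hvs⟩, t, ht, htv⟩ := hh
    have hlt {x : E} (hx : x ∈ h.toExposed (V : Set E)) (hlx : l x ≠ l v) : f x < f v :=
      hf x (Finset.mem_erase.mpr ⟨ne_of_apply_ne l hlx, hx.1⟩)
    have hli := linearIndependent_sub_sub (hlt hs hvs.ne') (hlt ht htv.ne) hvs htv
    calc 2 = finrank ℝ (Submodule.span ℝ (range ![s - v, t - v])) := by
          rw [finrank_span_eq_card hli, Fintype.card_fin]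
      _ ≤ finrank ℝ (vectorSpan ℝ (h.toExposed (V : Set E))) := by
          refine Submodule.finrank_mono (Submodule.span_le.mpr ?_)
          simpa [insert_subset_iff] using
            And.intro (vsub_mem_vectorSpan ℝ ht hv) (vsub_mem_vectorSpan ℝ hs hv)

/-- The two-dimensional faces of `P` through `v` that `l` straddles at `v`. -/
def straddlingFaces (P : Set E) (l : StrongDual ℝ E) (v : E) : Set (Set E) :=
  {F ∈ twoFaces P | v ∈ F ∧ Straddles l v F}

theorem mem_straddlingFaces_iff [DecidableEq E] (hE : finrank ℝ E = 3)
    (hV : vectorSpan ℝ (V : Set E) = ⊤) (hv : v ∈ V) (hf : ∀ x ∈ V.erase v, f x < f v) :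
    F ∈ straddlingFaces (convexHull ℝ (V : Set E)) l v ↔
      ∃ h ≠ 0, IsStraddlingSupport V l v h ∧ F = h.toExposed (convexHull ℝ (V : Set E)) := by
  constructor
  · rintro ⟨⟨hF, hF₂⟩, hvF, hlF⟩
    obtain ⟨h, rfl⟩ : ∃ h : StrongDual ℝ E, F = h.toExposed _ := hF ⟨v, hvF⟩
    refine ⟨h, ?_, (isStraddlingSupport_iff_toExposed_convexHull hv).mpr ⟨hvF, hlF⟩, rfl⟩
    rintro rfl
    have hzero : (0 : StrongDual ℝ E).toExposed (V : Set E) = V := by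
      simp [ContinuousLinearMap.toExposed]
    rw [toExposed_convexHull, vectorSpan_convexHull, hzero, hV, finrank_top] at hF₂
    omega
  · rintro ⟨h, h₀, hh, rfl⟩
    refine ⟨⟨ContinuousLinearMap.toExposed.isExposed, ?_⟩,
      (isStraddlingSupport_iff_toExposed_convexHull hv).mp hh⟩
    rw [toExposed_convexHull, vectorSpan_convexHull, hh.finrank_vectorSpan hE hf h₀]

theorem exists_forall_eq_smul_add_smul_sub_smul {K M : Type*} [Field K] [AddCommGroup M]
    [Module K M] (hM : finrank K M = 3) {x y : M} (hxy : LinearIndependent K ![x, y]) :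
    ∃ m : M, (∀ b c : K, m + b • x - c • y ≠ 0) ∧
      ∀ z : M, ∃ a b c : K, z = a • m + b • x - c • y := by
  obtain ⟨m, hm⟩ := exists_linearIndependent_cons_of_lt_finrank hxy (by omega)
  refine ⟨m, fun b c h₀ ↦ ?_, fun z ↦ ?_⟩
  · refine one_ne_zero (α := K) (Fintype.linearIndependent_iff.mp hm ![1, b, -c] ?_ 0)
    simpa [Fin.sum_univ_three, sub_eq_add_neg] using h₀
  · have hspan := hm.span_eq_top_of_card_eq_finrank (by simp [hM])
    obtain ⟨c, rfl⟩ := (Submodule.mem_span_range_iff_exists_fun K).mp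
      (hspan ▸ Submodule.mem_top : z ∈ _)
    refine ⟨c 0, c 1, - c 2, ?_⟩
    simp [Fin.sum_univ_three]

theorem ncard_straddlingFaces [DecidableEq E] (hE : finrank ℝ E = 3)
    (hVind : ConvexIndependent ℝ ((↑) : ↥(V : Set E) → E))
    (hV : vectorSpan ℝ (V : Set E) = ⊤) (hv : v ∈ V) (hl : ∀ x ∈ V.erase v, l x ≠ l v)
    (hlV : Straddles l v V) : (straddlingFaces (convexHull ℝ (V : Set E)) l v).ncard = 2 := by
  have : FiniteDimensional ℝ E := .of_finrank_eq_succ hE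
  obtain ⟨f, hf⟩ := exists_functional_lt hVind hv
  have hdual : finrank ℝ (StrongDual ℝ E) = 3 :=
    (LinearMap.toContinuousLinearMap.finrank_eq.symm.trans Subspace.dual_finrank_eq).trans hE
  obtain ⟨m, hm, hspan⟩ := exists_forall_eq_smul_add_smul_sub_smul hdual
    (linearIndependent_of_straddles hv hf hlV)
  obtain ⟨ρ₁, τ₁, h₁⟩ := exists_isStraddlingSupport hv hf hl hlV m
  obtain ⟨ρ₂, τ₂, h₂⟩ := exists_isStraddlingSupport hv hf hl hlV (-m)
  have hne₁ := hm ρ₁ τ₁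
  have hne₂ : -m + ρ₂ • f - τ₂ • l ≠ 0 := fun h ↦ hm (-ρ₂) (-τ₂) (by
    rw [← neg_eq_zero, ← h]
    module)
  rw [ncard_eq_two]
  refine ⟨(m + ρ₁ • f - τ₁ • l).toExposed (convexHull ℝ (V : Set E)),
    (-m + ρ₂ • f - τ₂ • l).toExposed (convexHull ℝ (V : Set E)), fun heq ↦ ?_, ?_⟩
  · apply toExposed_ne hf hV h₁ h₂ hne₁
    rw [← toExposed_convexHull_inter, heq, toExposed_convexHull_inter]
  · ext F
    rw [mem_straddlingFaces_iff hE hV hv hf, mem_insert_iff, mem_singleton_iff]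
    constructor
    · rintro ⟨h, h₀, hh, rfl⟩
      obtain ⟨a, b, c, rfl⟩ := hspan h
      -- The sign of `a` tells whether the edge bounds the projection from above or from below.
      rcases lt_trichotomy a 0 with ha | rfl | ha
      · right
        have hneg : a • m + b • f - c • l = (-a) • (-m) + b • f - c • l := by module
        rw [hneg] at hh ⊢
        rw [h₂.eq_smul hf (neg_pos.mpr ha) hh, toExposed_smul (neg_pos.mpr ha)]
      · rw [zero_smul, zero_add] at hh h₀
        obtain ⟨rfl, rfl⟩ := hh.coeff_eq_zero hf
        exact absurd (by simp) h₀
      · left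
        rw [h₁.eq_smul hf ha hh, toExposed_smul ha]
    · rintro (rfl | rfl)
      · exact ⟨_, hne₁, h₁, rfl⟩
      · exact ⟨_, hne₂, h₂, rfl⟩

theorem straddlingFaces_eq_empty (hlV : ¬ Straddles l v V) :
    straddlingFaces (convexHull ℝ (V : Set E)) l v = ∅ :=
  eq_empty_of_forall_notMem fun _ ⟨⟨hF, _⟩, _, hlF⟩ ↦
    hlV (straddles_convexHull_iff.mp (hlF.mono hF.subset))

theorem nontrivial_of_vectorSpan_eq_top [Nontrivial E] {W : Set E} (hW : vectorSpan ℝ W = ⊤) :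
    W.Nontrivial := by
  rw [← not_subsingleton_iff]
  intro hsub
  rw [vectorSpan_of_subsingleton ℝ hsub] at hW
  exact bot_ne_top hW

theorem card_filter_straddles_add_two [DecidablePred fun v ↦ Straddles l v V]
    (hV : (V : Set E).Nontrivial) (hl : InjOn l V) :
    (V.filter fun v ↦ Straddles l v V).card + 2 = V.card := by
  classical
  obtain ⟨a, ha, hmax⟩ := V.exists_max_image l hV.nonempty
  obtain ⟨b, hb, hmin⟩ := V.exists_min_image l hV.nonempty
  have hba : b ≠ a := by
    rintro rfl
    obtain ⟨x, hx, hxb⟩ := hV.exists_ne b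
    exact hxb (hl hx hb ((hmax x hx).antisymm (hmin x hx)))
  have hfilter : (V.filter fun v ↦ Straddles l v V) = (V.erase a).erase b := by
    ext v
    rw [Finset.mem_filter, Finset.mem_erase, Finset.mem_erase]
    refine ⟨fun ⟨hv, ⟨x, hx, hvx⟩, y, hy, hyv⟩ ↦ ⟨?_, ?_, hv⟩, fun ⟨hvb, hva, hv⟩ ↦
      ⟨hv, ⟨a, ha, (hmax v hv).lt_of_ne (hl.ne hv ha hva)⟩,
        b, hb, (hmin v hv).lt_of_ne (hl.ne hb hv hvb.symm)⟩⟩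
    · rintro rfl
      exact (hmin y hy).not_gt hyv
    · rintro rfl
      exact (hmax x hx).not_gt hvx
  rw [hfilter, ← Finset.card_erase_add_one ha,
    ← Finset.card_erase_add_one (Finset.mem_erase.mpr ⟨hba, hb⟩)]

theorem sum_ncard_straddlingFaces (hE : finrank ℝ E = 3)
    (hVind : ConvexIndependent ℝ ((↑) : ↥(V : Set E) → E))
    (hV : vectorSpan ℝ (V : Set E) = ⊤) (hl : InjOn l V) :
    ∑ v ∈ V, ((straddlingFaces (convexHull ℝ (V : Set E)) l v).ncard : ℝ) = 2 * (V.card - 2) := by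
  classical
  have : Nontrivial E := nontrivial_of_finrank_pos (R := ℝ) (by omega)
  have hncard (v) (hv : v ∈ V) :
      ((straddlingFaces (convexHull ℝ (V : Set E)) l v).ncard : ℝ) =
        if Straddles l v V then 2 else 0 := by
    split_ifs with hlV
    · have hlv (x) (hx : x ∈ V.erase v) : l x ≠ l v :=
        hl.ne (Finset.mem_of_mem_erase hx) hv (Finset.ne_of_mem_erase hx)
      rw [ncard_straddlingFaces hE hVind hV hv hlv hlV, Nat.cast_ofNat]
    · rw [straddlingFaces_eq_empty hlV, ncard_empty, Nat.cast_zero]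
  rw [Finset.sum_congr rfl hncard, ← Finset.sum_filter, Finset.sum_const, nsmul_eq_mul,
    ← card_filter_straddles_add_two (nontrivial_of_vectorSpan_eq_top hV) hl]
  push_cast
  ring

end Polytope

section Corner

variable {E : Type*} [NormedAddCommGroup E] [NormedSpace ℝ E] {F : Set E} {u v w x : E}

theorem right_ne_left_of_finrank_segment (h : finrank ℝ (vectorSpan ℝ (segment ℝ v u)) = 1) :
    u ≠ v := by
  rintro rfl
  rw [segment_same, vectorSpan_singleton, finrank_bot] at h
  omega

theorem right_notMem_segment_of_isExposed (hwv : w ≠ v) (huw : u ≠ w)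
    (hu : u ∈ F) (hw : IsExposed ℝ F (segment ℝ v w)) : w ∉ segment ℝ v u := by
  intro hmem
  have hv : v ∈ F := hw.subset (left_mem_segment ℝ v w)
  have hopen : w ∈ openSegment ℝ v u := mem_openSegment_of_ne_left_right hwv.symm huw hmem
  have hu' : u ∈ segment ℝ v w :=
    hw.isExtreme.right_mem_of_mem_openSegment hv hu (right_mem_segment ℝ v w) hopen
  exact huw.symm ((wbtw_swap_right_iff ℝ v).mp
    ⟨mem_segment_iff_wbtw.mp hmem, mem_segment_iff_wbtw.mp hu'⟩)

theorem exists_edge_functional (huw : u ≠ w) (hwv : w ≠ v)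
    (hu : IsExposed ℝ F (segment ℝ v u)) (hw : IsExposed ℝ F (segment ℝ v w)) :
    ∃ g : StrongDual ℝ E, g (u - v) = 0 ∧ g (w - v) < 0 ∧ ∀ x ∈ F, g (x - v) ≤ 0 := by
  obtain ⟨g, hg⟩ : ∃ g : StrongDual ℝ E, segment ℝ v u = g.toExposed F :=
    hu ⟨v, left_mem_segment ℝ v u⟩
  have hv : v ∈ g.toExposed F := hg ▸ left_mem_segment ℝ v u
  have hu' : u ∈ g.toExposed F := hg ▸ right_mem_segment ℝ v u
  have hw' : w ∉ g.toExposed F := hg ▸ right_notMem_segment_of_isExposed hwv huw hu'.1 hw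
  have hwF : w ∈ F := hw.subset (right_mem_segment ℝ v w)
  simp only [map_sub, sub_eq_zero, sub_neg, sub_nonpos]
  refine ⟨g, le_antisymm (hv.2 u hu'.1) (hu'.2 v hv.1), lt_of_not_ge fun h ↦ hw' ?_, hv.2⟩
  exact ⟨hwF, fun y hy ↦ (hv.2 y hy).trans h⟩

/-- The points `u` and `w` are the neighbours of the vertex `v` of the polygon `F`: its sides
through `v` are the distinct segments from `v` to `u` and from `v` to `w`. -/
structure IsPolygonCorner (F : Set E) (u v w : E) : Prop where
  finrank_eq_two : finrank ℝ (vectorSpan ℝ F) = 2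
  ne : u ≠ w
  left_ne : u ≠ v
  right_ne : w ≠ v
  isExposed_left : IsExposed ℝ F (segment ℝ v u)
  isExposed_right : IsExposed ℝ F (segment ℝ v w)

namespace IsPolygonCorner

theorem symm (h : IsPolygonCorner F u v w) : IsPolygonCorner F w v u :=
  ⟨h.1, h.ne.symm, h.right_ne, h.left_ne, h.isExposed_right, h.isExposed_left⟩

theorem left_mem (h : IsPolygonCorner F u v w) : u ∈ F :=
  h.isExposed_left.subset (right_mem_segment ℝ v u)

theorem vertex_mem (h : IsPolygonCorner F u v w) : v ∈ F :=
  h.isExposed_left.subset (left_mem_segment ℝ v u)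

theorem linearIndependent (h : IsPolygonCorner F u v w) : LinearIndependent ℝ ![u - v, w - v] := by
  obtain ⟨g, hgu, hgw, -⟩ :=
    exists_edge_functional h.ne h.right_ne h.isExposed_left h.isExposed_right
  rw [LinearIndependent.pair_iff' (sub_ne_zero.mpr h.left_ne)]
  rintro a ha
  rw [← ha, map_smul, hgu, smul_zero] at hgw
  exact lt_irrefl 0 hgw

theorem span_eq (h : IsPolygonCorner F u v w) :
    Submodule.span ℝ {u - v, w - v} = vectorSpan ℝ F := by
  have : FiniteDimensional ℝ (vectorSpan ℝ F) := .of_finrank_eq_succ h.finrank_eq_two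
  apply Submodule.eq_of_le_of_finrank_eq
  · rw [Submodule.span_le, pair_subset_iff]
    exact ⟨vsub_mem_vectorSpan ℝ h.left_mem h.vertex_mem,
      vsub_mem_vectorSpan ℝ h.symm.left_mem h.vertex_mem⟩
  · rw [h.finrank_eq_two, ← Matrix.range_cons_cons_empty, finrank_span_eq_card h.linearIndependent,
      Fintype.card_fin]

theorem coeff_nonneg (h : IsPolygonCorner F u v w) (hx : x ∈ F) {a b : ℝ}
    (hab : a • (u - v) + b • (w - v) = x - v) : 0 ≤ b := by
  obtain ⟨g, hgu, hgw, hg⟩ :=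
    exists_edge_functional h.ne h.right_ne h.isExposed_left h.isExposed_right
  have hgx := hg x hx
  rw [← hab, map_add, map_smul, map_smul, hgu, smul_zero, zero_add, smul_eq_mul] at hgx
  exact nonneg_of_mul_nonpos_left hgx hgw

theorem exists_nonneg_eq_smul_add_smul (h : IsPolygonCorner F u v w) (hx : x ∈ F) :
    ∃ a b : ℝ, 0 ≤ a ∧ 0 ≤ b ∧ a • (u - v) + b • (w - v) = x - v := by
  have hmem : x - v ∈ Submodule.span ℝ {u - v, w - v} :=
    h.span_eq ▸ vsub_mem_vectorSpan ℝ hx h.vertex_mem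
  obtain ⟨a, b, hab⟩ := Submodule.mem_span_pair.mp hmem
  exact ⟨a, b, h.symm.coeff_nonneg hx ((add_comm _ _).trans hab), h.coeff_nonneg hx hab, hab⟩

theorem apply_vertex_le {l : StrongDual ℝ E} (h : IsPolygonCorner F u v w) (hu : 0 ≤ l (u - v))
    (hw : 0 ≤ l (w - v)) (hx : x ∈ F) : l v ≤ l x := by
  obtain ⟨a, b, ha, hb, hab⟩ := h.exists_nonneg_eq_smul_add_smul hx
  rw [← sub_nonneg, ← map_sub, ← hab, map_add, map_smul, map_smul]
  positivity

theorem straddles_iff {l : StrongDual ℝ E} (h : IsPolygonCorner F u v w) :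
    Straddles l v F ↔ l (u - v) * l (w - v) < 0 := by
  constructor
  · rintro ⟨⟨x, hx, hvx⟩, y, hy, hyv⟩
    by_contra! hmul
    rcases mul_nonneg_iff.mp hmul with ⟨hu, hw⟩ | ⟨hu, hw⟩
    · exact (h.apply_vertex_le hu hw hy).not_gt hyv
    · have hle := h.apply_vertex_le (l := -l) (neg_nonneg.mpr hu) (neg_nonneg.mpr hw) hx
      exact (neg_le_neg_iff.mp hle).not_gt hvx
  · rw [mul_neg_iff, map_sub, map_sub, sub_pos, sub_pos, sub_neg, sub_neg]
    rintro (⟨hu, hw⟩ | ⟨hu, hw⟩)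
    · exact ⟨⟨u, h.left_mem, hu⟩, w, h.symm.left_mem, hw⟩
    · exact ⟨⟨w, h.symm.left_mem, hw⟩, u, h.left_mem, hu⟩

end IsPolygonCorner

end Corner

section ExpectedCount

variable {E : Type*} [NormedAddCommGroup E] [InnerProductSpace ℝ E] {V : Finset E} {F : Set E}
  {u v w : E}

/-- The vectors `x` such that the functional `⟪x, ·⟫` straddles `F` at `v`. -/
def straddlingVectors (F : Set E) (v : E) : Set E :=
  {x | Straddles (innerSL ℝ x) v F}

theorem isOpen_straddlingVectors (F : Set E) (v : E) : IsOpen (straddlingVectors F v) := by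
  have hopen (y z : E) : IsOpen {x : E | ⟪x, y⟫ < ⟪x, z⟫} :=
    isOpen_lt (by fun_prop) (by fun_prop)
  have heq : straddlingVectors F v =
      (⋃ y ∈ F, {x | ⟪x, v⟫ < ⟪x, y⟫}) ∩ ⋃ y ∈ F, {x | ⟪x, y⟫ < ⟪x, v⟫} := by
    ext x
    simp [straddlingVectors, Straddles]
  rw [heq]
  exact (isOpen_biUnion fun y _ ↦ hopen v y).inter (isOpen_biUnion fun y _ ↦ hopen y v)

theorem IsPolygonCorner.straddlingVectors_eq (h : IsPolygonCorner F u v w) :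
    straddlingVectors F v = signChange (u - v) (w - v) :=
  Set.ext fun _ ↦ h.straddles_iff

variable [FiniteDimensional ℝ E] [MeasurableSpace E] [BorelSpace E]

theorem IsPolygonCorner.angle_eq (h : IsPolygonCorner F u v w) :
    EuclideanGeometry.angle u v w = π * (stdGaussian E).real (straddlingVectors F v) := by
  rw [h.straddlingVectors_eq, stdGaussian_real_signChange (sub_ne_zero.mpr h.left_ne)
    (sub_ne_zero.mpr h.right_ne), mul_div_cancel₀ _ pi_ne_zero]
  rfl

theorem ae_stdGaussian_injOn_innerSL (V : Finset E) :
    ∀ᵐ x ∂stdGaussian E, InjOn (innerSL ℝ x) (V : Set E) := by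
  have hsep : ∀ p ∈ V ×ˢ V, ∀ᵐ x ∂stdGaussian E, p.1 ≠ p.2 → ⟪x, p.1 - p.2⟫ ≠ 0 := by
    intro p _
    by_cases hp : p.1 = p.2
    · exact ae_of_all _ fun _ h ↦ absurd hp h
    · filter_upwards [ae_stdGaussian_inner_ne_zero (sub_ne_zero.mpr hp)] with x hx _ using hx
  rw [← Finset.eventually_all] at hsep
  filter_upwards [hsep] with x hx a ha b hb hab
  by_contra hne
  refine hx (a, b) (Finset.mk_mem_product ha hb) hne ?_
  rw [inner_sub_right, sub_eq_zero]
  exact hab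

theorem integral_card_filter_mem {Ω ι : Type*} [MeasurableSpace Ω] {μ : Measure Ω}
    [IsFiniteMeasure μ] {s : Finset ι} {A : ι → Set Ω} (hA : ∀ i ∈ s, MeasurableSet (A i))
    [∀ x, DecidablePred fun i ↦ x ∈ A i] :
    Integrable (fun x ↦ ((s.filter fun i ↦ x ∈ A i).card : ℝ)) μ ∧
      ∫ x, ((s.filter fun i ↦ x ∈ A i).card : ℝ) ∂μ = ∑ i ∈ s, μ.real (A i) := by
  have hcard (x : Ω) : ((s.filter fun i ↦ x ∈ A i).card : ℝ) =
      ∑ i ∈ s, (A i).indicator (1 : Ω → ℝ) x := by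
    simp only [Finset.card_filter, Nat.cast_sum, Nat.cast_ite, indicator_apply, Nat.cast_one,
      Nat.cast_zero, Pi.one_apply]
  have hint : ∀ i ∈ s, Integrable ((A i).indicator (1 : Ω → ℝ)) μ :=
    fun i hi ↦ (integrable_const (1 : ℝ)).indicator (hA i hi)
  simp only [hcard]
  refine ⟨integrable_finsetSum _ hint, ?_⟩
  rw [integral_finsetSum _ hint]
  exact Finset.sum_congr rfl fun i hi ↦ integral_indicator_one (hA i hi)

theorem sum_sum_real_straddlingVectors (hE : finrank ℝ E = 3)
    (hVind : ConvexIndependent ℝ ((↑) : ↥(V : Set E) → E)) (hV : vectorSpan ℝ (V : Set E) = ⊤)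
    {faces : Finset (Set E)} (hfaces : (faces : Set (Set E)) = twoFaces (convexHull ℝ (V : Set E)))
    [∀ v, DecidablePred fun F : Set E ↦ v ∈ F] :
    ∑ v ∈ V, ∑ F ∈ faces with v ∈ F, (stdGaussian E).real (straddlingVectors F v) =
      2 * (V.card - 2) := by
  classical
  have hcard (x v : E) : ((faces.filter (v ∈ ·)).filter (x ∈ straddlingVectors · v)).card =
      (straddlingFaces (convexHull ℝ (V : Set E)) (innerSL ℝ x) v).ncard := by
    rw [← ncard_coe_finset, Finset.filter_filter, Finset.coe_filter]
    simp only [← Finset.mem_coe, hfaces]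
    rfl
  have hcount (v : E) := integral_card_filter_mem (μ := stdGaussian E)
    (s := faces.filter (v ∈ ·)) fun F _ ↦ (isOpen_straddlingVectors F v).measurableSet
  calc ∑ v ∈ V, ∑ F ∈ faces with v ∈ F, (stdGaussian E).real (straddlingVectors F v)
      = ∫ x, ∑ v ∈ V, ((straddlingFaces (convexHull ℝ (V : Set E)) (innerSL ℝ x) v).ncard : ℝ)
          ∂stdGaussian E := by
        simp only [← hcard]
        rw [integral_finsetSum _ fun v _ ↦ (hcount v).1]
        exact Finset.sum_congr rfl fun v _ ↦ (hcount v).2.symm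
    _ = ∫ _, 2 * (V.card - 2 : ℝ) ∂stdGaussian E := by
        refine integral_congr_ae ?_
        filter_upwards [ae_stdGaussian_injOn_innerSL V] with x hx
        exact sum_ncard_straddlingFaces hE hVind hV hx
    _ = 2 * (V.card - 2) := by rw [integral_const, probReal_univ, one_smul]

end ExpectedCount

theorem finsum_twoFaces_finsum_extremePoints {E M : Type*} [NormedAddCommGroup E]
    [NormedSpace ℝ E] [AddCommMonoid M] {P : Set E} {V : Finset E} {faces : Finset (Set E)}
    (hV : (V : Set E) = P.extremePoints ℝ) (hfaces : (faces : Set (Set E)) = twoFaces P)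
    [∀ v, DecidablePred fun F : Set E ↦ v ∈ F] (g : Set E → E → M) :
    ∑ᶠ (F : Set E) (_ : F ∈ twoFaces P), ∑ᶠ (v : E) (_ : v ∈ F.extremePoints ℝ), g F v =
      ∑ v ∈ V, ∑ F ∈ faces with v ∈ F, g F v := by
  classical
  have hinner : ∀ F ∈ faces, ∑ᶠ (v : E) (_ : v ∈ F.extremePoints ℝ), g F v =
      ∑ v ∈ V with v ∈ F, g F v := by
    intro F hF
    have hF' : F ∈ twoFaces P := hfaces ▸ Finset.mem_coe.mpr hF
    refine finsum_cond_eq_sum_of_cond_iff _ fun {v} _ ↦ ?_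
    rw [hF'.1.isExtreme.extremePoints_eq, ← hV, Finset.mem_filter, mem_inter_iff, Finset.mem_coe,
      and_comm]
  rw [← hfaces, finsum_mem_coe_finset, Finset.sum_congr rfl hinner]
  refine Finset.sum_comm' fun F v ↦ ?_
  simp only [Finset.mem_filter]
  tauto

theorem finsum_finsum_mul_real_straddlingVectors {E : Type*} [NormedAddCommGroup E]
    [InnerProductSpace ℝ E] [FiniteDimensional ℝ E] [MeasurableSpace E] [BorelSpace E]
    (hE : finrank ℝ E = 3) {S : Finset E} (hS : (interior (convexHull ℝ (S : Set E))).Nonempty)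
    (r : ℝ) :
    ∑ᶠ (F : Set E) (_ : F ∈ twoFaces (convexHull ℝ (S : Set E))),
      ∑ᶠ (v : E) (_ : v ∈ F.extremePoints ℝ),
        r * (stdGaussian E).real (straddlingVectors F v) =
      r * (2 * (((convexHull ℝ (S : Set E)).extremePoints ℝ).ncard - 2)) := by
  classical
  obtain ⟨V, hV, hVS⟩ := exists_finset_eq_extremePoints_convexHull S
  rw [← hVS] at hV hS ⊢
  have hVind : ConvexIndependent ℝ ((↑) : ↥(V : Set E) → E) := by
    rw [hV]
    exact (convex_convexHull ℝ _).convexIndependent_extremePoints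
  have hVspan : vectorSpan ℝ (V : Set E) = ⊤ :=
    AffineSubspace.vectorSpan_eq_top_of_affineSpan_eq_top ℝ E E
      (interior_convexHull_nonempty_iff_affineSpan_eq_top.mp hS)
  obtain ⟨faces, hfaces⟩ := (finite_twoFaces_convexHull V).exists_finset_coe
  rw [finsum_twoFaces_finsum_extremePoints hV hfaces]
  simp only [← Finset.mul_sum]
  rw [sum_sum_real_straddlingVectors hE hVind hVspan hfaces, ← hV, ncard_coe_finset]

theorem descartes_total_angle_general {E : Type*} [NormedAddCommGroup E] [InnerProductSpace ℝ E]
    (hE : finrank ℝ E = 3) {P : Set E} (hpoly : ∃ S : Finset E, P = convexHull ℝ (S : Set E))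
    (hfulldim : (interior P).Nonempty) (A : Set E → E → ℝ)
    (hA : ∀ F : Set E, IsExposed ℝ P F → finrank ℝ (vectorSpan ℝ F) = 2 →
      ∀ v ∈ F.extremePoints ℝ, ∃ u w : E, u ≠ w ∧
        IsExposed ℝ F (segment ℝ v u) ∧ finrank ℝ (vectorSpan ℝ (segment ℝ v u)) = 1 ∧
        IsExposed ℝ F (segment ℝ v w) ∧ finrank ℝ (vectorSpan ℝ (segment ℝ v w)) = 1 ∧
        A F v = EuclideanGeometry.angle u v w) :
    ∑ᶠ (F : Set E) (_ : IsExposed ℝ P F ∧ finrank ℝ (vectorSpan ℝ F) = 2),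
      ∑ᶠ (v : E) (_ : v ∈ F.extremePoints ℝ), A F v =
        2 * π * ((P.extremePoints ℝ).ncard - 2) := by
  have : FiniteDimensional ℝ E := .of_finrank_eq_succ hE
  let : MeasurableSpace E := borel E
  have : BorelSpace E := ⟨rfl⟩
  obtain ⟨S, rfl⟩ := hpoly
  have hangle : ∀ F ∈ twoFaces (convexHull ℝ (S : Set E)), ∀ v ∈ F.extremePoints ℝ,
      A F v = π * (stdGaussian E).real (straddlingVectors F v) := by
    intro F hF v hv
    obtain ⟨u, w, huw, hu, hvu, hw, hvw, hAv⟩ := hA F hF.1 hF.2 v hv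
    have hcorner : IsPolygonCorner F u v w :=
      ⟨hF.2, huw, right_ne_left_of_finrank_segment hvu, right_ne_left_of_finrank_segment hvw,
        hu, hw⟩
    rw [hAv, hcorner.angle_eq]
  calc ∑ᶠ (F : Set E) (_ : F ∈ twoFaces (convexHull ℝ (S : Set E))),
        ∑ᶠ (v : E) (_ : v ∈ F.extremePoints ℝ), A F v
      = π * (2 * (((convexHull ℝ (S : Set E)).extremePoints ℝ).ncard - 2)) := by
        rw [← finsum_finsum_mul_real_straddlingVectors hE hfulldim]
        exact finsum_mem_congr rfl fun F hF ↦ finsum_mem_congr rfl (hangle F hF)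
    _ = 2 * π * (((convexHull ℝ (S : Set E)).extremePoints ℝ).ncard - 2) := by ring

/-- **Descartes' theorem.** For a convex polyhedron in `ℝ³`, the sum over all
two-dimensional faces `F` and over all vertices `v` of `F` of the interior angle of `F`
at `v` (the angle `∠ u v w` between the two neighbours `u`, `w` of `v` along the edges of
the polygon `F`) equals `2π (n₀ - 2)`, where `n₀` is the number of vertices of the
polyhedron.  (Taking as unit the right angle `π/2`, this sum is `4 (n₀ - 2)`.) -/
theorem descartes_total_angle
    (P : Set (EuclideanSpace ℝ (Fin 3)))
    (hconv : Convex ℝ P)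
    (hcompact : IsCompact P)
    (hpoly : ∃ S : Finset (EuclideanSpace ℝ (Fin 3)),
      P = convexHull ℝ (S : Set (EuclideanSpace ℝ (Fin 3))))
    (hfulldim : (interior P).Nonempty)
    (A : Set (EuclideanSpace ℝ (Fin 3)) → EuclideanSpace ℝ (Fin 3) → ℝ)
    (hA : ∀ F : Set (EuclideanSpace ℝ (Fin 3)), IsExposed ℝ P F →
      Module.finrank ℝ ↥(vectorSpan ℝ F) = 2 →
      ∀ v ∈ F.extremePoints ℝ, ∃ u w : EuclideanSpace ℝ (Fin 3), u ≠ w ∧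
        IsExposed ℝ F (segment ℝ v u) ∧
        Module.finrank ℝ ↥(vectorSpan ℝ (segment ℝ v u)) = 1 ∧
        IsExposed ℝ F (segment ℝ v w) ∧
        Module.finrank ℝ ↥(vectorSpan ℝ (segment ℝ v w)) = 1 ∧
        A F v = EuclideanGeometry.angle u v w) :
    (∑ᶠ (F : Set (EuclideanSpace ℝ (Fin 3)))
        (_ : IsExposed ℝ P F ∧ Module.finrank ℝ ↥(vectorSpan ℝ F) = 2),
      ∑ᶠ (v : EuclideanSpace ℝ (Fin 3)) (_ : v ∈ F.extremePoints ℝ), A F v)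
      = 2 * Real.pi * (((P.extremePoints ℝ).ncard : ℝ) - 2) :=
  descartes_total_angle_general finrank_euclideanSpace_fin hpoly hfulldim A hA
end

section
/- Let K be a finite triangulated polygon in R^2 homeomorphic to a disc, with possible identifications of simplices on its boundary K0. Then the alternating sum of simplex counts satisfies χ(K) = χ(K0) + 1, where χ denotes n0 - n1 + n2 computed after boundary identifications. -/
/-- A finite abstract simplicial complex with vertices among `Fin n`. -/
structure SComplex where
  n : ℕ
  faces : Finset (Finset (Fin n))
  not_empty_mem : ∅ ∉ faces
  down_closed : ∀ s ∈ faces, ∀ t ⊆ s, t ≠ ∅ → t ∈ faces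

namespace SComplex

/-- The number of `i`-dimensional simplices (`i`-simplices have `i + 1` vertices). -/
def count (K : SComplex) (i : ℕ) : ℕ :=
  (K.faces.filter fun s => s.card = i + 1).card

/-- The alternating sum `n₀ - n₁ + n₂`. -/
def eulerSum (K : SComplex) : ℤ :=
  (K.count 0 : ℤ) - K.count 1 + K.count 2

/-- The complex has dimension at most `2`. -/
def IsTwoDimensional (K : SComplex) : Prop :=
  ∀ s ∈ K.faces, s.card ≤ 3

/-- The geometric realization of an abstract simplicial complex, topologized as a
subspace of `Fin K.n → ℝ`. -/
abbrev realization (K : SComplex) : Type :=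
  {f : Fin K.n → ℝ //
    (∀ v, 0 ≤ f v) ∧ (∑ v, f v = 1) ∧ ∃ s ∈ K.faces, ∀ v, f v ≠ 0 → v ∈ s}

end SComplex

/-- The number of `i`-dimensional simplices of a family `S` of simplices, counted after
applying the vertex-identification map `π` (identified simplices are counted once). -/
def identCount {n m : ℕ} (S : Finset (Finset (Fin n))) (π : Fin n → Fin m) (i : ℕ) : ℕ :=
  ((S.filter fun s => s.card = i + 1).image fun s => s.image π).card

/-!
On a closed disc every nowhere vanishing continuous function has a continuous logarithm, and this
property passes to the realization of `K`. It gives the integral simplicial cohomology of `K`: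
connectedness makes the kernel of the first coboundary the constants; exponentiating a
`1`-cocycle and taking a logarithm exhibits it as a coboundary; and the winding of the chart around
an interior point of a triangle is a `1`-cochain whose coboundary is supported on that triangle.
Hence `n₀ - n₁ + n₂ = 1` before identification.

An edge lies on one or two triangles, since otherwise the boundary of a triangle, or of a maximal
edge, would not wind around its own interior. Removing a vertex does not disconnect the disc, so the
link of a vertex is a path or a cycle, and a vertex lies on two boundary edges or on none. Hence the
boundary has as many vertices as edges. Identifications on the boundary lower the counts for `K` and
`K₀` by the same amounts.
-/

open Set Filter Topology

section ContinuousLogarithm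

variable {Y Z P : Type*} [TopologicalSpace Y] [TopologicalSpace Z] [TopologicalSpace P]
  {φ ψ : Y → ℂ} {S T A B : Set Y}

/-- The function `φ` admits a continuous logarithm on the set `S`. -/
def HasLogOn (φ : Y → ℂ) (S : Set Y) : Prop :=
  ∃ F : Y → ℂ, ContinuousOn F S ∧ ∀ y ∈ S, Complex.exp (F y) = φ y

/-- Every nowhere vanishing continuous function on `S` has a continuous logarithm. This is the
substitute used here for the vanishing of the first integral cohomology group of `S`. -/
def HasContinuousLogs (S : Set Y) : Prop :=
  ∀ φ : Y → ℂ, ContinuousOn φ S → (∀ y ∈ S, φ y ≠ 0) → HasLogOn φ S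

theorem exists_continuousOn_forall_eq [Nonempty Z] {f : S → Z} (hf : Continuous f) :
    ∃ g : Y → Z, ContinuousOn g S ∧ ∀ y : S, g y = f y := by
  have h : ∀ y : S, Function.extend (↑) f (fun _ => Classical.arbitrary Z) (y : Y) = f y :=
    Subtype.val_injective.extend_apply f _
  refine ⟨_, continuousOn_iff_continuous_domRestrict.2 ?_, h⟩
  exact hf.congr fun y => (h y).symm

theorem hasLogOn_iff_exists_continuousMap :
    HasLogOn φ S ↔ ∃ F : C(S, ℂ), ∀ y, Complex.exp (F y) = φ y := by
  refine ⟨fun ⟨F, hF, hexp⟩ => ⟨⟨S.domRestrict F, hF.domRestrict⟩, fun y => hexp y y.2⟩,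
    fun ⟨F, hF⟩ => ?_⟩
  obtain ⟨G, hG, hGF⟩ := exists_continuousOn_forall_eq F.continuous
  exact ⟨G, hG, fun y hy => by rw [hGF ⟨y, hy⟩, hF]⟩

theorem HasLogOn.mono (h : HasLogOn φ T) (hST : S ⊆ T) : HasLogOn φ S := by
  obtain ⟨F, hF, hexp⟩ := h
  exact ⟨F, hF.mono hST, fun y hy => hexp y (hST hy)⟩

theorem HasLogOn.congr (h : HasLogOn φ S) (he : EqOn φ ψ S) : HasLogOn ψ S := by
  obtain ⟨F, hF, hexp⟩ := h
  exact ⟨F, hF, fun y hy => (hexp y hy).trans (he hy)⟩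

theorem HasLogOn.comp (h : HasLogOn φ S) {f : Z → Y} {R : Set Z} (hf : ContinuousOn f R)
    (hR : MapsTo f R S) : HasLogOn (φ ∘ f) R := by
  obtain ⟨F, hF, hexp⟩ := h
  exact ⟨F ∘ f, hF.comp hf hR, fun z hz => hexp (f z) (hR hz)⟩

theorem HasLogOn.of_homotopy {R : Set P} {φ : P → Y → ℂ}
    (hφ : ContinuousOn (Function.uncurry φ) (R ×ˢ S)) (hne : ∀ t ∈ R, ∀ y ∈ S, φ t y ≠ 0)
    {t₀ t₁ : P} (hR : JoinedIn R t₀ t₁) (h : HasLogOn (φ t₀) S) : HasLogOn (φ t₁) S := by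
  rw [hasLogOn_iff_exists_continuousMap] at h ⊢
  obtain ⟨F, hF⟩ := h
  obtain ⟨γ, hγ⟩ := hR
  let H : C(unitInterval × S, {z : ℂ // z ≠ 0}) :=
    ⟨fun x => ⟨φ (γ x.1) x.2, hne _ (hγ x.1) _ x.2.2⟩,
      (hφ.comp_continuous (f := fun x : unitInterval × S => (γ x.1, (x.2 : Y))) (by fun_prop)
        fun x => ⟨hγ x.1, x.2.2⟩).subtype_mk _⟩
  have hH : ∀ y, H (0, y) = ⟨_, Complex.exp_ne_zero (F y)⟩ := fun y => Subtype.ext <|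
    (congrArg (φ · y) γ.source).trans (hF y).symm
  let G := Complex.isCoveringMap_exp.liftHomotopy H F hH
  refine ⟨G.comp ⟨fun y => (1, y), by fun_prop⟩, fun y => ?_⟩
  have hG := congrFun (Complex.isCoveringMap_exp.liftHomotopy_lifts H F hH) (1, y)
  exact (congrArg Subtype.val hG).trans (congrArg (φ · y) γ.target)

theorem sub_eq_sub_of_exp_eq_exp (hS : IsPreconnected S) {F G : Y → ℂ} (hF : ContinuousOn F S)
    (hG : ContinuousOn G S) (hexp : ∀ y ∈ S, Complex.exp (F y) = Complex.exp (G y)) {x y : Y}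
    (hx : x ∈ S) (hy : y ∈ S) : F y - F x = G y - G x := by
  have h := Complex.isCoveringMap_exp.eqOn_of_comp_eqOn hS hF
    (g₂ := fun z => G z + (F x - G x)) (hG.add continuousOn_const) (fun z hz => Subtype.ext ?_)
    hx (by simp) hy
  · linear_combination h
  · simp [Complex.exp_add, Complex.exp_sub, hexp x hx, hexp z hz]

theorem hasLogOn_union_of_sub_eq_sub (hA : IsClosed A) (hB : IsClosed B) {F G : Y → ℂ}
    (hF : ContinuousOn F A) (hFexp : ∀ y ∈ A, Complex.exp (F y) = φ y)
    (hG : ContinuousOn G B) (hGexp : ∀ y ∈ B, Complex.exp (G y) = φ y)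
    (hFG : ∀ x ∈ A ∩ B, ∀ y ∈ A ∩ B, F y - F x = G y - G x) : HasLogOn φ (A ∪ B) := by
  classical
  obtain ⟨c, hc, hcexp⟩ : ∃ c, (∀ y ∈ A ∩ B, F y = G y + c) ∧ Complex.exp c = 1 := by
    rcases (A ∩ B).eq_empty_or_nonempty with h | ⟨x, hx⟩
    · exact ⟨0, by simp [h], Complex.exp_zero⟩
    · refine ⟨F x - G x, fun y hy => by linear_combination hFG x hx y hy, ?_⟩
      rw [Complex.exp_sub, hFexp x hx.1, ← hGexp x hx.2, div_self (Complex.exp_ne_zero _)]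
  have hHB : EqOn (A.piecewise F fun y => G y + c) (fun y => G y + c) B := fun y hy => by
    by_cases hyA : y ∈ A
    · rw [piecewise_eq_of_mem _ _ _ hyA, hc y ⟨hyA, hy⟩]
    · exact piecewise_eq_of_notMem _ _ _ hyA
  refine ⟨A.piecewise F fun y => G y + c, (hF.congr (piecewise_eqOn _ _ _)).union_of_isClosed
    ((hG.add continuousOn_const).congr hHB) hA hB, ?_⟩
  rintro y (hy | hy)
  · rw [piecewise_eq_of_mem _ _ _ hy, hFexp y hy]
  · rw [hHB hy, Complex.exp_add, hGexp y hy, hcexp, mul_one]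

theorem HasLogOn.union (hφA : HasLogOn φ A) (hφB : HasLogOn φ B) (hA : IsClosed A)
    (hB : IsClosed B) (hAB : IsPreconnected (A ∩ B)) : HasLogOn φ (A ∪ B) := by
  obtain ⟨F, hF, hFexp⟩ := hφA
  obtain ⟨G, hG, hGexp⟩ := hφB
  refine hasLogOn_union_of_sub_eq_sub hA hB hF hFexp hG hGexp fun x hx y hy => ?_
  exact sub_eq_sub_of_exp_eq_exp hAB (hF.mono inter_subset_left) (hG.mono inter_subset_right)
    (fun z hz => (hFexp z hz.1).trans (hGexp z hz.2).symm) hx hy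

theorem HasLogOn.exists_ne_zero_extension [NormalSpace Y] (hφ : HasLogOn φ (A ∩ B))
    (hA : IsClosed A) (hB : IsClosed B) (hφB : ContinuousOn φ B) (hne : ∀ y ∈ B, φ y ≠ 0) :
    ∃ g, ContinuousOn g (A ∪ B) ∧ (∀ y ∈ A ∪ B, g y ≠ 0) ∧ EqOn g φ B := by
  classical
  obtain ⟨F, hF⟩ := hasLogOn_iff_exists_continuousMap.1 hφ
  obtain ⟨G, hG⟩ := F.exists_restrict_eq (hA.inter hB)
  let g : Y → ℂ := B.piecewise φ fun y => Complex.exp (G y)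
  have hgB : EqOn g φ B := piecewise_eqOn _ _ _
  have hgA : EqOn g (fun y => Complex.exp (G y)) A := fun y hy => by
    by_cases hyB : y ∈ B
    · rw [hgB hyB, ← hF ⟨y, hy, hyB⟩, ← hG, ContinuousMap.restrict_apply]
    · exact piecewise_eq_of_notMem _ _ _ hyB
  refine ⟨g, ((Complex.continuous_exp.comp G.continuous).continuousOn.congr hgA).union_of_isClosed
    (hφB.congr hgB) hA hB, ?_, hgB⟩
  rintro y (hy | hy)
  · rw [hgA hy]
    exact Complex.exp_ne_zero _
  · rw [hgB hy]
    exact hne y hy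

theorem hasContinuousLogs_of_convex {E : Type*} [AddCommGroup E] [Module ℝ E]
    [TopologicalSpace E] [IsTopologicalAddGroup E] [ContinuousSMul ℝ E] {S : Set E}
    (hS : Convex ℝ S) : HasContinuousLogs S := by
  intro φ hφ hne
  rcases S.eq_empty_or_nonempty with rfl | ⟨x, hx⟩
  · exact ⟨0, continuousOn_empty _, fun y hy => hy.elim⟩
  have hmem : ∀ t ∈ Icc (0 : ℝ) 1, ∀ y ∈ S, AffineMap.lineMap x y t ∈ S := fun t ht y hy =>
    hS.lineMap_mem hx hy ht
  have hconst : HasLogOn (fun y => φ (AffineMap.lineMap x y (0 : ℝ))) S :=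
    ⟨fun _ => Complex.log (φ x), continuousOn_const, fun y _ => by
      simp [Complex.exp_log (hne x hx)]⟩
  refine (HasLogOn.of_homotopy (φ := fun (t : ℝ) y => φ (AffineMap.lineMap x y t))
    (hφ.comp ?_ fun p hp => hmem p.1 hp.1 p.2 hp.2) (fun t ht y hy => hne _ (hmem t ht y hy))
    ((convex_Icc 0 1).isPathConnected ⟨0, by simp⟩ |>.joinedIn 0 (by simp) 1 (by simp))
    hconst).congr fun y _ => by simp
  simp only [AffineMap.lineMap_apply_module']
  fun_prop

theorem not_hasLogOn_sphere_sub {q : ℂ} (hq : ‖q‖ < 1) :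
    ¬HasLogOn (fun z => z - q) (Metric.sphere 0 1) := by
  intro h
  obtain ⟨F, hF, hexp⟩ : HasLogOn (fun z : ℂ => z - 0) (Metric.sphere 0 1) :=
    h.of_homotopy (φ := fun t z : ℂ => z - t) (R := Metric.ball 0 1) (by fun_prop)
      (fun t ht z hz => sub_ne_zero.2 <| by rintro rfl; simp_all)
      ((convex_ball (0 : ℂ) 1).isPathConnected ⟨0, by simp⟩ |>.joinedIn q (by simpa) 0 (by simp))
  have hmem : ∀ θ : ℝ, Complex.exp (θ * Complex.I) ∈ Metric.sphere (0 : ℂ) 1 := fun θ => by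
    simp [Complex.norm_exp_ofReal_mul_I]
  have hc : Continuous fun θ : ℝ => F (Complex.exp (θ * Complex.I)) :=
    hF.comp_continuous (by fun_prop) hmem
  have h := sub_eq_sub_of_exp_eq_exp isPreconnected_univ (x := (0 : ℝ)) (y := 2 * Real.pi)
    (G := fun θ : ℝ => θ * Complex.I) hc.continuousOn (by fun_prop)
    (fun θ _ => by simp [hexp _ (hmem θ)]) (mem_univ _) (mem_univ _)
  simp [Complex.exp_two_pi_mul_I, Real.pi_ne_zero] at h

end ContinuousLogarithm

section Disc

theorem isPreconnected_closedBall_diff_singleton (q : ℂ) :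
    IsPreconnected (Metric.closedBall (0 : ℂ) 1 \ {q}) := by
  have hball : IsPreconnected (Metric.ball (0 : ℂ) 1 \ {q}) := by
    by_cases hq : q ∈ Metric.ball (0 : ℂ) 1
    · let f : ℂ → ℂ := fun z => (Homeomorph.unitBall z : Metric.ball (0 : ℂ) 1)
      obtain ⟨w, hw⟩ : ∃ w, f w = q := ⟨Homeomorph.unitBall.symm ⟨q, hq⟩, by simp [f]⟩
      have hf : f '' {w}ᶜ = Metric.ball 0 1 \ {q} := by
        have hinj : f.Injective := Subtype.val_injective.comp Homeomorph.unitBall.injective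
        rw [compl_eq_univ_sdiff, image_sdiff hinj, image_univ, image_singleton, hw]
        congr 1
        ext z
        exact ⟨fun ⟨v, hv⟩ => hv ▸ Subtype.coe_prop _,
          fun hz => ⟨Homeomorph.unitBall.symm ⟨z, hz⟩, by simp [f]⟩⟩
      exact hf ▸ (isConnected_compl_singleton_of_one_lt_rank
        (by simp [Complex.rank_real_complex]) w).isPreconnected.image f (by fun_prop)
    · rw [sdiff_singleton_eq_self hq]
      exact (convex_ball 0 1).isPreconnected
  refine hball.subset_closure (sdiff_subset_sdiff_left Metric.ball_subset_closedBall) ?_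
  rintro z ⟨hz, hzq⟩
  rw [← closure_ball (0 : ℂ) one_ne_zero] at hz
  rw [Set.sdiff_eq, inter_comm]
  exact isOpen_compl_singleton.inter_closure ⟨hzq, hz⟩

variable {E : Type*} [TopologicalSpace E]

/-- A homeomorphism from the subspace `R` onto the closed unit disc of `ℂ`; both directions are
recorded as functions on the whole ambient space, whose values off `R` and off the disc are
irrelevant. -/
structure DiscChart (R : Set E) where
  toFun : E → ℂ
  symm : ℂ → E
  continuousOn : ContinuousOn toFun R
  continuousOn_symm : ContinuousOn symm (Metric.closedBall 0 1)
  mapsTo : MapsTo toFun R (Metric.closedBall 0 1)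
  mapsTo_symm : MapsTo symm (Metric.closedBall 0 1) R
  left_inv : LeftInvOn symm toFun R
  right_inv : RightInvOn symm toFun (Metric.closedBall 0 1)

namespace DiscChart

instance {R : Set E} : CoeFun (DiscChart R) fun _ => E → ℂ := ⟨toFun⟩

theorem nonempty_of_homeomorph {R : Set E} (Ψ : R ≃ₜ Metric.closedBall (0 : ℂ) 1) :
    Nonempty (DiscChart R) := by
  have : Nonempty E := ⟨Ψ.symm ⟨0, by simp⟩⟩
  obtain ⟨f, hf, hfΨ⟩ := exists_continuousOn_forall_eq Ψ.continuous.subtype_val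
  obtain ⟨g, hg, hgΨ⟩ := exists_continuousOn_forall_eq Ψ.symm.continuous.subtype_val
  exact ⟨{
    toFun := f
    symm := g
    continuousOn := hf
    continuousOn_symm := hg
    mapsTo := fun x hx => by rw [hfΨ ⟨x, hx⟩]; exact Subtype.coe_prop _
    mapsTo_symm := fun z hz => by rw [hgΨ ⟨z, hz⟩]; exact Subtype.coe_prop _
    left_inv := fun x hx => by rw [hfΨ ⟨x, hx⟩, hgΨ, Ψ.symm_apply_apply]
    right_inv := fun z hz => by rw [hgΨ ⟨z, hz⟩, hfΨ, Ψ.apply_symm_apply] }⟩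

variable {R A B : Set E} (e : DiscChart R)

include e

theorem injOn : InjOn e R := e.left_inv.injOn

theorem image_symm : e.symm '' Metric.closedBall 0 1 = R :=
  (e.left_inv.surjOn e.mapsTo).image_eq_of_mapsTo e.mapsTo_symm

theorem isCompact : IsCompact R :=
  e.image_symm ▸ (isCompact_closedBall (0 : ℂ) 1).image_of_continuousOn e.continuousOn_symm

theorem hasContinuousLogs : HasContinuousLogs R := fun φ hφ hne => by
  have hlog := hasContinuousLogs_of_convex (convex_closedBall (0 : ℂ) 1) (φ ∘ e.symm)
    (hφ.comp e.continuousOn_symm e.mapsTo_symm) fun z hz => hne _ (e.mapsTo_symm hz)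
  exact (hlog.comp e.continuousOn e.mapsTo).congr fun x hx => by
    simp only [Function.comp_apply, e.left_inv hx]

theorem isPreconnected : IsPreconnected R :=
  e.image_symm ▸ (convex_closedBall (0 : ℂ) 1).isPreconnected.image _ e.continuousOn_symm

theorem isPreconnected_diff_singleton {p : E} (hp : p ∈ R) : IsPreconnected (R \ {p}) := by
  have hR : R \ {p} = e.symm '' (Metric.closedBall 0 1 \ {e p}) := by
    rw [e.right_inv.injOn.image_sdiff, e.image_symm,
      inter_eq_right.2 (singleton_subset_iff.2 (e.mapsTo hp)), image_singleton, e.left_inv hp]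
  rw [hR]
  exact (isPreconnected_closedBall_diff_singleton _).image _
    (e.continuousOn_symm.mono sdiff_subset)

theorem exists_norm_lt_one {U : Set E} (hU : IsOpen U) (hne : (R ∩ U).Nonempty) :
    ∃ q ∈ R ∩ U, ‖e q‖ < 1 := by
  obtain ⟨p, hp, hpU⟩ := hne
  have hcl : e p ∈ closure (Metric.ball (0 : ℂ) 1) := by
    rw [closure_ball _ one_ne_zero]
    exact e.mapsTo hp
  have hev : ∀ᶠ z in 𝓝[Metric.ball 0 1] (e p), e.symm z ∈ U :=
    ((e.continuousOn_symm _ (e.mapsTo hp)).mono Metric.ball_subset_closedBall).eventually_mem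
      (by rw [e.left_inv hp]; exact hU.mem_nhds hpU)
  have := mem_closure_iff_nhdsWithin_neBot.1 hcl
  obtain ⟨z, hzU, hz⟩ := (hev.and self_mem_nhdsWithin).exists
  have hz' := Metric.ball_subset_closedBall hz
  exact ⟨e.symm z, ⟨e.mapsTo_symm hz', hzU⟩, by rw [e.right_inv hz']; simpa using hz⟩

-- A logarithm of `e - e q` on `A ∩ B` would give a nonvanishing function on `R` that agrees with
-- `e - e q` on `B`, hence a logarithm of `z - e q` on the unit circle.
theorem not_hasLogOn_inter [T2Space E] [NormalSpace E] (hA : IsClosed A) (hB : IsClosed B)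
    (hAB : A ∪ B = R) (hAball : ∀ x ∈ A, ‖e x‖ < 1) {q : E} (hqA : q ∈ A) (hqB : q ∉ B) :
    ¬HasLogOn (fun x => e x - e q) (A ∩ B) := by
  intro hlog
  obtain ⟨g, hg, hne, hgB⟩ := hlog.exists_ne_zero_extension hA hB
    ((e.continuousOn.mono (hAB ▸ subset_union_right)).sub continuousOn_const) fun x hx h =>
      hqB (e.injOn (hAB ▸ .inr hx) (hAB ▸ .inl hqA) (sub_eq_zero.1 h) ▸ hx)
  rw [hAB] at hg hne
  refine not_hasLogOn_sphere_sub (hAball q hqA) (((e.hasContinuousLogs g hg hne).comp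
    (e.continuousOn_symm.mono Metric.sphere_subset_closedBall)
    (e.mapsTo_symm.mono_left Metric.sphere_subset_closedBall)).congr fun z hz => ?_)
  have hz' := Metric.sphere_subset_closedBall hz
  have hzB : e.symm z ∈ B :=
    (show e.symm z ∈ A ∪ B from hAB ▸ e.mapsTo_symm hz').resolve_left fun hzA => by
      simpa [e.right_inv hz', mem_sphere_zero_iff_norm.1 hz] using hAball _ hzA
  simp only [Function.comp_apply, hgB hzB, e.right_inv hz']

end DiscChart

end Disc

section Cell

variable {ι : Type*}

theorem isClosed_forall_mem_le (s : Finset ι) (q : ι → ℝ) :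
    IsClosed {x : ι → ℝ | ∀ v ∈ s, q v ≤ x v} := by
  simp only [ofPred_forall]
  exact isClosed_biInter fun v _ => isClosed_le continuous_const (continuous_apply v)

theorem isClosed_exists_mem_le (s : Finset ι) (q : ι → ℝ) :
    IsClosed {x : ι → ℝ | ∃ v ∈ s, x v ≤ q v} := by
  have h : {x : ι → ℝ | ∃ v ∈ s, x v ≤ q v} = ⋃ v ∈ s, {x | x v ≤ q v} := by ext; simp
  rw [h]
  exact isClosed_biUnion_finset fun v _ => isClosed_le (continuous_apply v) continuous_const

theorem isOpen_forall_mem_pos (s : Finset ι) : IsOpen {x : ι → ℝ | ∀ v ∈ s, 0 < x v} := by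
  have h : {x : ι → ℝ | ∀ v ∈ s, 0 < x v} = ⋂ v ∈ s, {x | 0 < x v} := by ext; simp
  rw [h]
  exact isOpen_biInter_finset fun v _ => isOpen_lt continuous_const (continuous_apply v)

variable [Fintype ι] {s t : Finset ι} {x q : ι → ℝ} {c : ℝ}

/-- The closed simplex with vertex set `s`, in barycentric coordinates. -/
def cell (s : Finset ι) : Set (ι → ℝ) := {x ∈ stdSimplex ℝ ι | ∀ v ∉ s, x v = 0}

/-- The relative interior of `cell s`. -/
def openCell (s : Finset ι) : Set (ι → ℝ) := {x ∈ cell s | ∀ v ∈ s, 0 < x v}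

/-- The relative boundary of `cell s`. -/
def cellBoundary (s : Finset ι) : Set (ι → ℝ) := {x ∈ cell s | ∃ v ∈ s, x v = 0}

theorem convex_cell (s : Finset ι) : Convex ℝ (cell s) := by
  refine (convex_stdSimplex ℝ ι).inter fun x hx y hy a b _ _ _ v hv => ?_
  simp [hx v hv, hy v hv]

theorem convex_openCell (s : Finset ι) : Convex ℝ (openCell s) := by
  refine (convex_cell s).inter fun x hx y hy a b ha hb hab v hv => ?_
  exact convex_Ioi (0 : ℝ) (hx v hv) (hy v hv) ha hb hab

theorem isClosed_cell (s : Finset ι) : IsClosed (cell s) := by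
  have h : cell s = stdSimplex ℝ ι ∩ ⋂ v ∉ s, {x | x v = 0} := by ext; simp [cell]
  rw [h]
  exact (isClosed_stdSimplex ℝ ι).inter (isClosed_biInter fun v _ =>
    isClosed_eq (continuous_apply v) continuous_const)

theorem cell_mono (h : s ⊆ t) : cell s ⊆ cell t := fun _ hx =>
  ⟨hx.1, fun v hv => hx.2 v (mt (@h v) hv)⟩

theorem cell_inter [DecidableEq ι] (s t : Finset ι) : cell s ∩ cell t = cell (s ∩ t) := by
  ext x
  simp only [cell, mem_inter_iff, mem_ofPred_eq, Finset.mem_inter]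
  grind

theorem mem_of_mem_cell (hx : x ∈ cell s) {v : ι} (hv : x v ≠ 0) : v ∈ s :=
  not_imp_comm.1 (hx.2 v) hv

theorem single_mem_cell [DecidableEq ι] {v : ι} (hv : v ∈ s) :
    (Pi.single v 1 : ι → ℝ) ∈ cell s :=
  ⟨single_mem_stdSimplex ℝ v, fun _ hw => Pi.single_eq_of_ne (ne_of_mem_of_not_mem hv hw).symm 1⟩

theorem openCell_nonempty (hs : s.Nonempty) : (openCell s).Nonempty := by
  classical
  have hcard : (0 : ℝ) < s.card := by exact_mod_cast hs.card_pos
  refine ⟨fun v => if v ∈ s then (s.card : ℝ)⁻¹ else 0, ⟨⟨fun v => ?_, ?_⟩, fun v hv => ?_⟩,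
    fun v hv => ?_⟩
  · dsimp only
    split <;> positivity
  · simp [hcard.ne']
  · simp [hv]
  · simp [hv, hcard]

theorem dist_le_one_of_mem_cell (hx : x ∈ cell s) (hq : q ∈ cell t) : dist x q ≤ 1 :=
  (Metric.dist_le_diam_of_mem (bounded_stdSimplex ι) hx.1 hq.1).trans diam_stdSimplex_le

theorem cellBoundary_eq_biUnion [DecidableEq ι] (s : Finset ι) :
    cellBoundary s = ⋃ v ∈ s, cell (s.erase v) := by
  ext x
  simp only [cellBoundary, cell, mem_ofPred_eq, mem_iUnion, Finset.mem_erase, exists_prop]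
  grind

theorem notMem_cellBoundary (hx : x ∈ openCell s) : x ∉ cellBoundary s := fun ⟨_, v, hv, h⟩ =>
  (hx.2 v hv).ne' h

theorem cellBoundary_subset_cell : cellBoundary s ⊆ cell s := sep_subset _ _

theorem lineMap_inv_mem_cell (hq : q ∈ cell s) (hx : x ∈ cell s) (hc : 0 < c)
    (h : ∀ v ∈ s, (1 - c) * q v ≤ x v) : AffineMap.lineMap q x c⁻¹ ∈ cell s := by
  have hv : ∀ v, AffineMap.lineMap q x c⁻¹ v = c⁻¹ * (x v - (1 - c) * q v) := fun v => by
    rw [AffineMap.pi_lineMap_apply, AffineMap.lineMap_apply_ring']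
    field_simp
    ring
  refine ⟨⟨fun v => ?_, ?_⟩, fun v hvs => by simp [hv, hx.2 v hvs, hq.2 v hvs]⟩
  · rw [hv]
    refine mul_nonneg (by positivity) (sub_nonneg.2 ?_)
    by_cases hvs : v ∈ s
    · exact h v hvs
    · simp [hx.2 v hvs, hq.2 v hvs]
  · simp only [hv, ← Finset.mul_sum, Finset.sum_sub_distrib, hx.1.2, hq.1.2]
    field_simp
    ring

end Cell

namespace SComplex

variable {K : SComplex}

/-- The underlying point set of the geometric realization. -/
def body (K : SComplex) : Set (Fin K.n → ℝ) := ⋃ s ∈ K.faces, cell s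

theorem mem_body {x : Fin K.n → ℝ} : x ∈ K.body ↔ ∃ s ∈ K.faces, x ∈ cell s := by
  simp [body]

theorem cell_subset_body {s : Finset (Fin K.n)} (hs : s ∈ K.faces) : cell s ⊆ K.body :=
  subset_biUnion_of_mem (u := cell) hs

theorem body_subset_stdSimplex : K.body ⊆ stdSimplex ℝ (Fin K.n) :=
  iUnion₂_subset fun _ _ => sep_subset _ _

theorem nonempty_of_mem_faces {s : Finset (Fin K.n)} (hs : s ∈ K.faces) : s.Nonempty :=
  Finset.nonempty_iff_ne_empty.2 (ne_of_mem_of_not_mem hs K.not_empty_mem)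

theorem mem_faces_of_subset {s t : Finset (Fin K.n)} (hs : s ∈ K.faces) (hts : t ⊆ s)
    (ht : t.Nonempty) : t ∈ K.faces :=
  K.down_closed s hs t hts ht.ne_empty

theorem mem_openCell_of_maximal {σ : Finset (Fin K.n)} (hσ : Maximal (· ∈ K.faces) σ)
    {x : Fin K.n → ℝ} (hx : x ∈ K.body) (hpos : ∀ v ∈ σ, 0 < x v) : x ∈ openCell σ := by
  obtain ⟨s, hs, hxs⟩ := mem_body.1 hx
  have hsub : σ ⊆ s := fun v hv => mem_of_mem_cell hxs (hpos v hv).ne'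
  exact ⟨cell_mono (hσ.2 hs hsub) hxs, hpos⟩

theorem maximal_of_card_eq_three (h2 : K.IsTwoDimensional) {σ : Finset (Fin K.n)}
    (hσ : σ ∈ K.faces) (hcard : σ.card = 3) : Maximal (· ∈ K.faces) σ :=
  ⟨hσ, fun s hs hle => (Finset.eq_of_subset_of_card_le hle (hcard ▸ h2 s hs)).ge⟩

theorem nonempty_discChart_body
    (hdisc : Nonempty (K.realization ≃ₜ ↥(Metric.closedBall (0 : EuclideanSpace ℝ (Fin 2)) 1))) :
    Nonempty (DiscChart K.body) := by
  classical
  obtain ⟨Φ⟩ := hdisc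
  have hbody : {f | (∀ v, 0 ≤ f v) ∧ ∑ v, f v = 1 ∧ ∃ s ∈ K.faces, ∀ v, f v ≠ 0 → v ∈ s} =
      K.body := by
    ext f
    simp only [mem_body, cell, stdSimplex, mem_ofPred_eq, ne_eq, not_imp_comm]
    tauto
  let ι := Complex.orthonormalBasisOneI.repr
  exact DiscChart.nonempty_of_homeomorph <|
    (Homeomorph.setCongr hbody.symm).trans
      (Φ.trans (ι.toHomeomorph.subtype fun _ => by simp [ι]).symm)

theorem exists_forall_dist_le_norm_lt_one (e : DiscChart K.body) {q : Fin K.n → ℝ}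
    (hq : q ∈ K.body) (hqball : ‖e q‖ < 1) :
    ∃ t ∈ Ioo (0 : ℝ) 1, ∀ x ∈ K.body, dist x q ≤ t → ‖e x‖ < 1 := by
  obtain ⟨δ, hδ, hball⟩ := Metric.continuousOn_iff.1 e.continuousOn q hq _ (sub_pos.2 hqball)
  refine ⟨min (δ / 2) (1 / 2), ⟨by positivity, min_lt_of_right_lt (by norm_num)⟩,
    fun x hx hdist => ?_⟩
  have h := hball x hx (hdist.trans_lt ((min_le_left _ _).trans_lt (half_lt_self hδ)))
  rw [dist_eq_norm] at h
  linarith [norm_le_norm_add_norm_sub' (e x) (e q)]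

-- The boundary of the copy of `cell σ` shrunk towards `q` separates that copy from the rest of the
-- disc.
theorem not_hasLogOn_lineMap_cellBoundary (e : DiscChart K.body) {σ : Finset (Fin K.n)}
    (hσ : Maximal (· ∈ K.faces) σ) {q : Fin K.n → ℝ} (hq : q ∈ openCell σ) (hqball : ‖e q‖ < 1) :
    ∃ t ∈ Ioo (0 : ℝ) 1,
      ¬HasLogOn (fun x => e (AffineMap.lineMap q x t) - e q) (cellBoundary σ) := by
  have hqK := cell_subset_body hσ.1 hq.1
  obtain ⟨t, ht, hball⟩ := exists_forall_dist_le_norm_lt_one e hqK hqball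
  refine ⟨t, ht, fun hlog => ?_⟩
  let A := {x ∈ K.body | ∀ v ∈ σ, (1 - t) * q v ≤ x v}
  let B := {x ∈ K.body | ∃ v ∈ σ, x v ≤ (1 - t) * q v}
  have hA : IsClosed A := e.isCompact.isClosed.inter (isClosed_forall_mem_le σ _)
  have hB : IsClosed B := e.isCompact.isClosed.inter (isClosed_exists_mem_le σ _)
  have hAB : A ∪ B = K.body := by
    refine (union_subset (sep_subset _ _) (sep_subset _ _)).antisymm fun x hx => ?_
    by_cases h : ∀ v ∈ σ, (1 - t) * q v ≤ x v
    · exact .inl ⟨hx, h⟩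
    · push Not at h
      exact .inr ⟨hx, h.imp fun v hv => ⟨hv.1, hv.2.le⟩⟩
  have hqv : ∀ v ∈ σ, (1 - t) * q v < q v := fun v hv => by nlinarith [hq.2 v hv, ht.1]
  have hAσ : ∀ x ∈ A, x ∈ cell σ := fun x hx => (mem_openCell_of_maximal hσ hx.1 fun v hv =>
    (mul_pos (sub_pos.2 ht.2) (hq.2 v hv)).trans_le (hx.2 v hv)).1
  have hexpand : ∀ x ∈ A, AffineMap.lineMap q x t⁻¹ ∈ cell σ := fun x hx =>
    lineMap_inv_mem_cell hq.1 (hAσ x hx) ht.1 hx.2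
  have hshrink : ∀ x, AffineMap.lineMap q (AffineMap.lineMap q x t⁻¹) t = x := fun x => by
    rw [AffineMap.lineMap_lineMap_right, mul_inv_cancel₀ ht.1.ne', AffineMap.lineMap_apply_one]
  have hAball : ∀ x ∈ A, ‖e x‖ < 1 := fun x hx => by
    refine hball x hx.1 ?_
    rw [← hshrink x, dist_lineMap_left, Real.norm_of_nonneg ht.1.le]
    exact mul_le_of_le_one_right ht.1.le (dist_le_one_of_mem_cell hq.1 (hexpand x hx))
  refine e.not_hasLogOn_inter hA hB hAB hAball ⟨hqK, fun v hv => (hqv v hv).le⟩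
    (fun h => h.2.elim fun v hv => (hqv v hv.1).not_ge hv.2)
    ((hlog.comp (f := fun x => AffineMap.lineMap q x t⁻¹) (by fun_prop) ?_).congr
      fun x _ => by simp only [Function.comp_apply, hshrink])
  rintro x ⟨hxA, -, v, hv, hxv⟩
  refine ⟨hexpand x hxA, v, hv, ?_⟩
  simp only [AffineMap.pi_lineMap_apply]
  rw [AffineMap.lineMap_apply_ring', hxv.antisymm (hxA.2 v hv)]
  field_simp [ht.1.ne']
  ring

theorem not_hasLogOn_cellBoundary (e : DiscChart K.body) {σ : Finset (Fin K.n)}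
    (hσ : Maximal (· ∈ K.faces) σ) {p : Fin K.n → ℝ} (hp : p ∈ openCell σ) :
    ¬HasLogOn (fun x => e x - e p) (cellBoundary σ) := by
  obtain ⟨q, ⟨hqK, hqpos⟩, hqball⟩ :=
    e.exists_norm_lt_one (isOpen_forall_mem_pos σ) ⟨p, cell_subset_body hσ.1 hp.1, hp.2⟩
  have hq := mem_openCell_of_maximal hσ hqK hqpos
  obtain ⟨t, ht, hnot⟩ := not_hasLogOn_lineMap_cellBoundary e hσ hq hqball
  intro hlog
  refine hnot (HasLogOn.of_homotopy (R := openCell σ ×ˢ Ioc (0 : ℝ) 1)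
    (φ := fun (r : (Fin K.n → ℝ) × ℝ) x => e (AffineMap.lineMap r.1 x r.2) - e r.1)
    (t₀ := (p, 1)) (t₁ := (q, t)) ?_ ?_ ?_ (by simpa using hlog))
  · have hmaps : ∀ r ∈ (openCell σ ×ˢ Ioc (0 : ℝ) 1) ×ˢ cellBoundary σ,
        AffineMap.lineMap r.1.1 r.2 r.1.2 ∈ K.body := fun r hr =>
      cell_subset_body hσ.1 ((convex_cell σ).lineMap_mem hr.1.1.1 hr.2.1
        ⟨hr.1.2.1.le, hr.1.2.2⟩)
    refine (e.continuousOn.comp ?_ hmaps).sub (e.continuousOn.comp (by fun_prop) fun r hr =>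
      cell_subset_body hσ.1 hr.1.1.1)
    simp only [AffineMap.lineMap_apply_module']
    fun_prop
  · rintro ⟨r, c⟩ ⟨hr, hc⟩ x hx h
    have := e.injOn (cell_subset_body hσ.1 ((convex_cell σ).lineMap_mem hr.1 hx.1
        ⟨hc.1.le, hc.2⟩)) (cell_subset_body hσ.1 hr.1) (sub_eq_zero.1 h)
    rcases AffineMap.lineMap_eq_left_iff.1 this with rfl | h0
    · exact notMem_cellBoundary hr hx
    · exact hc.1.ne' h0
  · have hp1 : (p, (1 : ℝ)) ∈ openCell σ ×ˢ Ioc (0 : ℝ) 1 := mk_mem_prod hp (by simp)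
    exact (((convex_openCell σ).prod (convex_Ioc 0 1)).isPathConnected ⟨_, hp1⟩).joinedIn
      _ hp1 _ (mk_mem_prod hq (Ioo_subset_Ioc_self ht))

theorem card_ne_two_of_maximal (e : DiscChart K.body) {σ : Finset (Fin K.n)}
    (hσ : Maximal (· ∈ K.faces) σ) : σ.card ≠ 2 := by
  intro hcard
  obtain ⟨p, hp⟩ := openCell_nonempty (Finset.card_pos.1 (hcard ▸ two_pos))
  have hne : ∀ x ∈ cellBoundary σ, e x - e p ≠ 0 := fun x hx h =>
    notMem_cellBoundary hp (e.injOn (cell_subset_body hσ.1 hx.1) (cell_subset_body hσ.1 hp.1)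
      (sub_eq_zero.1 h) ▸ hx)
  have hcont : ContinuousOn (fun x => e x - e p) (cellBoundary σ) :=
    (e.continuousOn.mono (cellBoundary_subset_cell.trans (cell_subset_body hσ.1))).sub
      continuousOn_const
  obtain ⟨u, v, huv, rfl⟩ := Finset.card_eq_two.1 hcard
  have hunion : cellBoundary {u, v} = cell {u} ∪ cell {v} := by
    rw [cellBoundary_eq_biUnion, union_comm, ← Finset.erase_insert (Finset.notMem_singleton.2 huv)]
    simp [huv, Finset.erase_insert_of_ne]
  have hlog : ∀ w, cell {w} ⊆ cellBoundary {u, v} →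
      HasLogOn (fun x => e x - e p) (cell {w}) := fun w hw =>
    hasContinuousLogs_of_convex (convex_cell _) _ (hcont.mono hw) fun x hx => hne x (hw hx)
  refine not_hasLogOn_cellBoundary e hσ hp ?_
  rw [hunion] at hlog ⊢
  exact (hlog u subset_union_left).union (hlog v subset_union_right) (isClosed_cell _)
    (isClosed_cell _) (cell_inter {u} {v} ▸ (convex_cell _).isPreconnected)

theorem exists_card_eq_three (h2 : K.IsTwoDimensional) (e : DiscChart K.body)
    {s : Finset (Fin K.n)} (hs : s ∈ K.faces) (hcard : s.card = 2) :
    ∃ σ ∈ K.faces, s ⊆ σ ∧ σ.card = 3 := by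
  obtain ⟨σ, hsσ, hσ⟩ := K.faces.finite_toSet.exists_le_maximal hs
  refine ⟨σ, hσ.1, hsσ, ?_⟩
  have := card_ne_two_of_maximal e hσ
  have := h2 σ hσ.1
  have := Finset.card_le_card hsσ
  omega

theorem eq_of_forall_edge_eq {S : Set (Fin K.n → ℝ)} (hS : IsPreconnected S) (hSK : S ⊆ K.body)
    {V : Set (Fin K.n)} (hV : ∀ x ∈ S, ∃ w ∈ V, x w ≠ 0) {α : Type*} {g : Fin K.n → α}
    (hg : ∀ u ∈ V, ∀ w ∈ V, {u, w} ∈ K.faces → g u = g w) {a b : Fin K.n} (ha : a ∈ V)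
    (hb : b ∈ V) (haS : Pi.single a 1 ∈ S) (hbS : Pi.single b 1 ∈ S) : g a = g b := by
  by_contra hab
  have hopen : ∀ W : Set (Fin K.n), IsOpen {x : Fin K.n → ℝ | ∃ w ∈ W, x w ≠ 0} := fun W => by
    simp only [← exists_prop, ofPred_exists]
    exact isOpen_biUnion fun w _ => isOpen_ne_fun (continuous_apply w) continuous_const
  obtain ⟨x, hxS, ⟨u, ⟨hu, hua⟩, hxu⟩, ⟨w, ⟨hw, hwa⟩, hxw⟩⟩ := hS
    {x | ∃ w ∈ {w ∈ V | g w = g a}, x w ≠ 0} {x | ∃ w ∈ {w ∈ V | g w ≠ g a}, x w ≠ 0}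
    (hopen _) (hopen _) (fun x hx => by
      obtain ⟨w, hw, hxw⟩ := hV x hx
      by_cases h : g w = g a
      · exact .inl ⟨w, ⟨hw, h⟩, hxw⟩
      · exact .inr ⟨w, ⟨hw, h⟩, hxw⟩)
    ⟨_, haS, a, ⟨ha, rfl⟩, by simp⟩ ⟨_, hbS, b, ⟨hb, Ne.symm hab⟩, by simp⟩
  obtain ⟨t, ht, hxt⟩ := mem_body.1 (hSK hxS)
  have huw : {u, w} ⊆ t := by
    simp [Finset.insert_subset_iff, mem_of_mem_cell hxt hxu, mem_of_mem_cell hxt hxw]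
  exact hwa ((hg u hu w hw (mem_faces_of_subset ht huw (by simp))).symm.trans hua)

theorem single_mem_body {v : Fin K.n} (hv : {v} ∈ K.faces) : Pi.single v 1 ∈ K.body :=
  cell_subset_body hv (single_mem_cell (Finset.mem_singleton_self v))

theorem eq_of_isPreconnected_body (hK : IsPreconnected K.body) {α : Type*} {g : Fin K.n → α}
    (hg : ∀ u w, {u, w} ∈ K.faces → g u = g w) {a b : Fin K.n} (ha : {a} ∈ K.faces)
    (hb : {b} ∈ K.faces) : g a = g b := by
  refine eq_of_forall_edge_eq hK subset_rfl (V := univ) (fun x hx => ?_)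
    (fun u _ w _ => hg u w) (mem_univ _) (mem_univ _) (single_mem_body ha) (single_mem_body hb)
  by_contra! h
  have := (body_subset_stdSimplex hx).2
  simp_all

theorem eq_of_isPreconnected_body_diff {v : Fin K.n}
    (hK : IsPreconnected (K.body \ {Pi.single v 1})) {α : Type*} {g : Fin K.n → α}
    (hg : ∀ u ≠ v, ∀ w ≠ v, {u, w} ∈ K.faces → g u = g w) {a b : Fin K.n}
    (hav : a ≠ v) (hbv : b ≠ v) (ha : {a} ∈ K.faces) (hb : {b} ∈ K.faces) : g a = g b := by
  have hsingle : ∀ w ≠ v, (Pi.single w 1 : Fin K.n → ℝ) ∉ ({Pi.single v 1} : Set _) :=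
    fun w hw h => by simpa [hw] using congrFun h w
  refine eq_of_forall_edge_eq hK sdiff_subset (V := {v}ᶜ) (fun x hx => ?_)
    hg hav hbv ⟨single_mem_body ha, hsingle a hav⟩ ⟨single_mem_body hb, hsingle b hbv⟩
  by_contra! h
  have hx1 := (body_subset_stdSimplex hx.1).2
  rw [Finset.sum_eq_single v (fun w _ hw => h w hw) (by simp)] at hx1
  refine hx.2 (funext fun w => ?_)
  by_cases hw : w = v
  · rw [hw, hx1, Pi.single_eq_same]
  · rw [h w hw, Pi.single_eq_of_ne hw]

end SComplex

section Horn

variable {ι : Type*} [Fintype ι] [DecidableEq ι] {s : Finset ι} {w : ι}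

/-- The union of the facets of `cell (insert w s)` other than `cell s`. -/
def horn (s : Finset ι) (w : ι) : Set (ι → ℝ) := {x ∈ cell (insert w s) | ∃ v ∈ s, x v = 0}

theorem isClosed_horn : IsClosed (horn s w) := by
  have h : horn s w = cell (insert w s) ∩ {x | ∃ v ∈ s, x v ≤ 0} := by
    ext x
    exact and_congr_right fun hx => exists_congr fun v => and_congr_right fun _ =>
      ⟨le_of_eq, fun h => h.antisymm (hx.1.1 v)⟩
  exact h ▸ (isClosed_cell _).inter (isClosed_exists_mem_le s 0)

theorem isPreconnected_horn (hs : s.Nonempty) (hw : w ∉ s) : IsPreconnected (horn s w) := by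
  have hne : ∀ v ∈ s, v ≠ w := fun v hv => ne_of_mem_of_not_mem hv hw
  have hmem : Pi.single w 1 ∈ cell (insert w s) := single_mem_cell (Finset.mem_insert_self w s)
  have hstar : StarConvex ℝ (Pi.single w 1) (horn s w) := by
    rintro x ⟨hx, v, hv, hxv⟩ a b ha hb hab
    exact ⟨convex_cell _ hmem hx ha hb hab, v, hv, by simp [hxv, hne v hv]⟩
  obtain ⟨v, hv⟩ := hs
  exact (hstar.isPathConnected
    ⟨hmem, v, hv, Pi.single_eq_of_ne (hne v hv) _⟩).isConnected.isPreconnected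

theorem cellBoundary_insert_subset : cellBoundary (insert w s) ⊆ horn s w ∪ cell s := by
  rintro x ⟨hx, v, hv, hxv⟩
  rcases Finset.mem_insert.1 hv with rfl | hvs
  · refine .inr ⟨hx.1, fun u hu => ?_⟩
    by_cases huv : u = v
    · exact huv ▸ hxv
    · exact hx.2 u (by simp [huv, hu])
  · exact .inl ⟨hx, v, hvs, hxv⟩

end Horn

namespace SComplex

variable {K : SComplex}

theorem hasLogOn_sub_cell (e : DiscChart K.body) {s : Finset (Fin K.n)} (hs : s ∈ K.faces)
    {p : Fin K.n → ℝ} (hp : p ∈ K.body) (hps : p ∉ cell s) :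
    HasLogOn (fun x => e x - e p) (cell s) :=
  hasContinuousLogs_of_convex (convex_cell s) _
    ((e.continuousOn.mono (cell_subset_body hs)).sub continuousOn_const) fun _ hx h =>
      hps (e.injOn (cell_subset_body hs hx) hp (sub_eq_zero.1 h) ▸ hx)

theorem notMem_cell_insert {s : Finset (Fin K.n)} {a b : Fin K.n} (hb : b ∉ s) (hab : a ≠ b)
    {p : Fin K.n → ℝ} (hp : p ∈ openCell (insert b s)) : p ∉ cell (insert a s) := fun h => by
  have := mem_of_mem_cell h (hp.2 b (Finset.mem_insert_self b s)).ne'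
  simp [hab.symm, hb] at this

theorem hasLogOn_sub_horn_union (e : DiscChart K.body) {s : Finset (Fin K.n)} {a b c : Fin K.n}
    (ha : insert a s ∈ K.faces) (hb : insert b s ∈ K.faces) (hc : insert c s ∈ K.faces)
    (hbs : b ∉ s) (hab : a ≠ b) (hcb : c ≠ b) {p q : Fin K.n → ℝ}
    (hp : p ∈ openCell (insert a s)) (hq : q ∈ openCell (insert b s)) (hs : s.Nonempty) :
    HasLogOn (fun x => e x - e p) (horn s a ∪ horn s c) := by
  have hqK := cell_subset_body hb hq.1
  have hinter : IsPreconnected (cell (insert a s) ∩ cell (insert c s)) :=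
    cell_inter (insert a s) (insert c s) ▸ (convex_cell _).isPreconnected
  have hcells := (hasLogOn_sub_cell e ha hqK (notMem_cell_insert hbs hab hq)).union
    (hasLogOn_sub_cell e hc hqK (notMem_cell_insert hbs hcb hq)) (isClosed_cell _)
    (isClosed_cell _) hinter
  have hlog : HasLogOn (fun x => e x - e q) (horn s a ∪ horn s c) :=
    hcells.mono (union_subset_union (sep_subset _ _) (sep_subset _ _))
  let T : Fin K.n → Set (Fin K.n → ℝ) := fun w => {x ∈ cell (insert w s) | ∀ v ∈ s, 0 < x v}
  have hT : ∀ w, Convex ℝ (T w) := fun w =>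
    (convex_cell _).inter fun x hx y hy a b ha hb hab v hv =>
      convex_Ioi (0 : ℝ) (hx v hv) (hy v hv) ha hb hab
  have hpT : p ∈ T a := ⟨hp.1, fun v hv => hp.2 v (Finset.mem_insert_of_mem hv)⟩
  have hqT : q ∈ T b := ⟨hq.1, fun v hv => hq.2 v (Finset.mem_insert_of_mem hv)⟩
  obtain ⟨r, hr⟩ := openCell_nonempty hs
  have hrT : ∀ w, r ∈ T w := fun w => ⟨cell_mono (Finset.subset_insert w s) hr.1, hr.2⟩
  have hTK : T a ∪ T b ⊆ K.body := union_subset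
    ((sep_subset _ _).trans (cell_subset_body ha)) ((sep_subset _ _).trans (cell_subset_body hb))
  have hjoin : JoinedIn (T a ∪ T b) q p :=
    (((hT a).isPathConnected ⟨p, hpT⟩).union ((hT b).isPathConnected ⟨q, hqT⟩)
      ⟨r, hrT a, hrT b⟩).joinedIn q (.inr hqT) p (.inl hpT)
  have hhorn : horn s a ∪ horn s c ⊆ K.body := union_subset
    ((sep_subset _ _).trans (cell_subset_body ha)) ((sep_subset _ _).trans (cell_subset_body hc))
  refine HasLogOn.of_homotopy (φ := fun r x => e x - e r) ?_ (fun r hr x hx h => ?_) hjoin hlog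
  · exact (e.continuousOn.comp continuousOn_snd fun z hz => hhorn hz.2).sub
      (e.continuousOn.comp continuousOn_fst fun z hz => hTK hz.1)
  · obtain ⟨v, hv, hxv⟩ := hx.elim (·.2) (·.2)
    rw [e.injOn (hhorn hx) (hTK hr) (sub_eq_zero.1 h)] at hxv
    exact (hr.elim (·.2 v hv) (·.2 v hv)).ne' hxv

-- Three simplices on a common facet would form a theta-shaped configuration: moving a point from
-- the third simplex into the first across that facet never meets the outer faces of the first two,
-- so these outer faces could not wind around the point.
theorem eq_or_eq_or_eq_of_maximal_insert (e : DiscChart K.body) {s : Finset (Fin K.n)}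
    (hs : s.Nonempty) {a b c : Fin K.n} (ha : Maximal (· ∈ K.faces) (insert a s))
    (hb : insert b s ∈ K.faces) (hc : insert c s ∈ K.faces)
    (has : a ∉ s) (hbs : b ∉ s) (hcs : c ∉ s) : a = b ∨ c = b ∨ c = a := by
  by_contra! hne
  obtain ⟨p, hp⟩ := openCell_nonempty (Finset.insert_nonempty a s)
  obtain ⟨q, hq⟩ := openCell_nonempty (Finset.insert_nonempty b s)
  have hinter : (horn s a ∪ horn s c) ∩ cell (insert c s) = horn s c :=
    Subset.antisymm (fun x hx => ⟨hx.2, hx.1.elim (·.2) (·.2)⟩) fun x hx => ⟨.inr hx, hx.1⟩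
  have hlog : HasLogOn (fun x => e x - e p) (horn s a ∪ horn s c ∪ cell (insert c s)) :=
    (hasLogOn_sub_horn_union e ha.1 hb hc hbs hne.1 hne.2.1 hp hq hs).union
      (hasLogOn_sub_cell e hc (cell_subset_body ha.1 hp.1) (notMem_cell_insert has hne.2.2 hp))
      (isClosed_horn.union isClosed_horn) (isClosed_cell _)
      (by rw [hinter]; exact isPreconnected_horn hs hcs)
  refine not_hasLogOn_cellBoundary e ha hp (hlog.mono (cellBoundary_insert_subset.trans ?_))
  exact union_subset_union subset_union_left (cell_mono (Finset.subset_insert c s))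

/-- Simplicial integer `1`-cocycles, given by their values on all ordered pairs of vertices. -/
def IsCocycle (K : SComplex) (c : Fin K.n → Fin K.n → ℤ) : Prop :=
  ∀ u v w, {u, v, w} ∈ K.faces → c u v + c v w = c u w

/-- The affine function on the star of `a` whose value at each vertex `w` is `c a w`. -/
def cocycleSum (c : Fin K.n → Fin K.n → ℤ) (a : Fin K.n) (x : Fin K.n → ℝ) : ℂ :=
  ∑ w, (x w : ℂ) * c a w

variable {c : Fin K.n → Fin K.n → ℤ} {t : Finset (Fin K.n)} {a b u v : Fin K.n}
  {x : Fin K.n → ℝ}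

theorem IsCocycle.apply_self (hc : K.IsCocycle c) (hu : {u} ∈ K.faces) : c u u = 0 := by
  simpa using hc u u u (by simpa using hu)

@[fun_prop]
theorem continuous_cocycleSum : Continuous (cocycleSum c a) := by
  unfold cocycleSum
  fun_prop

@[simp]
theorem cocycleSum_single : cocycleSum c a (Pi.single u 1) = c a u := by
  rw [cocycleSum, Finset.sum_eq_single u (fun w _ hw => by simp [hw]) (by simp)]
  simp

theorem IsCocycle.cocycleSum_eq_add (hc : K.IsCocycle c) (ht : t ∈ K.faces) (hx : x ∈ cell t)
    (ha : a ∈ t) (hb : b ∈ t) : cocycleSum c a x = c a b + cocycleSum c b x := by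
  have hone : (∑ w, x w : ℂ) = 1 := by exact_mod_cast hx.1.2
  rw [cocycleSum, cocycleSum, ← one_mul (c a b : ℂ), ← hone, Finset.sum_mul,
    ← Finset.sum_add_distrib]
  refine Finset.sum_congr rfl fun w _ => ?_
  by_cases hw : w ∈ t
  · have h := hc a b w (mem_faces_of_subset ht (by simp [Finset.insert_subset_iff, *]) (by simp))
    rw [← h]
    push_cast
    ring
  · simp [hx.2 w hw]

theorem IsCocycle.exp_cocycleSum_eq (hc : K.IsCocycle c) (ht : t ∈ K.faces) (hx : x ∈ cell t)
    (ha : a ∈ t) (hb : b ∈ t) :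
    Complex.exp (2 * Real.pi * Complex.I * cocycleSum c a x) =
      Complex.exp (2 * Real.pi * Complex.I * cocycleSum c b x) := by
  rw [hc.cocycleSum_eq_add ht hx ha hb, mul_add, Complex.exp_add, mul_comm _ (c a b : ℂ),
    Complex.exp_int_mul_two_pi_mul_I, one_mul]

theorem exists_ne_zero_of_mem_cell (hx : x ∈ cell t) : ∃ a ∈ t, x a ≠ 0 := by
  obtain ⟨a, -, ha⟩ := Finset.exists_ne_zero_of_sum_ne_zero (hx.1.2.trans_ne one_ne_zero)
  exact ⟨a, mem_of_mem_cell hx ha, ha⟩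

theorem IsCocycle.exists_continuousOn_eq_exp (hc : K.IsCocycle c) :
    ∃ Φ : (Fin K.n → ℝ) → ℂ, ContinuousOn Φ K.body ∧ ∀ t ∈ K.faces, ∀ x ∈ cell t, ∀ a ∈ t,
      Φ x = Complex.exp (2 * Real.pi * Complex.I * cocycleSum c a x) := by
  have hex : ∀ x : Fin K.n → ℝ, ∃ z : ℂ, ∀ t ∈ K.faces, x ∈ cell t → ∀ a ∈ t,
      z = Complex.exp (2 * Real.pi * Complex.I * cocycleSum c a x) := fun x => by
    by_cases hx : x ∈ K.body
    · obtain ⟨t, -, hxt⟩ := mem_body.1 hx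
      obtain ⟨b, -, hxb⟩ := exists_ne_zero_of_mem_cell hxt
      exact ⟨_, fun s hs hxs a ha => hc.exp_cocycleSum_eq hs hxs (mem_of_mem_cell hxs hxb) ha⟩
    · exact ⟨0, fun t ht hxt => absurd (cell_subset_body ht hxt) hx⟩
  choose Φ hΦ using hex
  refine ⟨Φ, fun x hx => ?_, fun t ht x hx => hΦ x t ht hx⟩
  obtain ⟨t, ht, hxt⟩ := mem_body.1 hx
  obtain ⟨a, hat, hxa⟩ := exists_ne_zero_of_mem_cell hxt
  have hev : Φ =ᶠ[𝓝[K.body] x]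
      fun y => Complex.exp (2 * Real.pi * Complex.I * cocycleSum c a y) := by
    filter_upwards [nhdsWithin_le_nhds ((continuous_apply a).continuousAt.eventually_ne hxa),
      self_mem_nhdsWithin] with y hya hy
    obtain ⟨s, hs, hys⟩ := mem_body.1 hy
    exact hΦ y s hs hys a (mem_of_mem_cell hys hya)
  exact ContinuousWithinAt.congr_of_eventuallyEq
    (Continuous.continuousWithinAt (by fun_prop)) hev (hΦ x t ht hxt a hat)

-- The primitive is read off from the values at the vertices of a logarithm of the function with
-- values in `ℂˣ` glued from the exponentials of the affine functions `cocycleSum c a`.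
theorem IsCocycle.exists_primitive (hK : HasContinuousLogs K.body) (hc : K.IsCocycle c) :
    ∃ g : Fin K.n → ℤ, ∀ u v, {u, v} ∈ K.faces → g v - g u = c u v := by
  obtain ⟨Φ, hΦ, hΦexp⟩ := hc.exists_continuousOn_eq_exp
  obtain ⟨G, hG, hGexp⟩ := hK Φ hΦ fun x hx => by
    obtain ⟨t, ht, hxt⟩ := mem_body.1 hx
    obtain ⟨a, ha, -⟩ := exists_ne_zero_of_mem_cell hxt
    exact hΦexp t ht x hxt a ha ▸ Complex.exp_ne_zero _
  have hGexp : ∀ t ∈ K.faces, ∀ a ∈ t, ∀ x ∈ cell t,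
      Complex.exp (G x) = Complex.exp (2 * Real.pi * Complex.I * cocycleSum c a x) :=
    fun t ht a ha x hx => (hGexp x (cell_subset_body ht hx)).trans (hΦexp t ht x hx a ha)
  have hint : ∀ u, ∃ m : ℤ, {u} ∈ K.faces →
      G (Pi.single u 1) = m * (2 * Real.pi * Complex.I) := fun u => by
    by_cases hu : {u} ∈ K.faces
    · have hmem := Finset.mem_singleton_self u
      have h := hGexp _ hu u hmem _ (single_mem_cell hmem)
      rw [cocycleSum_single, hc.apply_self hu, Int.cast_zero, mul_zero, Complex.exp_zero] at h
      exact (Complex.exp_eq_one_iff.1 h).imp fun _ hm _ => hm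
    · exact ⟨0, fun h => absurd h hu⟩
  choose g hg using hint
  refine ⟨g, fun u v huv => ?_⟩
  have hmem : u ∈ ({u, v} : Finset _) ∧ v ∈ ({u, v} : Finset _) := by simp
  have hu : {u} ∈ K.faces := mem_faces_of_subset huv (by simp) (by simp)
  have hv : {v} ∈ K.faces := mem_faces_of_subset huv (by simp) (by simp)
  have h := sub_eq_sub_of_exp_eq_exp (convex_cell {u, v}).isPreconnected
    (hG.mono (cell_subset_body huv))
    (G := fun x => 2 * Real.pi * Complex.I * cocycleSum c u x) (by fun_prop)
    (hGexp _ huv u hmem.1) (single_mem_cell hmem.1) (single_mem_cell hmem.2)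
  rw [hg u hu, hg v hv, cocycleSum_single, cocycleSum_single, hc.apply_self hu, ← sub_mul,
    Int.cast_zero, mul_zero, sub_zero, mul_comm] at h
  exact_mod_cast mul_left_cancel₀ Complex.two_pi_I_ne_zero h

theorem eq_of_forall_link_eq (hK : HasContinuousLogs K.body)
    (hconn : IsPreconnected (K.body \ {Pi.single v 1})) {f : Fin K.n → ℤ}
    (hf : ∀ a b, a ≠ v → b ≠ v → {v, a, b} ∈ K.faces → f a = f b)
    (hav : a ≠ v) (hbv : b ≠ v) (ha : {v, a} ∈ K.faces) (hb : {v, b} ∈ K.faces) : f a = f b := by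
  have hcoc : K.IsCocycle fun x y =>
      if x = y then 0 else if x = v then f y else if y = v then -f x else 0 := by
    intro x y z hface
    have h1 : x = v → y ≠ v → z ≠ v → f y = f z := by
      rintro rfl hy hz
      exact hf y z hy hz hface
    have h2 : y = v → x ≠ v → z ≠ v → f x = f z := by
      rintro rfl hx hz
      exact hf x z hx hz (Finset.insert_comm x y {z} ▸ hface)
    have h3 : z = v → x ≠ v → y ≠ v → f x = f y := by
      rintro rfl hx hy
      exact hf x y hx hy (by rwa [Finset.insert_comm, Finset.pair_comm z])
    grind
  obtain ⟨g, hg⟩ := hcoc.exists_primitive hK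
  have hgab : g a = g b := by
    refine eq_of_isPreconnected_body_diff hconn (fun u hu w hw huw => ?_) hav hbv
      (mem_faces_of_subset ha (by simp) (by simp)) (mem_faces_of_subset hb (by simp) (by simp))
    have := hg u w huw
    simp only [hu, hw, if_false, ite_self] at this
    omega
  have hga := hg v a ha
  have hgb := hg v b hb
  simp only [hav.symm, hbv.symm, if_true, if_false] at hga hgb
  omega

end SComplex

section LogIncrement

variable {Y : Type*} [TopologicalSpace Y] {φ : Y → ℂ} {S T A B C : Set Y} {x y a b c : Y}

open Classical in
/-- The change `F y - F x` of a continuous logarithm `F` of `φ` on `S`; for preconnected `S` it does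
not depend on `F`. It is `0` if `φ` has no continuous logarithm on `S`. -/
noncomputable def logIncrement (φ : Y → ℂ) (S : Set Y) (x y : Y) : ℂ :=
  if h : HasLogOn φ S then h.choose y - h.choose x else 0

theorem logIncrement_eq_sub (hS : IsPreconnected S) {F : Y → ℂ} (hF : ContinuousOn F S)
    (hFexp : ∀ z ∈ S, Complex.exp (F z) = φ z) (hx : x ∈ S) (hy : y ∈ S) :
    logIncrement φ S x y = F y - F x := by
  have h : HasLogOn φ S := ⟨F, hF, hFexp⟩
  rw [logIncrement, dif_pos h]
  exact sub_eq_sub_of_exp_eq_exp hS h.choose_spec.1 hF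
    (fun z hz => (h.choose_spec.2 z hz).trans (hFexp z hz).symm) hx hy

theorem HasLogOn.exp_logIncrement (h : HasLogOn φ S) (hx : x ∈ S) (hy : y ∈ S) :
    Complex.exp (logIncrement φ S x y) = φ y / φ x := by
  rw [logIncrement, dif_pos h, Complex.exp_sub, h.choose_spec.2 x hx, h.choose_spec.2 y hy]

theorem HasLogOn.ne_zero (h : HasLogOn φ S) (hx : x ∈ S) : φ x ≠ 0 := by
  obtain ⟨F, -, hFexp⟩ := h
  exact hFexp x hx ▸ Complex.exp_ne_zero _

theorem hasLogOn_union_of_logIncrement_add (hAlog : HasLogOn φ A) (hBlog : HasLogOn φ B)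
    (hClog : HasLogOn φ C) (hA : IsClosed A) (hB : IsClosed B) (hC : IsClosed C)
    (hAconn : IsPreconnected A) (hBconn : IsPreconnected B) (hCconn : IsPreconnected C)
    (hAB : A ∩ B = {b}) (hAC : A ∩ C = {a}) (hBC : B ∩ C = {c})
    (hadd : logIncrement φ A a b + logIncrement φ B b c = logIncrement φ C a c) :
    HasLogOn φ (A ∪ B ∪ C) := by
  obtain ⟨F, hF, hFexp⟩ := hAlog.union hBlog hA hB (hAB ▸ isPreconnected_singleton)
  obtain ⟨G, hG, hGexp⟩ := hClog
  obtain ⟨haA, haC⟩ : a ∈ A ∩ C := hAC ▸ rfl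
  obtain ⟨hbA, hbB⟩ : b ∈ A ∩ B := hAB ▸ rfl
  obtain ⟨hcB, hcC⟩ : c ∈ B ∩ C := hBC ▸ rfl
  rw [
    logIncrement_eq_sub hAconn (hF.mono subset_union_left) (fun z hz => hFexp z (.inl hz)) haA hbA,
    logIncrement_eq_sub hBconn (hF.mono subset_union_right) (fun z hz => hFexp z (.inr hz)) hbB hcB,
    logIncrement_eq_sub hCconn hG hGexp haC hcC] at hadd
  refine hasLogOn_union_of_sub_eq_sub (hA.union hB) hC hF hFexp hG hGexp ?_
  rw [union_inter_distrib_right, hAC, hBC]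
  rintro x (rfl | rfl) y (rfl | rfl)
  · simp
  · linear_combination hadd
  · linear_combination -hadd
  · simp

end LogIncrement

section EdgeIncrement

variable {ι : Type*} [Fintype ι] [DecidableEq ι] {φ : (ι → ℝ) → ℂ} {a b c : ι}

/-- The change of a continuous logarithm of `φ` along the edge from vertex `u` to vertex `v`. -/
noncomputable def edgeIncrement (φ : (ι → ℝ) → ℂ) (u v : ι) : ℂ :=
  logIncrement φ (cell {u, v}) (Pi.single u 1) (Pi.single v 1)

theorem HasLogOn.edgeIncrement_add (h : HasLogOn φ (cell {a, b, c})) :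
    edgeIncrement φ a b + edgeIncrement φ b c = edgeIncrement φ a c := by
  obtain ⟨F, hF, hFexp⟩ := h
  have hsub : ∀ u v, ({u, v} : Finset ι) ⊆ {a, b, c} →
      edgeIncrement φ u v = F (Pi.single v 1) - F (Pi.single u 1) := fun u v huv =>
    logIncrement_eq_sub (convex_cell _).isPreconnected (hF.mono (cell_mono huv))
      (fun z hz => hFexp z (cell_mono huv hz)) (single_mem_cell (by simp))
      (single_mem_cell (by simp))
  rw [hsub a b (by grind), hsub b c (by grind), hsub a c (by grind)]
  ring

theorem cell_singleton (v : ι) : cell {v} = {Pi.single v 1} := by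
  refine Subset.antisymm (fun x hx => ?_)
    (singleton_subset_iff.2 (single_mem_cell (Finset.mem_singleton_self v)))
  have hv : x v = 1 := by
    rw [← hx.1.2, Finset.sum_eq_single v (fun w _ hw => hx.2 w (by simpa using hw)) (by simp)]
  ext w
  by_cases hw : w = v
  · simp [hw, hv]
  · simp [hw, hx.2 w (by simpa using hw)]

theorem hasLogOn_cellBoundary_of_edgeIncrement_add (hab : a ≠ b) (hac : a ≠ c) (hbc : b ≠ c)
    (hlog : ∀ u v, ({u, v} : Finset ι) ⊆ {a, b, c} → HasLogOn φ (cell {u, v}))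
    (hadd : edgeIncrement φ a b + edgeIncrement φ b c = edgeIncrement φ a c) :
    HasLogOn φ (cellBoundary {a, b, c}) := by
  have hinter : ∀ (s t : Finset ι) (v : ι), s ∩ t = {v} →
      cell s ∩ cell t = {Pi.single v 1} := fun s t v h => by
    rw [cell_inter, h, cell_singleton]
  refine (hasLogOn_union_of_logIncrement_add (hlog a b (by grind)) (hlog b c (by grind))
    (hlog a c (by grind)) (isClosed_cell _) (isClosed_cell _) (isClosed_cell _)
    (convex_cell _).isPreconnected (convex_cell _).isPreconnected (convex_cell _).isPreconnected
    (hinter _ _ b (by grind)) (hinter _ _ a (by grind)) (hinter _ _ c (by grind)) hadd).mono ?_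
  rw [cellBoundary_eq_biUnion]
  have hbc' : ({a, b, c} : Finset ι).erase a = {b, c} := by grind
  have hac' : ({a, b, c} : Finset ι).erase b = {a, c} := by grind
  have hab' : ({a, b, c} : Finset ι).erase c = {a, b} := by grind
  simp only [Finset.mem_insert, Finset.mem_singleton, iUnion_iUnion_eq_or_left,
    iUnion_iUnion_eq_left, hab', hac', hbc']
  grind

-- The integers `J u v` measure the failure of the principal logarithm to change continuously along
-- the edges.
theorem exists_int_forall_edgeIncrement_add_iff (φ : (ι → ℝ) → ℂ) : ∃ J : ι → ι → ℤ,
    ∀ a b c, (∀ u v, ({u, v} : Finset ι) ⊆ {a, b, c} → HasLogOn φ (cell {u, v})) →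
      (J a b + J b c = J a c ↔
        edgeIncrement φ a b + edgeIncrement φ b c = edgeIncrement φ a c) := by
  let ℓ : ι → ℂ := fun v => Complex.log (φ (Pi.single v 1))
  have hint : ∀ u v, ∃ j : ℤ, HasLogOn φ (cell {u, v}) →
      edgeIncrement φ u v = ℓ v - ℓ u + j * (2 * Real.pi * Complex.I) := fun u v => by
    by_cases h : HasLogOn φ (cell {u, v})
    · have hu : (Pi.single u 1 : ι → ℝ) ∈ cell {u, v} := single_mem_cell (by simp)
      have hv : (Pi.single v 1 : ι → ℝ) ∈ cell {u, v} := single_mem_cell (by simp)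
      have hexp : Complex.exp (edgeIncrement φ u v) = Complex.exp (ℓ v - ℓ u) := by
        rw [Complex.exp_sub, Complex.exp_log (h.ne_zero hu), Complex.exp_log (h.ne_zero hv)]
        exact h.exp_logIncrement hu hv
      exact (Complex.exp_eq_exp_iff_exists_int.1 hexp).imp fun _ hj _ => hj
    · exact ⟨0, fun h' => absurd h' h⟩
  choose J hJ using hint
  refine ⟨J, fun a b c hlog => ?_⟩
  rw [hJ a b (hlog a b (by grind)), hJ b c (hlog b c (by grind)), hJ a c (hlog a c (by grind)),
    ← Int.cast_inj (α := ℂ), Int.cast_add, ← mul_left_inj' Complex.two_pi_I_ne_zero]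
  constructor <;> intro h <;> linear_combination h

end EdgeIncrement

namespace SComplex

variable {K : SComplex}

-- The integers record the winding of the disc chart around an interior point of `σ`.
theorem exists_cochain_of_maximal (e : DiscChart K.body) {σ : Finset (Fin K.n)}
    (hσ : Maximal (· ∈ K.faces) σ) (hcard : σ.card = 3) :
    ∃ J : Fin K.n → Fin K.n → ℤ, ∀ a b c, {a, b, c} ∈ K.faces →
      (J a b + J b c = J a c ↔ {a, b, c} ≠ σ) := by
  obtain ⟨p, hp⟩ := openCell_nonempty (Finset.card_pos.1 (hcard ▸ three_pos))
  have hlog : ∀ s ∈ K.faces, s ≠ σ → HasLogOn (fun x => e x - e p) (cell s) := fun s hs hne =>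
    hasLogOn_sub_cell e hs (cell_subset_body hσ.1 hp.1) fun hps =>
      hne (hσ.eq_of_ge hs fun v hv => mem_of_mem_cell hps (hp.2 v hv).ne')
  have hedge : ∀ u v, {u, v} ∈ K.faces → HasLogOn (fun x => e x - e p) (cell {u, v}) :=
    fun u v huv => hlog _ huv fun h =>
      absurd (h ▸ Finset.card_le_two : σ.card ≤ 2) (by omega)
  obtain ⟨J, hJ⟩ := exists_int_forall_edgeIncrement_add_iff fun x => e x - e p
  refine ⟨J, fun a b c habc => ?_⟩
  have hlog₂ : ∀ u v, ({u, v} : Finset (Fin K.n)) ⊆ {a, b, c} →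
      HasLogOn (fun x => e x - e p) (cell {u, v}) := fun u v huv =>
    hedge u v (mem_faces_of_subset habc huv (by simp))
  rw [hJ a b c hlog₂]
  refine ⟨fun hadd h => ?_, fun hne => (hlog _ habc hne).edgeIncrement_add⟩
  obtain ⟨hab, hac, hbc⟩ := Finset.card_triple_eq_three_iff.1 (h ▸ hcard)
  exact not_hasLogOn_cellBoundary e hσ hp
    (h ▸ hasLogOn_cellBoundary_of_edgeIncrement_add hab hac hbc hlog₂ hadd)

end SComplex

section RankNullity

universe u

theorem finrank_range_add_finrank_ker_of_hasRankNullity {R N : Type*} {M : Type u} [Ring R]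
    [AddCommGroup M] [Module R M] [AddCommGroup N] [Module R N] [HasRankNullity.{u} R]
    [StrongRankCondition R] [Module.Finite R M] (f : M →ₗ[R] N) :
    Module.finrank R f.range + Module.finrank R f.ker = Module.finrank R M := by
  rw [← f.quotKerEquivRange.finrank_eq, Submodule.finrank_quotient_add_finrank]

theorem linearIndependent_of_apply_eq_zero_iff {κ R : Type*} [Finite κ] [Ring R] [NoZeroDivisors R]
    {v : κ → κ → R} (hv : ∀ i j, v i j = 0 ↔ j ≠ i) : LinearIndependent R v := by
  have := Fintype.ofFinite κ
  refine Fintype.linearIndependent_iff.2 fun g hg i => ?_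
  have h := congrFun hg i
  rw [Finset.sum_apply, Finset.sum_eq_single i (fun j _ hj => ?_) (by simp)] at h
  · exact (mul_eq_zero.1 h).resolve_right fun h' => (hv i i).1 h' rfl
  · rw [Pi.smul_apply, (hv j i).2 hj.symm, smul_zero]

end RankNullity

section OrderedVertices

variable {ι : Type*} [LinearOrder ι] {s : Finset ι}

theorem exists_lt_eq_pair_of_card_eq_two (hs : s.card = 2) : ∃ u v, u < v ∧ s = {u, v} := by
  obtain ⟨u, v, huv, rfl⟩ := Finset.card_eq_two.1 hs
  rcases huv.lt_or_gt with h | h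
  · exact ⟨u, v, h, rfl⟩
  · exact ⟨v, u, h, Finset.pair_comm u v⟩

theorem exists_lt_lt_eq_triple_of_card_eq_three (hs : s.card = 3) :
    ∃ a b c, a < b ∧ b < c ∧ s = {a, b, c} := by
  let f := s.orderEmbOfFin hs
  refine ⟨f 0, f 1, f 2, f.strictMono (by decide), f.strictMono (by decide), ?_⟩
  rw [← Finset.image_orderEmbOfFin_univ s hs]
  simp [f, Fin.univ_succ]

/-- The simplicial coboundary of a function of all finite sets of vertices, a set being oriented by
the order of its elements. -/
def alternatingFaceSum : (Finset ι → ℤ) →ₗ[ℤ] Finset ι → ℤ where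
  toFun f s := ∑ v ∈ s, (-1) ^ (s.filter (· < v)).card * f (s.erase v)
  map_add' f g := by
    ext s
    simp [mul_add, Finset.sum_add_distrib]
  map_smul' r f := by
    ext s
    simp [Finset.mul_sum, mul_left_comm]

theorem alternatingFaceSum_apply (f : Finset ι → ℤ) (s : Finset ι) : alternatingFaceSum f s =
    ∑ v ∈ s, (-1) ^ (s.filter (· < v)).card * f (s.erase v) := rfl

variable {a b c u v : ι}

theorem alternatingFaceSum_pair (huv : u < v) (f : Finset ι → ℤ) :
    alternatingFaceSum f {u, v} = f {v} - f {u} := by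
  have h₁ : ({u, v} : Finset ι).filter (· < u) = ∅ := by grind
  have h₂ : ({u, v} : Finset ι).filter (· < v) = {u} := by grind
  have h₃ : ({u, v} : Finset ι).erase u = {v} := by grind
  have h₄ : ({u, v} : Finset ι).erase v = {u} := by grind
  rw [alternatingFaceSum_apply, Finset.sum_pair huv.ne, h₁, h₂, h₃, h₄]
  simp [sub_eq_add_neg]

theorem alternatingFaceSum_triple (hab : a < b) (hbc : b < c) (f : Finset ι → ℤ) :
    alternatingFaceSum f {a, b, c} = f {b, c} - f {a, c} + f {a, b} := by
  have h₁ : ({a, b, c} : Finset ι).filter (· < a) = ∅ := by grind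
  have h₂ : ({a, b, c} : Finset ι).filter (· < b) = {a} := by grind
  have h₃ : ({a, b, c} : Finset ι).filter (· < c) = {a, b} := by grind
  have h₄ : ({a, b, c} : Finset ι).erase a = {b, c} := by grind
  have h₅ : ({a, b, c} : Finset ι).erase b = {a, c} := by grind
  have h₆ : ({a, b, c} : Finset ι).erase c = {a, b} := by grind
  rw [alternatingFaceSum_apply, Finset.sum_insert (by grind), Finset.sum_pair hbc.ne, h₁, h₂, h₃,
    h₄, h₅, h₆, Finset.card_pair hab.ne]
  simp
  ring

/-- The value on edges, oriented by the order of the vertices, of a function of pairs. -/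
def orientedEdgeValue (J : ι → ι → ℤ) (s : Finset ι) : ℤ :=
  ∑ p ∈ (s ×ˢ s).filter fun p => p.1 < p.2, J p.1 p.2

theorem orientedEdgeValue_pair (huv : u < v) (J : ι → ι → ℤ) :
    orientedEdgeValue J {u, v} = J u v := by
  have h : (({u, v} : Finset ι) ×ˢ {u, v}).filter (fun p => p.1 < p.2) = {(u, v)} := by
    ext ⟨x, y⟩
    grind
  rw [orientedEdgeValue, h, Finset.sum_singleton]

end OrderedVertices

namespace SComplex

variable {K : SComplex} {i : ℕ}

/-- The `i`-simplices of `K`. -/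
def simplices (K : SComplex) (i : ℕ) : Finset (Finset (Fin K.n)) :=
  K.faces.filter fun s => s.card = i + 1

/-- Integer simplicial `i`-cochains, a simplex being oriented by the order of its vertices. -/
abbrev Cochain (K : SComplex) (i : ℕ) : Type :=
  K.simplices i → ℤ

/-- The extension of cochains by zero to all finite sets of vertices. -/
noncomputable def extendZero (K : SComplex) (i : ℕ) : K.Cochain i →ₗ[ℤ] Finset (Fin K.n) → ℤ :=
  Function.ExtendByZero.linearMap ℤ Subtype.val

/-- The cochain given by the values of a function of finite sets of vertices. -/
def restrictCochain (K : SComplex) (i : ℕ) : (Finset (Fin K.n) → ℤ) →ₗ[ℤ] K.Cochain i :=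
  LinearMap.funLeft ℤ ℤ Subtype.val

/-- The simplicial coboundary. -/
noncomputable def coboundary (K : SComplex) (i : ℕ) : K.Cochain i →ₗ[ℤ] K.Cochain (i + 1) :=
  K.restrictCochain (i + 1) ∘ₗ alternatingFaceSum ∘ₗ K.extendZero i

variable {a b c u v : Fin K.n} {s : Finset (Fin K.n)}

theorem mem_simplices : s ∈ K.simplices i ↔ s ∈ K.faces ∧ s.card = i + 1 :=
  Finset.mem_filter

theorem extendZero_apply (x : K.Cochain i) (s : K.simplices i) : K.extendZero i x s = x s :=
  Subtype.val_injective.extend_apply x 0 s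

theorem extendZero_restrictCochain (f : Finset (Fin K.n) → ℤ) (hs : s ∈ K.simplices i) :
    K.extendZero i (K.restrictCochain i f) s = f s :=
  extendZero_apply _ ⟨s, hs⟩

theorem singleton_mem_simplices (hv : {v} ∈ K.faces) : {v} ∈ K.simplices 0 :=
  mem_simplices.2 ⟨hv, Finset.card_singleton v⟩

theorem pair_mem_simplices (huv : u < v) (h : {u, v} ∈ K.faces) : {u, v} ∈ K.simplices 1 :=
  mem_simplices.2 ⟨h, Finset.card_pair huv.ne⟩

theorem triple_mem_simplices (hab : a < b) (hbc : b < c) (h : {a, b, c} ∈ K.faces) :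
    {a, b, c} ∈ K.simplices 2 :=
  mem_simplices.2 ⟨h, Finset.card_triple_eq_three_iff.2 ⟨hab.ne, (hab.trans hbc).ne, hbc.ne⟩⟩

theorem cochain_zero_ext {x y : K.Cochain 0}
    (h : ∀ v, {v} ∈ K.faces → K.extendZero 0 x {v} = K.extendZero 0 y {v}) : x = y := by
  ext ⟨s, hs⟩
  obtain ⟨hsK, hcard⟩ := mem_simplices.1 hs
  obtain ⟨v, rfl⟩ := Finset.card_eq_one.1 hcard
  simpa only [extendZero_apply _ ⟨_, hs⟩] using h v hsK

theorem cochain_one_ext {x y : K.Cochain 1}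
    (h : ∀ u v, u < v → {u, v} ∈ K.faces → K.extendZero 1 x {u, v} = K.extendZero 1 y {u, v}) :
    x = y := by
  ext ⟨s, hs⟩
  obtain ⟨hsK, hcard⟩ := mem_simplices.1 hs
  obtain ⟨u, v, huv, rfl⟩ := exists_lt_eq_pair_of_card_eq_two hcard
  simpa only [extendZero_apply _ ⟨_, hs⟩] using h u v huv hsK

theorem extendZero_coboundary (x : K.Cochain i) (hs : s ∈ K.simplices (i + 1)) :
    K.extendZero (i + 1) (K.coboundary i x) s = alternatingFaceSum (K.extendZero i x) s :=
  extendZero_apply _ ⟨s, hs⟩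

theorem extendZero_coboundary_pair (x : K.Cochain 0) (huv : u < v) (h : {u, v} ∈ K.faces) :
    K.extendZero 1 (K.coboundary 0 x) {u, v} = K.extendZero 0 x {v} - K.extendZero 0 x {u} := by
  rw [extendZero_coboundary x (pair_mem_simplices huv h), alternatingFaceSum_pair huv]

theorem extendZero_coboundary_triple (x : K.Cochain 1) (hab : a < b) (hbc : b < c)
    (h : {a, b, c} ∈ K.faces) : K.extendZero 2 (K.coboundary 1 x) {a, b, c} =
      K.extendZero 1 x {b, c} - K.extendZero 1 x {a, c} + K.extendZero 1 x {a, b} := by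
  rw [extendZero_coboundary x (triple_mem_simplices hab hbc h), alternatingFaceSum_triple hab hbc]

theorem isCocycle_of_forall_lt {J : Fin K.n → Fin K.n → ℤ} (hanti : ∀ u v, J v u = -J u v)
    (hlt : ∀ a b c, a < b → b < c → {a, b, c} ∈ K.faces → J a b + J b c = J a c) :
    K.IsCocycle J := by
  intro u v w h
  have hperm : ∀ a b c, ({a, b, c} : Finset (Fin K.n)) = {u, v, w} → a < b → b < c →
      J a b + J b c = J a c := fun a b c heq hab hbc => hlt a b c hab hbc (heq ▸ h)
  have h₁ := hperm u v w rfl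
  have h₂ := hperm u w v (by grind)
  have h₃ := hperm v u w (by grind)
  have h₄ := hperm v w u (by grind)
  have h₅ := hperm w u v (by grind)
  have h₆ := hperm w v u (by grind)
  grind

theorem isCocycle_of_coboundary_eq_zero {x : K.Cochain 1} (hx : K.coboundary 1 x = 0) :
    K.IsCocycle fun u v => if u < v then K.extendZero 1 x {u, v}
      else if v < u then -K.extendZero 1 x {v, u} else 0 := by
  refine isCocycle_of_forall_lt (fun u v => ?_) fun a b c hab hbc habc => ?_
  · grind
  · have h := extendZero_coboundary_triple x hab hbc habc
    rw [hx, map_zero, Pi.zero_apply] at h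
    simp only [hab, hbc, hab.trans hbc, if_true]
    linarith

theorem extendZero_one_singleton {v : Fin K.n} (hv : {v} ∈ K.faces) :
    K.extendZero 0 1 {v} = 1 :=
  extendZero_apply 1 ⟨_, singleton_mem_simplices hv⟩

theorem ker_coboundary_zero (hK : IsPreconnected K.body) :
    (K.coboundary 0).ker = Submodule.span ℤ {1} := by
  refine le_antisymm (fun x hx => ?_) ?_
  · have hlt : ∀ u v, u < v → {u, v} ∈ K.faces →
        K.extendZero 0 x {u} = K.extendZero 0 x {v} := fun u v huv h => by
      have hpair := extendZero_coboundary_pair x huv h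
      rw [LinearMap.mem_ker.1 hx, map_zero, Pi.zero_apply] at hpair
      omega
    have hconst : ∀ u v, {u} ∈ K.faces → {v} ∈ K.faces →
        K.extendZero 0 x {u} = K.extendZero 0 x {v} := fun u v =>
      eq_of_isPreconnected_body hK (g := fun w => K.extendZero 0 x {w}) fun u v huv => by
        rcases lt_trichotomy u v with h | rfl | h
        · exact hlt u v h huv
        · rfl
        · exact (hlt v u h (Finset.pair_comm u v ▸ huv)).symm
    by_cases hne : ∃ u, {u} ∈ K.faces
    · obtain ⟨u, hu⟩ := hne
      refine Submodule.mem_span_singleton.2 ⟨K.extendZero 0 x {u}, cochain_zero_ext fun v hv => ?_⟩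
      rw [map_smul, Pi.smul_apply, extendZero_one_singleton hv, smul_eq_mul, mul_one,
        hconst u v hu hv]
    · rw [cochain_zero_ext (x := x) (y := 0) fun v hv => absurd ⟨v, hv⟩ hne]
      exact zero_mem _
  · rw [Submodule.span_singleton_le_iff_mem, LinearMap.mem_ker]
    refine cochain_one_ext fun u v huv h => ?_
    rw [extendZero_coboundary_pair _ huv h,
      extendZero_one_singleton (mem_faces_of_subset h (by simp) (by simp)),
      extendZero_one_singleton (mem_faces_of_subset h (by simp) (by simp)), map_zero]
    rfl

theorem range_coboundary_zero (hK : HasContinuousLogs K.body) :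
    (K.coboundary 0).range = (K.coboundary 1).ker := by
  refine le_antisymm ?_ fun x hx => ?_
  · rintro _ ⟨x, rfl⟩
    rw [LinearMap.mem_ker]
    ext ⟨s, hs⟩
    obtain ⟨hsK, hcard⟩ := mem_simplices.1 hs
    obtain ⟨a, b, c, hab, hbc, rfl⟩ := exists_lt_lt_eq_triple_of_card_eq_three hcard
    have hface : ∀ u v, ({u, v} : Finset (Fin K.n)) ⊆ {a, b, c} → {u, v} ∈ K.faces :=
      fun u v huv => mem_faces_of_subset hsK huv (by simp)
    rw [← extendZero_apply (K.coboundary 1 (K.coboundary 0 x)) ⟨_, hs⟩,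
      extendZero_coboundary_triple _ hab hbc hsK,
      extendZero_coboundary_pair x hbc (hface b c (by grind)),
      extendZero_coboundary_pair x (hab.trans hbc) (hface a c (by grind)),
      extendZero_coboundary_pair x hab (hface a b (by grind)), Pi.zero_apply]
    ring
  · obtain ⟨g, hg⟩ := (isCocycle_of_coboundary_eq_zero hx).exists_primitive hK
    refine ⟨K.restrictCochain 0 fun s => ∑ v ∈ s, g v, cochain_one_ext fun u v huv h => ?_⟩
    have hu : {u} ∈ K.faces := mem_faces_of_subset h (by simp) (by simp)
    have hv : {v} ∈ K.faces := mem_faces_of_subset h (by simp) (by simp)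
    rw [extendZero_coboundary_pair _ huv h,
      extendZero_restrictCochain _ (singleton_mem_simplices hv),
      extendZero_restrictCochain _ (singleton_mem_simplices hu), Finset.sum_singleton,
      Finset.sum_singleton, hg u v h, if_pos huv]

theorem exists_coboundary_eq_zero_iff (h2 : K.IsTwoDimensional) (e : DiscChart K.body)
    (σ : K.simplices 2) : ∃ x, ∀ s, K.coboundary 1 x s = 0 ↔ s ≠ σ := by
  obtain ⟨hσ, hcard⟩ := mem_simplices.1 σ.2
  obtain ⟨J, hJ⟩ := exists_cochain_of_maximal e (maximal_of_card_eq_three h2 hσ hcard) hcard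
  refine ⟨K.restrictCochain 1 (orientedEdgeValue J), fun ⟨s, hs⟩ => ?_⟩
  obtain ⟨hsK, hcard⟩ := mem_simplices.1 hs
  obtain ⟨a, b, c, hab, hbc, rfl⟩ := exists_lt_lt_eq_triple_of_card_eq_three hcard
  have hext : ∀ u v, u < v → ({u, v} : Finset (Fin K.n)) ⊆ {a, b, c} →
      K.extendZero 1 (K.restrictCochain 1 (orientedEdgeValue J)) {u, v} = J u v :=
    fun u v huv hsub => by
      have h := mem_faces_of_subset hsK hsub (by simp)
      rw [extendZero_restrictCochain _ (pair_mem_simplices huv h), orientedEdgeValue_pair huv]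
  rw [← extendZero_apply (K.coboundary 1 _) ⟨_, hs⟩, extendZero_coboundary_triple _ hab hbc hsK,
    hext b c hbc (by grind), hext a c (hab.trans hbc) (by grind), hext a b hab (by grind),
    Ne, Subtype.ext_iff, ← Ne, ← hJ a b c hsK]
  constructor <;> intro h <;> linarith

theorem finrank_range_coboundary_one (h2 : K.IsTwoDimensional) (e : DiscChart K.body) :
    Module.finrank ℤ (K.coboundary 1).range = K.count 2 := by
  have hcard : Fintype.card (K.simplices 2) = K.count 2 := Fintype.card_coe _
  refine le_antisymm ?_ ?_
  · refine (Submodule.finrank_le _).trans ?_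
    rw [Module.finrank_fintype_fun_eq_card, hcard]
  · choose x hx using exists_coboundary_eq_zero_iff h2 e
    have hind : LinearIndependent ℤ fun σ => (K.coboundary 1).rangeRestrict (x σ) :=
      (linearIndependent_of_apply_eq_zero_iff hx).of_comp (K.coboundary 1).range.subtype
    exact hcard ▸ hind.fintype_card_le_finrank

theorem finrank_ker_coboundary_zero (hK : IsPreconnected K.body) {v : Fin K.n}
    (hv : {v} ∈ K.faces) : Module.finrank ℤ (K.coboundary 0).ker = 1 := by
  have hne : (1 : K.Cochain 0) ≠ 0 := fun h =>
    one_ne_zero (congrFun h ⟨_, singleton_mem_simplices hv⟩)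
  have hind : LinearIndependent ℤ fun _ : Unit => (1 : K.Cochain 0) :=
    LinearIndependent.of_subsingleton () hne
  rw [ker_coboundary_zero hK, ← range_const (ι := Unit), finrank_span_eq_card hind,
    Fintype.card_unit]

theorem eulerSum_eq_one (h2 : K.IsTwoDimensional) (e : DiscChart K.body) : K.eulerSum = 1 := by
  obtain ⟨v, hv⟩ : ∃ v, {v} ∈ K.faces := by
    obtain ⟨s, hs, -⟩ := mem_body.1 (e.mapsTo_symm (Metric.mem_closedBall_self zero_le_one))
    obtain ⟨v, hv⟩ := nonempty_of_mem_faces hs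
    exact ⟨v, mem_faces_of_subset hs (by simpa using hv) (by simp)⟩
  have hcard : ∀ i, Module.finrank ℤ (K.Cochain i) = K.count i := fun i =>
    (Module.finrank_fintype_fun_eq_card ℤ).trans (Fintype.card_coe _)
  have h₀ : Module.finrank ℤ (K.coboundary 1).ker + 1 = K.count 0 := by
    have h := finrank_range_add_finrank_ker_of_hasRankNullity (K.coboundary 0)
    rwa [range_coboundary_zero e.hasContinuousLogs,
      finrank_ker_coboundary_zero e.isPreconnected hv, hcard] at h
  have h₁ : K.count 2 + Module.finrank ℤ (K.coboundary 1).ker = K.count 1 := by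
    have h := finrank_range_add_finrank_ker_of_hasRankNullity (K.coboundary 1)
    rwa [finrank_range_coboundary_one h2 e, hcard] at h
  rw [eulerSum]
  omega

end SComplex

theorem card_degree_eq_one_of_connected {V : Type*} [Fintype V] {G : SimpleGraph V}
    [DecidableRel G.Adj] (hG : G.Connected) (hdeg : ∀ v, G.degree v = 1 ∨ G.degree v = 2) :
    (Finset.univ.filter fun v => G.degree v = 1).card = 0 ∨
      (Finset.univ.filter fun v => G.degree v = 1).card = 2 := by
  classical
  have hsum : ∑ v, (G.degree v + if G.degree v = 1 then 1 else 0) = 2 * Fintype.card V := by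
    rw [Finset.sum_congr rfl (g := fun _ => 2) fun v _ => by rcases hdeg v with h | h <;> simp [h]]
    simp [mul_comm]
  rw [Finset.sum_add_distrib, G.sum_degrees_eq_twice_card_edges, ← Finset.card_filter] at hsum
  have hle := hG.card_vert_le_card_edgeSet_add_one
  rw [Nat.card_eq_fintype_card, Nat.card_eq_fintype_card, ← SimpleGraph.edgeFinset_card] at hle
  omega

namespace SComplex

variable {K : SComplex} {s : Finset (Fin K.n)} {v w : Fin K.n}

/-- The vertices `w ∉ s` that span a simplex together with `s`. -/
def apices (K : SComplex) (s : Finset (Fin K.n)) : Finset (Fin K.n) :=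
  Finset.univ.filter fun w => w ∉ s ∧ insert w s ∈ K.faces

theorem mem_apices : w ∈ K.apices s ↔ w ∉ s ∧ insert w s ∈ K.faces := by
  simp [apices]

theorem card_filter_supset_eq_card_apices {k : ℕ} (hcard : s.card = k) :
    (K.faces.filter fun t => t.card = k + 1 ∧ s ⊆ t).card = (K.apices s).card := by
  rw [← Finset.card_image_of_injOn (f := fun w => insert w s) (s := K.apices s) fun u hu w _ h =>
    (Finset.insert_inj (mem_apices.1 hu).1).1 h]
  congr 1
  ext t
  simp only [Finset.mem_filter, Finset.mem_image, mem_apices]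
  constructor
  · rintro ⟨ht, htcard, hst⟩
    obtain ⟨w, hw, rfl⟩ := Finset.exists_eq_insert_iff.2 ⟨hst, hcard.symm ▸ htcard.symm⟩
    exact ⟨w, ⟨hw, ht⟩, rfl⟩
  · rintro ⟨w, ⟨hw, hf⟩, rfl⟩
    exact ⟨hf, hcard ▸ Finset.card_insert_of_notMem hw, Finset.subset_insert w s⟩

theorem card_apices_eq_one_or_two (h2 : K.IsTwoDimensional) (e : DiscChart K.body)
    (hs : s ∈ K.faces) (hcard : s.card = 2) : (K.apices s).card = 1 ∨ (K.apices s).card = 2 := by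
  have hpos : 0 < (K.apices s).card := by
    obtain ⟨σ, hσ, hsσ, hσcard⟩ := exists_card_eq_three h2 e hs hcard
    rw [← card_filter_supset_eq_card_apices hcard]
    exact Finset.card_pos.2 ⟨σ, Finset.mem_filter.2 ⟨hσ, hσcard, hsσ⟩⟩
  have hle : (K.apices s).card ≤ 2 := by
    by_contra! hlt
    obtain ⟨a, b, c, ha, hb, hc, hab, hac, hbc⟩ := Finset.two_lt_card_iff.1 hlt
    rw [mem_apices] at ha hb hc
    have hmax := maximal_of_card_eq_three h2 ha.2 (by
      rw [Finset.card_insert_of_notMem ha.1, hcard])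
    rcases eq_or_eq_or_eq_of_maximal_insert e (nonempty_of_mem_faces hs) hmax hb.2 hc.2 ha.1 hb.1
      hc.1 with h | h | h
    exacts [hab h, hbc h.symm, hac h.symm]
  omega

/-- The graph underlying the link of the vertex `v`. -/
def link (K : SComplex) (v : Fin K.n) : SimpleGraph (K.apices {v}) where
  Adj u w := u ≠ w ∧ {v, u.1, w.1} ∈ K.faces
  symm := ⟨fun u w h => ⟨h.1.symm, Finset.pair_comm u.1 w.1 ▸ h.2⟩⟩
  loopless := ⟨fun _ h => h.1 rfl⟩

theorem mem_apices_singleton : w ∈ K.apices {v} ↔ w ≠ v ∧ {v, w} ∈ K.faces := by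
  rw [mem_apices, Finset.mem_singleton, Finset.pair_comm]

open Classical in
theorem preconnected_link (e : DiscChart K.body) (hv : {v} ∈ K.faces) :
    (K.link v).Preconnected := by
  intro a b
  have hf : ∀ c d, c ≠ v → d ≠ v → {v, c, d} ∈ K.faces →
      (∃ hc, (K.link v).Reachable a ⟨c, hc⟩) → ∃ hd, (K.link v).Reachable a ⟨d, hd⟩ := by
    rintro c d - hdv hcd ⟨hc, hac⟩
    have hd : d ∈ K.apices {v} :=
      mem_apices_singleton.2 ⟨hdv, mem_faces_of_subset hcd (by grind) (by simp)⟩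
    by_cases hne : c = d
    · exact ⟨hd, by simpa only [hne] using hac⟩
    · exact ⟨hd, hac.trans (SimpleGraph.Adj.reachable ⟨by simpa using hne, hcd⟩)⟩
  obtain ⟨hav, ha⟩ := mem_apices_singleton.1 a.2
  obtain ⟨hbv, hb⟩ := mem_apices_singleton.1 b.2
  have hab := eq_of_forall_link_eq e.hasContinuousLogs
    (e.isPreconnected_diff_singleton (single_mem_body hv))
    (f := fun c => if ∃ hc, (K.link v).Reachable a ⟨c, hc⟩ then 1 else 0)
    (fun c d hc hd hcd => if_congr ⟨hf c d hc hd hcd, hf d c hd hc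
      (Finset.pair_comm c d ▸ hcd)⟩ rfl rfl) hav hbv ha hb
  rw [if_pos ⟨a.2, SimpleGraph.Reachable.refl a⟩] at hab
  by_contra hnot
  rw [if_neg fun ⟨_, h⟩ => hnot h] at hab
  exact one_ne_zero hab

open Classical in
theorem degree_link (w : K.apices {v}) : (K.link v).degree w = (K.apices {v, w.1}).card := by
  rw [← SimpleGraph.card_neighborFinset_eq_degree,
    ← Finset.card_map (Function.Embedding.subtype _)]
  congr 1
  ext u
  simp only [Finset.mem_map, SimpleGraph.mem_neighborFinset, Function.Embedding.subtype_apply,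
    mem_apices]
  have hrot : insert u {v, w.1} = ({v, w.1, u} : Finset (Fin K.n)) := by grind
  constructor
  · rintro ⟨x, hx, rfl⟩
    have := (mem_apices_singleton.1 x.2).1
    exact ⟨by simpa [this] using fun h : x.1 = w.1 => hx.1 (Subtype.ext h.symm), hrot ▸ hx.2⟩
  · rintro ⟨hu, hf⟩
    rw [hrot] at hf
    rw [Finset.mem_insert, Finset.mem_singleton, not_or] at hu
    exact ⟨⟨u, mem_apices_singleton.2 ⟨hu.1, mem_faces_of_subset hf (by grind) (by simp)⟩⟩,
      ⟨fun h => hu.2 (congrArg Subtype.val h).symm, hf⟩, rfl⟩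

/-- The edges lying on exactly one triangle. -/
def boundaryEdges (K : SComplex) : Finset (Finset (Fin K.n)) :=
  K.faces.filter fun s => s.card = 2 ∧ (K.faces.filter fun t => t.card = 3 ∧ s ⊆ t).card = 1

theorem mem_boundaryEdges :
    s ∈ K.boundaryEdges ↔ s ∈ K.faces ∧ s.card = 2 ∧ (K.apices s).card = 1 := by
  rw [boundaryEdges, Finset.mem_filter]
  refine and_congr_right fun _ => and_congr_right fun hcard => ?_
  rw [← card_filter_supset_eq_card_apices hcard]

open Classical in
theorem card_boundaryEdges_mem_eq_card_degree_link_eq_one (v : Fin K.n) :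
    (K.boundaryEdges.filter (v ∈ ·)).card =
      (Finset.univ.filter fun w => (K.link v).degree w = 1).card := by
  symm
  refine Finset.card_bij (fun w _ => {v, w.1}) (fun w hw => ?_) (fun w _ u _ h => ?_)
    fun s hs => ?_
  · obtain ⟨hwv, hf⟩ := mem_apices_singleton.1 w.2
    rw [Finset.mem_filter, degree_link] at hw
    simp [mem_boundaryEdges, hf, Finset.card_pair hwv.symm, hw.2]
  · have hwv := (mem_apices_singleton.1 w.2).1
    have hw : w.1 ∈ ({v, u.1} : Finset (Fin K.n)) := h ▸ by simp
    exact Subtype.ext (by simpa [hwv] using hw)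
  · obtain ⟨hb, hvs⟩ := Finset.mem_filter.1 hs
    obtain ⟨hf, hcard, hone⟩ := mem_boundaryEdges.1 hb
    obtain ⟨w, hw⟩ := Finset.card_eq_one.1 ((Finset.card_erase_of_mem hvs).trans (by rw [hcard]))
    obtain rfl : {v, w} = s := by rw [← hw, Finset.insert_erase hvs]
    have hwv : w ≠ v := Finset.ne_of_mem_erase (hw ▸ Finset.mem_singleton_self w)
    exact ⟨⟨w, mem_apices_singleton.2 ⟨hwv, hf⟩⟩, by simpa [degree_link] using hone, rfl⟩

theorem card_boundaryEdges_mem (h2 : K.IsTwoDimensional) (e : DiscChart K.body) (v : Fin K.n) :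
    (K.boundaryEdges.filter (v ∈ ·)).card = 0 ∨ (K.boundaryEdges.filter (v ∈ ·)).card = 2 := by
  classical
  rw [card_boundaryEdges_mem_eq_card_degree_link_eq_one]
  rcases (K.apices {v}).eq_empty_or_nonempty with h | h
  · exact .inl (Finset.card_eq_zero.2 (by rw [Finset.filter_eq_empty_iff]; simp [h]))
  · obtain ⟨w, hw⟩ := h
    have hvw := (mem_apices_singleton.1 hw).2
    have := Finset.nonempty_coe_sort.2 ⟨w, hw⟩
    refine card_degree_eq_one_of_connected
      ⟨preconnected_link e (mem_faces_of_subset hvw (by simp) (by simp))⟩ fun w => ?_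
    obtain ⟨hwv, hf⟩ := mem_apices_singleton.1 w.2
    exact degree_link w ▸ card_apices_eq_one_or_two h2 e hf (Finset.card_pair hwv.symm)

/-- The endpoints of the boundary edges. -/
def boundaryVertices (K : SComplex) : Finset (Fin K.n) := K.boundaryEdges.biUnion id

theorem card_boundaryVertices (h2 : K.IsTwoDimensional) (e : DiscChart K.body) :
    K.boundaryVertices.card = K.boundaryEdges.card := by
  refine Nat.eq_of_mul_eq_mul_right two_pos ?_
  refine Finset.card_mul_eq_card_mul (fun v s => v ∈ s) (fun v hv => ?_) fun s hs => ?_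
  · obtain ⟨s, hs, hvs⟩ := Finset.mem_biUnion.1 hv
    exact (card_boundaryEdges_mem h2 e v).resolve_left
      (Finset.card_ne_zero_of_mem (Finset.mem_filter.2 ⟨hs, hvs⟩))
  · have hsub : s ⊆ K.boundaryVertices := Finset.subset_biUnion_of_mem id hs
    rw [← (mem_boundaryEdges.1 hs).2.1, Finset.bipartiteBelow, Finset.filter_mem_eq_inter,
      Finset.inter_eq_right.2 hsub]

/-- The boundary complex: the boundary edges and their endpoints. -/
def boundary (K : SComplex) : Finset (Finset (Fin K.n)) :=
  K.boundaryEdges ∪ K.boundaryVertices.image singleton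

theorem mem_boundary : s ∈ K.boundary ↔ s ∈ K.faces ∧
    ((s.card = 2 ∧ (K.faces.filter fun t => t.card = 3 ∧ s ⊆ t).card = 1) ∨
      (s.card = 1 ∧ ∃ e ∈ K.faces, e.card = 2 ∧ s ⊆ e ∧
        (K.faces.filter fun t => t.card = 3 ∧ e ⊆ t).card = 1)) := by
  simp only [boundary, boundaryVertices, Finset.mem_union, Finset.mem_image, Finset.mem_biUnion,
    boundaryEdges, Finset.mem_filter, id, and_or_left]
  refine or_congr_right ⟨?_, ?_⟩
  · rintro ⟨v, ⟨e, ⟨he, hcard, hone⟩, hve⟩, rfl⟩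
    have hsub := Finset.singleton_subset_iff.2 hve
    exact ⟨mem_faces_of_subset he hsub (by simp), by simp, e, he, hcard, hsub, hone⟩
  · rintro ⟨-, hs, e, he, hcard, hse, hone⟩
    obtain ⟨v, rfl⟩ := Finset.card_eq_one.1 hs
    exact ⟨v, ⟨e, ⟨he, hcard, hone⟩, Finset.singleton_subset_iff.1 hse⟩, rfl⟩

theorem boundary_subset_faces : K.boundary ⊆ K.faces := fun _ hs => (mem_boundary.1 hs).1

theorem filter_boundary_card_eq_one (K : SComplex) :
    (K.boundary.filter fun s => s.card = 1) = K.boundaryVertices.image singleton := by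
  have hedges : ∀ s ∈ K.boundaryEdges, s.card ≠ 1 := fun s hs => by
    simp [(mem_boundaryEdges.1 hs).2.1]
  rw [boundary, Finset.filter_union, Finset.filter_false_of_mem hedges,
    Finset.filter_true_of_mem (by simp), Finset.empty_union]

theorem filter_boundary_card_eq_two (K : SComplex) :
    (K.boundary.filter fun s => s.card = 2) = K.boundaryEdges := by
  have hedges : ∀ s ∈ K.boundaryEdges, s.card = 2 := fun s hs => (mem_boundaryEdges.1 hs).2.1
  rw [boundary, Finset.filter_union, Finset.filter_true_of_mem hedges,
    Finset.filter_false_of_mem (by simp), Finset.union_empty]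

theorem filter_boundary_card_eq_three (K : SComplex) :
    (K.boundary.filter fun s => s.card = 3) = ∅ :=
  Finset.filter_false_of_mem fun s hs => by
    rcases (mem_boundary.1 hs).2 with h | h <;> simp [h.1]

end SComplex

theorem card_image_add_card_of_subset {α β : Type*} [DecidableEq β] {S T : Finset α}
    (hTS : T ⊆ S) {f : α → β} (hf : ∀ s ∈ S, ∀ t ∈ S, f s = f t → s ≠ t → s ∈ T) :
    (S.image f).card + T.card = (T.image f).card + S.card := by
  classical
  have hdisj : Disjoint (T.image f) ((S \ T).image f) := by
    simp only [Finset.disjoint_left, Finset.mem_image, Finset.mem_sdiff]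
    rintro _ ⟨t, ht, rfl⟩ ⟨s, ⟨hs, hsT⟩, h⟩
    exact hsT (hf s hs t (hTS ht) h (ne_of_mem_of_not_mem ht hsT).symm)
  have hinj : InjOn f (S \ T : Finset α) := fun s hs t ht h => by
    rw [Finset.mem_coe, Finset.mem_sdiff] at hs ht
    exact not_imp_comm.1 (hf s hs.1 t ht.1 h) hs.2
  have himage : (S.image f).card = (T.image f).card + (S \ T).card := by
    rw [← Finset.card_image_of_injOn hinj, ← Finset.card_union_of_disjoint hdisj,
      ← Finset.image_union, Finset.union_sdiff_of_subset hTS]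
  rw [himage, add_assoc, Finset.card_sdiff_add_card_eq_card hTS]

theorem identCount_add_card_filter {n m : ℕ} {S T : Finset (Finset (Fin n))} (hTS : T ⊆ S)
    {π : Fin n → Fin m}
    (hπ : ∀ s ∈ S, ∀ t ∈ S, s.image π = t.image π → s ≠ t → s ∈ T) (i : ℕ) :
    identCount S π i + (T.filter fun s => s.card = i + 1).card =
      identCount T π i + (S.filter fun s => s.card = i + 1).card :=
  card_image_add_card_of_subset (Finset.filter_subset_filter _ hTS) fun s hs t ht h hne => by
    rw [Finset.mem_filter] at hs ht ⊢
    exact ⟨hπ s hs.1 t ht.1 h hne, hs.2⟩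

-- `identCount` sorts simplices by their dimension before identification, so an edge whose endpoints
-- are identified counts as a loop.
theorem euler_of_triangulated_polygon_with_identifications_general
    (K : SComplex) (h2 : K.IsTwoDimensional)
    (hdisc : Nonempty (K.realization ≃ₜ
      Metric.closedBall (0 : EuclideanSpace ℝ (Fin 2)) 1))
    {m : ℕ} (π : Fin K.n → Fin m)
    (hπ : ∀ s ∈ K.faces, ∀ t ∈ K.faces, s.image π = t.image π → s ≠ t → s ∈ K.boundary) :
    (identCount K.faces π 0 : ℤ) - identCount K.faces π 1 + identCount K.faces π 2
      = (identCount K.boundary π 0 - identCount K.boundary π 1) + 1 := by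
  obtain ⟨e⟩ := SComplex.nonempty_discChart_body hdisc
  have hcount := identCount_add_card_filter SComplex.boundary_subset_faces hπ
  have hvertices := hcount 0
  have hedges := hcount 1
  have htriangles := hcount 2
  rw [SComplex.filter_boundary_card_eq_one,
    Finset.card_image_of_injective _ Finset.singleton_injective,
    SComplex.card_boundaryVertices h2 e] at hvertices
  rw [SComplex.filter_boundary_card_eq_two] at hedges
  have hempty : identCount K.boundary π 2 = 0 := by
    rw [identCount, SComplex.filter_boundary_card_eq_three, Finset.image_empty, Finset.card_empty]
  rw [hempty, SComplex.filter_boundary_card_eq_three, Finset.card_empty] at htriangles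
  have heuler := SComplex.eulerSum_eq_one h2 e
  rw [SComplex.eulerSum, SComplex.count, SComplex.count, SComplex.count] at heuler
  omega

/-- **Theorem 3 (main theorem).** Let `K` be a finite triangulated polygon in the plane,
i.e. a finite `2`-dimensional simplicial complex whose geometric realization is
homeomorphic to a closed disc, and let `K₀` be its boundary (the edges lying on exactly
one triangle, together with their vertices).  Suppose the vertices are identified via a
map `π` which is injective on each simplex, identifies only boundary vertices, and
identifies only boundary simplices.  Then, counting simplices after identification,
`χ(K) = χ(K₀) + 1`, i.e. `n₀ - n₁ + n₂ = (n₀(K₀) - n₁(K₀)) + 1`. -/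
theorem euler_of_triangulated_polygon_with_identifications
    (K : SComplex) (h2 : K.IsTwoDimensional)
    (hdisc : Nonempty (K.realization ≃ₜ
      ↥(Metric.closedBall (0 : EuclideanSpace ℝ (Fin 2)) 1)))
    (K₀ : Finset (Finset (Fin K.n)))
    (hK₀ : ∀ t, t ∈ K₀ ↔ t ∈ K.faces ∧
        ((t.card = 2 ∧ (K.faces.filter fun s => s.card = 3 ∧ t ⊆ s).card = 1) ∨
         (t.card = 1 ∧ ∃ e ∈ K.faces, e.card = 2 ∧ t ⊆ e ∧
            (K.faces.filter fun s => s.card = 3 ∧ e ⊆ s).card = 1)))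
    (m : ℕ) (π : Fin K.n → Fin m)
    (hπinj : ∀ s ∈ K.faces, Set.InjOn π ↑s)
    (hπbd : ∀ u v : Fin K.n, π u = π v → u ≠ v → {u} ∈ K₀ ∧ {v} ∈ K₀)
    (hπfaces : ∀ s ∈ K.faces, ∀ t ∈ K.faces,
      s.image π = t.image π → s ≠ t → s ∈ K₀ ∧ t ∈ K₀) :
    (identCount K.faces π 0 : ℤ) - identCount K.faces π 1 + identCount K.faces π 2
      = ((identCount K₀ π 0 : ℤ) - identCount K₀ π 1) + 1 := by
  obtain rfl : K₀ = K.boundary := Finset.ext fun t => (hK₀ t).trans SComplex.mem_boundary.symm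
  exact euler_of_triangulated_polygon_with_identifications_general K h2 hdisc π
    fun s hs t ht h hne => (hπfaces s hs t ht h hne).1
end

section
/- Subdividing a triangle σ of a 2-dimensional triangulation K by a segment τ = (x,y), where x and y lie on two different sides of σ (subdividing also the adjacent triangles sharing those sides so the result K' is again a simplicial complex), leaves the quantity n0 - n1 + n2 unchanged: it is the same for K and K'. -/
open Geometry
open scoped Classical

/-!
The segment is inserted by two stellar subdivisions, at `x` and then at `y`. The stellar subdivision
of `K` at an interior point `x` of a face `F` keeps the simplices not containing `F` and replaces
each `t ⊇ F` by the simplices `insert x (t \ F ∪ r)` with `r ⊂ F`. In barycentric coordinates one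
passes from the new simplices to the old ones by substituting for `x` its expression in the vertices
of `F`, and back by moving as much weight as possible from `F` to `x`.

Send each new simplex to the smallest old simplex containing it. Since the alternating sum of
`(-1) ^ r.card` over all `r ⊆ F` vanishes, the fibre over an old simplex `t` contributes exactly
`(-1) ^ dim t`, so the Euler characteristic does not change.
-/

section BarycentricCoordinates

theorem affineIndependent_iff_linearIndependent_prodMk {ι k V : Type*} [Ring k] [AddCommGroup V]
    [Module k V] {p : ι → V} :
    AffineIndependent k p ↔ LinearIndependent k fun i => ((1 : k), p i) := by
  simp [affineIndependent_iff, linearIndependent_iff', Prod.ext_iff, Prod.fst_sum, Prod.snd_sum]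

section Ring

variable {𝕜 E : Type*} [Ring 𝕜] [AddCommGroup E] [Module 𝕜 E]

/-- The homogenization `(∑ v, w v, ∑ v, w v • v)` of a formal combination `w` of points. Placing
the points at height one turns affine relations between them into linear ones. -/
noncomputable def homogenization : (E →₀ 𝕜) →ₗ[𝕜] 𝕜 × E :=
  Finsupp.linearCombination 𝕜 fun v => (1, v)

theorem homogenization_single (v : E) (c : 𝕜) :
    homogenization (Finsupp.single v c) = (c, c • v) := by
  simp [homogenization]

theorem affineIndependent_coe_iff_homogenization {s : Set E} :
    AffineIndependent 𝕜 ((↑) : s → E) ↔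
      ∀ w ∈ Finsupp.supported 𝕜 𝕜 s, homogenization w = 0 → w = 0 :=
  affineIndependent_iff_linearIndependent_prodMk.trans linearIndepOn_iff

/-- `w` is a system of barycentric coordinates, with respect to the vertices `s`, of the point `p`
of the convex hull of `s`. -/
structure IsBarycentric [PartialOrder 𝕜] (s : Finset E) (w : E →₀ 𝕜) (p : E) : Prop where
  nonneg : 0 ≤ w
  mem_supported : w ∈ Finsupp.supported 𝕜 𝕜 (s : Set E)
  homogenization_eq : homogenization w = (1, p)

theorem IsBarycentric.mono [PartialOrder 𝕜] {s t : Finset E} {w : E →₀ 𝕜} {p : E}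
    (hw : IsBarycentric s w p) (hst : s ⊆ t) : IsBarycentric t w p :=
  ⟨hw.nonneg, Finsupp.supported_mono (Finset.coe_subset.2 hst) hw.mem_supported,
    hw.homogenization_eq⟩

theorem IsBarycentric.eq_of_affineIndependent [PartialOrder 𝕜] {s : Finset E} {w u : E →₀ 𝕜}
    {p : E} (hw : IsBarycentric s w p) (hs : AffineIndependent 𝕜 ((↑) : s → E))
    (hu : IsBarycentric s u p) : w = u :=
  sub_eq_zero.1 <| affineIndependent_coe_iff_homogenization.1 hs _
    (sub_mem hw.mem_supported hu.mem_supported)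
    (by rw [map_sub, hw.homogenization_eq, hu.homogenization_eq, sub_self])

end Ring

variable {𝕜 E : Type*} [Field 𝕜] [LinearOrder 𝕜] [IsStrictOrderedRing 𝕜] [AddCommGroup E]
  [Module 𝕜 E]

theorem mem_convexHull_iff_exists_isBarycentric {s : Finset E} {p : E} :
    p ∈ convexHull 𝕜 (s : Set E) ↔ ∃ w : E →₀ 𝕜, IsBarycentric s w p := by
  rw [Finset.mem_convexHull']
  constructor
  · rintro ⟨w, hw, hsum, hp⟩
    refine ⟨∑ v ∈ s, Finsupp.single v (w v), ?_, ?_, ?_⟩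
    · exact Finset.sum_nonneg fun v hv => Finsupp.single_nonneg.2 (hw v hv)
    · exact Submodule.sum_mem _ fun v hv => Finsupp.single_mem_supported 𝕜 _ hv
    · simp [homogenization_single, Prod.ext_iff, Prod.fst_sum, Prod.snd_sum, hsum, hp]
  · rintro ⟨w, hw⟩
    have h := hw.homogenization_eq
    rw [homogenization, Finsupp.linearCombination_apply_of_mem_supported 𝕜 hw.mem_supported] at h
    simp only [Prod.smul_mk, smul_eq_mul, mul_one, Prod.ext_iff, Prod.fst_sum, Prod.snd_sum] at h
    exact ⟨w, fun v _ => hw.nonneg v, h.1, h.2⟩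

theorem IsBarycentric.eq_of_mem_faces {K : SimplicialComplex 𝕜 E} {s t : Finset E}
    {w u : E →₀ 𝕜} {p : E} (hw : IsBarycentric s w p) (hu : IsBarycentric t u p)
    (hs : s ∈ K.faces) (ht : t ∈ K.faces) : w = u := by
  have hp := K.inter_subset_convexHull hs ht
    ⟨mem_convexHull_iff_exists_isBarycentric.2 ⟨w, hw⟩,
      mem_convexHull_iff_exists_isBarycentric.2 ⟨u, hu⟩⟩
  rw [← Finset.coe_inter] at hp
  obtain ⟨z, hz⟩ := mem_convexHull_iff_exists_isBarycentric.1 hp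
  exact (hw.eq_of_affineIndependent (K.indep hs) (hz.mono Finset.inter_subset_left)).trans
    (hu.eq_of_affineIndependent (K.indep ht) (hz.mono Finset.inter_subset_right)).symm

end BarycentricCoordinates

section Carrier

variable {E : Type*} [DecidableEq E] {F s t : Finset E} {x : E}

/-- The smallest simplex of a complex containing the simplex `s` of its stellar subdivision at a new
vertex `x` in the interior of the simplex `F`. -/
def stellarCarrier (F : Finset E) (x : E) (s : Finset E) : Finset E :=
  if x ∈ s then s.erase x ∪ F else s

theorem stellarCarrier_of_mem (hx : x ∈ s) : stellarCarrier F x s = s.erase x ∪ F :=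
  if_pos hx

theorem stellarCarrier_of_notMem (hx : x ∉ s) : stellarCarrier F x s = s :=
  if_neg hx

theorem stellarCarrier_mono (hst : s ⊆ t) : stellarCarrier F x s ⊆ stellarCarrier F x t := by
  unfold stellarCarrier
  grind

theorem subset_insert_stellarCarrier : s ⊆ insert x (stellarCarrier F x s) := by
  unfold stellarCarrier
  grind

theorem stellarCarrier_nonempty (hF : F.Nonempty) (hs : s.Nonempty) :
    (stellarCarrier F x s).Nonempty := by
  unfold stellarCarrier
  split_ifs
  exacts [hF.inr, hs]

theorem stellarCarrier_insert_erase {a : E} (hFs : F ⊆ s) (hx : x ∉ s) (ha : a ∈ F) :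
    stellarCarrier F x (insert x (s.erase a)) = s := by
  unfold stellarCarrier
  grind

theorem stellarCarrier_eq_iff_of_not_subset (hFt : ¬F ⊆ t) (hx : x ∉ t) :
    stellarCarrier F x s = t ↔ s = t := by
  unfold stellarCarrier
  grind

theorem stellarCarrier_eq_iff_of_subset (hFt : F ⊆ t) (hx : x ∉ t) :
    ¬F ⊆ s ∧ stellarCarrier F x s = t ↔ ∃ r, r ⊂ F ∧ insert x (t \ F ∪ r) = s := by
  constructor
  · rintro ⟨hFs, hst⟩
    have hxs : x ∈ s := by
      by_contra hxs
      rw [stellarCarrier_of_notMem hxs] at hst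
      exact hFs (hst ▸ hFt)
    rw [stellarCarrier_of_mem hxs] at hst
    exact ⟨s ∩ F, by grind, by grind⟩
  · rintro ⟨r, hr, rfl⟩
    unfold stellarCarrier
    grind

theorem injOn_insert_sdiff_union (hx : x ∉ F) :
    Set.InjOn (fun r => insert x (t \ F ∪ r)) (F.ssubsets : Set (Finset E)) := by
  have hinter : ∀ r ∈ F.ssubsets, insert x (t \ F ∪ r) ∩ F = r := by
    simp only [Finset.mem_ssubsets]
    grind
  intro r hr r' hr' heq
  rw [← hinter r hr, ← hinter r' hr']
  exact congrArg (· ∩ F) heq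

theorem sum_ssubsets_neg_one_pow_card (hF : F.Nonempty) :
    ∑ r ∈ F.ssubsets, (-1 : ℤ) ^ r.card = -(-1) ^ F.card := by
  rw [Finset.ssubsets, Finset.sum_erase_eq_sub (Finset.mem_powerset_self F),
    Finset.sum_powerset_neg_one_pow_card_of_nonempty hF, zero_sub]

theorem sum_ssubsets_neg_one_pow_card_insert (hF : F.Nonempty) (hFt : F ⊆ t) (hx : x ∉ t) :
    ∑ r ∈ F.ssubsets, (-1 : ℤ) ^ ((insert x (t \ F ∪ r)).card + 1) = (-1) ^ (t.card + 1) := by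
  have hcard : ∀ r ∈ F.ssubsets, (insert x (t \ F ∪ r)).card = (t \ F).card + r.card + 1 := by
    intro r hr
    have hrF : r ⊆ F := (Finset.mem_ssubsets.1 hr).subset
    rw [Finset.card_insert_of_notMem (by grind),
      Finset.card_union_of_disjoint (Finset.sdiff_disjoint.mono_right hrF)]
  calc ∑ r ∈ F.ssubsets, (-1 : ℤ) ^ ((insert x (t \ F ∪ r)).card + 1)
      = ∑ r ∈ F.ssubsets, (-1) ^ (t \ F).card * (-1 : ℤ) ^ r.card :=
        Finset.sum_congr rfl fun r hr => by rw [hcard r hr]; ring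
    _ = (-1) ^ ((t \ F).card + F.card + 1) := by
        rw [← Finset.mul_sum, sum_ssubsets_neg_one_pow_card hF]; ring
    _ = (-1) ^ (t.card + 1) := by rw [Finset.card_sdiff_add_card_eq_card hFt]

end Carrier

section SubstVertex

variable {𝕜 E : Type*}

/-- The formal combination obtained from `w` by substituting for the point `x` the combination
`c` that represents it. -/
noncomputable def substVertex [Semiring 𝕜] (x : E) (c w : E →₀ 𝕜) : E →₀ 𝕜 :=
  w.erase x + w x • c

theorem substVertex_apply_of_ne [Semiring 𝕜] {x v : E} {c w : E →₀ 𝕜} (hv : v ≠ x) :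
    substVertex x c w v = w v + w x * c v := by
  simp [substVertex, Finsupp.erase_ne hv]

theorem eq_of_substVertex_eq [Ring 𝕜] {x : E} {c w u : E →₀ 𝕜}
    (h : substVertex x c w = substVertex x c u) (hx : w x = u x) : w = u := by
  have herase : w.erase x = u.erase x :=
    add_right_cancel (b := w x • c) (by simpa [substVertex, hx] using h)
  rw [← Finsupp.single_add_erase x w, ← Finsupp.single_add_erase x u, herase, hx]

theorem substVertex_mem_supported [Semiring 𝕜] [DecidableEq E] {F s : Finset E} {x : E}
    {c w : E →₀ 𝕜} (hc : c ∈ Finsupp.supported 𝕜 𝕜 (F : Set E))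
    (hw : w ∈ Finsupp.supported 𝕜 𝕜 (s : Set E)) :
    substVertex x c w ∈ Finsupp.supported 𝕜 𝕜 (stellarCarrier F x s : Set E) := by
  rw [Finsupp.mem_supported'] at hc hw ⊢
  simp only [Finset.mem_coe] at hc hw ⊢
  by_cases hxs : x ∈ s
  · rw [stellarCarrier_of_mem hxs]
    intro v hv
    have hcv : c v = 0 := hc v fun hvF => hv (Finset.mem_union_right _ hvF)
    rcases eq_or_ne v x with rfl | hvx
    · simp [substVertex, hcv]
    · have hwv : w v = 0 := hw v fun hvs => hv (Finset.mem_union_left _ (by simp [hvx, hvs]))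
      simp [substVertex_apply_of_ne hvx, hwv, hcv]
  · rw [stellarCarrier_of_notMem hxs, substVertex, hw x hxs, zero_smul, add_zero,
      Finsupp.erase_of_notMem_support (Finsupp.notMem_support_iff.2 (hw x hxs))]
    exact hw

theorem homogenization_substVertex [Ring 𝕜] [AddCommGroup E] [Module 𝕜 E] {x : E} {c : E →₀ 𝕜}
    (hc : homogenization c = (1, x)) (w : E →₀ 𝕜) :
    homogenization (substVertex x c w) = homogenization w := by
  conv_rhs => rw [← Finsupp.erase_add_single x w]
  simp [substVertex, hc, homogenization_single]

theorem IsBarycentric.substVertex [Ring 𝕜] [PartialOrder 𝕜] [IsOrderedRing 𝕜] [AddCommGroup E]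
    [Module 𝕜 E] [DecidableEq E] {F s : Finset E} {x p : E} {c w : E →₀ 𝕜}
    (hw : IsBarycentric s w p) (hc : IsBarycentric F c x) :
    IsBarycentric (stellarCarrier F x s) (substVertex x c w) p where
  nonneg := by
    have herase : 0 ≤ w.erase x := fun v => by
      rw [Finsupp.erase_apply]
      split_ifs
      exacts [le_rfl, hw.nonneg v]
    exact add_nonneg herase (smul_nonneg (hw.nonneg x) hc.nonneg)
  mem_supported := substVertex_mem_supported hc.mem_supported hw.mem_supported
  homogenization_eq := by
    rw [homogenization_substVertex hc.homogenization_eq, hw.homogenization_eq]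

end SubstVertex

section Weights

variable {𝕜 E : Type*} [Field 𝕜] [LinearOrder 𝕜] [IsStrictOrderedRing 𝕜] [AddCommGroup E]
  [Module 𝕜 E] [DecidableEq E] {F s : Finset E} {x p : E} {c : E →₀ 𝕜}

theorem convexHull_subset_convexHull_stellarCarrier (hx : x ∈ convexHull 𝕜 (F : Set E))
    (s : Finset E) :
    convexHull 𝕜 (s : Set E) ⊆ convexHull 𝕜 (stellarCarrier F x s : Set E) := by
  intro p hp
  obtain ⟨c, hc⟩ := mem_convexHull_iff_exists_isBarycentric.1 hx
  obtain ⟨w, hw⟩ := mem_convexHull_iff_exists_isBarycentric.1 hp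
  exact mem_convexHull_iff_exists_isBarycentric.2 ⟨_, hw.substVertex hc⟩

-- The ray from `x` through `p` leaves the simplex `s` through the face opposite to the vertex
-- `a ∈ F` that minimizes the ratio `w a / c a`.
theorem exists_mem_convexHull_insert_erase (hc : IsBarycentric F c x) (hpos : ∀ v ∈ F, 0 < c v)
    (hF : F.Nonempty) (hFs : F ⊆ s) (hp : p ∈ convexHull 𝕜 (s : Set E)) :
    ∃ a ∈ F, p ∈ convexHull 𝕜 ((insert x (s.erase a) : Finset E) : Set E) := by
  obtain ⟨w, hw⟩ := mem_convexHull_iff_exists_isBarycentric.1 hp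
  obtain ⟨a, ha, hmin⟩ := F.exists_min_image (fun v => w v / c v) hF
  have hm : 0 ≤ w a / c a := div_nonneg (hw.nonneg a) (hc.nonneg a)
  have hc0 : ∀ v ∉ F, c v = 0 := (Finsupp.mem_supported' _ _).1 hc.mem_supported
  have hw0 : ∀ v ∉ s, w v = 0 := (Finsupp.mem_supported' _ _).1 hw.mem_supported
  have hnonneg : 0 ≤ w - (w a / c a) • c := by
    intro v
    by_cases hv : v ∈ F
    · simpa using (le_div_iff₀ (hpos v hv)).1 (hmin v hv)
    · simpa [hc0 v hv] using hw.nonneg v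
  have hsupp : ∀ v ∉ s.erase a, (w - (w a / c a) • c) v = 0 := by
    intro v hv
    rcases eq_or_ne v a with rfl | hva
    · simp [(hpos v ha).ne']
    · have hvs : v ∉ s := fun hvs => hv (Finset.mem_erase.2 ⟨hva, hvs⟩)
      simp [hw0 v hvs, hc0 v fun hvF => hvs (hFs hvF)]
  refine ⟨a, ha, mem_convexHull_iff_exists_isBarycentric.2
    ⟨w - (w a / c a) • c + Finsupp.single x (w a / c a), ?_, ?_, ?_⟩⟩
  · exact add_nonneg hnonneg (Finsupp.single_nonneg.2 hm)
  · refine add_mem ?_ (Finsupp.single_mem_supported 𝕜 _ (by simp))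
    exact (Finsupp.mem_supported' _ _).2 fun v hv => hsupp v (by grind)
  · simp [homogenization_single, hw.homogenization_eq, hc.homogenization_eq]

end Weights

section SubstVertexInjective

variable {𝕜 E : Type*} [Ring 𝕜] {F s : Finset E} {x : E} {c w u : E →₀ 𝕜}

theorem eq_zero_of_substVertex_eq_zero [NoZeroDivisors 𝕜] (hx : x ∉ F) (hc : ∀ v ∈ F, c v ≠ 0)
    (hFs : ¬F ⊆ s) (hw : w ∈ Finsupp.supported 𝕜 𝕜 (s : Set E)) (h : substVertex x c w = 0) :
    w = 0 := by
  obtain ⟨a, haF, has⟩ := Finset.not_subset.1 hFs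
  have ha := DFunLike.congr_fun h a
  rw [substVertex_apply_of_ne (ne_of_mem_of_not_mem haF hx),
    (Finsupp.mem_supported' _ _).1 hw a has, zero_add] at ha
  have hwx : w x = 0 := (mul_eq_zero_iff_right (hc a haF)).1 ha
  exact eq_of_substVertex_eq (h.trans (by simp [substVertex])) hwx

theorem apply_le_of_substVertex_eq [LinearOrder 𝕜] [IsStrictOrderedRing 𝕜] (hx : x ∉ F)
    (hpos : ∀ v ∈ F, 0 < c v) (hFs : ¬F ⊆ s) (hw : w ∈ Finsupp.supported 𝕜 𝕜 (s : Set E))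
    (hu : 0 ≤ u) (h : substVertex x c w = substVertex x c u) : u x ≤ w x := by
  obtain ⟨a, haF, has⟩ := Finset.not_subset.1 hFs
  have ha := DFunLike.congr_fun h a
  have hax : a ≠ x := ne_of_mem_of_not_mem haF hx
  rw [substVertex_apply_of_ne hax, substVertex_apply_of_ne hax,
    (Finsupp.mem_supported' _ _).1 hw a has, zero_add] at ha
  refine le_of_mul_le_mul_right ?_ (hpos a haF)
  exact ha ▸ le_add_of_nonneg_left (hu a)

end SubstVertexInjective

section StellarCenter

variable {𝕜 E : Type*} [Ring 𝕜] [PartialOrder 𝕜] [AddCommGroup E] [Module 𝕜 E]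

/-- `x` lies in the interior of the face `F` of `K`, that is, in none of its facets, and is not a
vertex of `F`; these are the points at which `K` can be subdivided by coning off. -/
structure IsStellarCenter [DecidableEq E] (K : SimplicialComplex 𝕜 E) (F : Finset E) (x : E) :
    Prop where
  mem_faces : F ∈ K.faces
  notMem : x ∉ F
  mem_convexHull : x ∈ convexHull 𝕜 (F : Set E)
  notMem_convexHull_erase : ∀ v ∈ F, x ∉ convexHull 𝕜 (F.erase v : Set E)

namespace IsStellarCenter

variable [DecidableEq E] {K : SimplicialComplex 𝕜 E} {F s : Finset E} {x : E}

theorem of_card_eq_two (hF : F ∈ K.faces) (hcard : F.card = 2)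
    (hx : x ∈ convexHull 𝕜 (F : Set E)) (hxF : x ∉ F) : IsStellarCenter K F x where
  mem_faces := hF
  notMem := hxF
  mem_convexHull := hx
  notMem_convexHull_erase v hv := by
    obtain ⟨u, hu⟩ := Finset.card_eq_one.1 ((Finset.card_erase_of_mem hv).trans (by rw [hcard]))
    have huF : u ∈ F := Finset.mem_of_mem_erase (hu ▸ Finset.mem_singleton_self u)
    rw [hu, Finset.coe_singleton, convexHull_singleton, Set.mem_singleton_iff]
    rintro rfl
    exact hxF huF

theorem nonempty (h : IsStellarCenter K F x) : F.Nonempty :=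
  K.nonempty_of_mem_faces h.mem_faces

theorem notMem_of_mem_faces (h : IsStellarCenter K F x) (hs : s ∈ K.faces) : x ∉ s := by
  intro hxs
  have hxK : x ∈ K.vertices :=
    K.down_closed hs (Finset.singleton_subset_iff.2 hxs) (Finset.singleton_nonempty x)
  exact h.notMem ((SimplicialComplex.vertex_mem_convexHull_iff hxK h.mem_faces).1 h.mem_convexHull)

end IsStellarCenter

end StellarCenter

section IsSubdivision

variable {𝕜 E : Type*} [Ring 𝕜] [PartialOrder 𝕜] [AddCommGroup E] [Module 𝕜 E]

/-- The complex `K'` is a subdivision of `K`: it has the same underlying space and each of its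
simplices is contained in a simplex of `K`. -/
structure IsSubdivision (K' K : SimplicialComplex 𝕜 E) : Prop where
  space_eq : K'.space = K.space
  exists_convexHull_subset : ∀ t ∈ K'.faces, ∃ s ∈ K.faces,
    convexHull 𝕜 (t : Set E) ⊆ convexHull 𝕜 (s : Set E)

theorem IsSubdivision.trans {K K' K'' : SimplicialComplex 𝕜 E} (h' : IsSubdivision K'' K')
    (h : IsSubdivision K' K) : IsSubdivision K'' K where
  space_eq := h'.space_eq.trans h.space_eq
  exists_convexHull_subset r hr := by
    obtain ⟨t, ht, hrt⟩ := h'.exists_convexHull_subset r hr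
    obtain ⟨s, hs, hts⟩ := h.exists_convexHull_subset t ht
    exact ⟨s, hs, hrt.trans hts⟩

end IsSubdivision

theorem IsSubdivision.card_le {𝕜 E : Type*} [DivisionRing 𝕜] [PartialOrder 𝕜] [AddCommGroup E]
    [Module 𝕜 E] {K K' : SimplicialComplex 𝕜 E} {n : ℕ} (h : IsSubdivision K' K)
    (hK : ∀ s ∈ K.faces, s.card ≤ n) : ∀ t ∈ K'.faces, t.card ≤ n := by
  intro t ht
  obtain ⟨s, hs, hts⟩ := h.exists_convexHull_subset t ht
  refine ((K'.indep ht).card_le_card_of_subset_affineSpan ?_).trans (hK s hs)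
  exact (subset_convexHull 𝕜 _).trans (hts.trans (convexHull_subset_affineSpan _))

section StellarSubdivision

variable {𝕜 E : Type*} [Field 𝕜] [LinearOrder 𝕜] [IsStrictOrderedRing 𝕜] [AddCommGroup E]
  [Module 𝕜 E] [DecidableEq E] {K : SimplicialComplex 𝕜 E} {F s : Finset E} {x : E}

namespace IsStellarCenter

theorem exists_isBarycentric_pos (h : IsStellarCenter K F x) :
    ∃ c : E →₀ 𝕜, IsBarycentric F c x ∧ ∀ v ∈ F, 0 < c v := by
  obtain ⟨c, hc⟩ := mem_convexHull_iff_exists_isBarycentric.1 h.mem_convexHull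
  refine ⟨c, hc, fun v hv => (hc.nonneg v).lt_of_ne' fun hcv => ?_⟩
  refine h.notMem_convexHull_erase v hv
    (mem_convexHull_iff_exists_isBarycentric.2 ⟨c, hc.nonneg, ?_, hc.homogenization_eq⟩)
  have hc0 := (Finsupp.mem_supported' _ _).1 hc.mem_supported
  exact (Finsupp.mem_supported' _ _).2 fun u hu => by
    rcases eq_or_ne u v with rfl | huv
    · simpa using hcv
    · exact hc0 u (by simpa [huv] using hu)

/-- The stellar subdivision of `K` at `x`: the simplices containing `F` are replaced by the cones
with apex `x` over those of their faces that do not contain `F`. -/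
def subdivision (h : IsStellarCenter K F x) : SimplicialComplex 𝕜 E where
  faces := {s | ¬F ⊆ s ∧ stellarCarrier F x s ∈ K.faces}
  isRelLowerSet_faces := by
    rintro s ⟨hFs, hs⟩
    refine ⟨Finset.nonempty_iff_ne_empty.2 ?_, fun t hts ht => ⟨fun hFt => hFs (hFt.trans hts),
      K.down_closed hs (stellarCarrier_mono hts) (stellarCarrier_nonempty h.nonempty ht)⟩⟩
    rintro rfl
    rw [stellarCarrier_of_notMem (Finset.notMem_empty x)] at hs
    exact SimplicialComplex.empty_notMem hs
  indep := by
    rintro s ⟨hFs, hs⟩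
    obtain ⟨c, hc, hpos⟩ := h.exists_isBarycentric_pos
    refine affineIndependent_coe_iff_homogenization.2 fun w hw hw0 => ?_
    refine eq_zero_of_substVertex_eq_zero h.notMem (fun v hv => (hpos v hv).ne') hFs hw ?_
    exact affineIndependent_coe_iff_homogenization.1 (K.indep hs) _
      (substVertex_mem_supported hc.mem_supported hw)
      (by rw [homogenization_substVertex hc.homogenization_eq, hw0])
  inter_subset_convexHull := by
    rintro s t ⟨hFs, hs⟩ ⟨hFt, ht⟩ p ⟨hps, hpt⟩
    obtain ⟨c, hc, hpos⟩ := h.exists_isBarycentric_pos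
    obtain ⟨w, hw⟩ := mem_convexHull_iff_exists_isBarycentric.1 hps
    obtain ⟨u, hu⟩ := mem_convexHull_iff_exists_isBarycentric.1 hpt
    have hsubst : substVertex x c w = substVertex x c u :=
      (hw.substVertex hc).eq_of_mem_faces (hu.substVertex hc) hs ht
    have hwu : w = u := eq_of_substVertex_eq hsubst <| le_antisymm
      (apply_le_of_substVertex_eq h.notMem hpos hFt hu.mem_supported hw.nonneg hsubst.symm)
      (apply_le_of_substVertex_eq h.notMem hpos hFs hw.mem_supported hu.nonneg hsubst)
    rw [← Finset.coe_inter]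
    refine mem_convexHull_iff_exists_isBarycentric.2 ⟨w, hw.nonneg, ?_, hw.homogenization_eq⟩
    rw [Finset.coe_inter, Finsupp.supported_inter]
    exact ⟨hw.mem_supported, hwu ▸ hu.mem_supported⟩

theorem mem_faces_subdivision (h : IsStellarCenter K F x) :
    s ∈ h.subdivision.faces ↔ ¬F ⊆ s ∧ stellarCarrier F x s ∈ K.faces :=
  Iff.rfl

theorem mem_faces_subdivision_of_not_subset (h : IsStellarCenter K F x) (hs : s ∈ K.faces)
    (hFs : ¬F ⊆ s) : s ∈ h.subdivision.faces :=
  ⟨hFs, by rwa [stellarCarrier_of_notMem (h.notMem_of_mem_faces hs)]⟩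

theorem insert_erase_mem_faces_subdivision (h : IsStellarCenter K F x) (hs : s ∈ K.faces)
    (hFs : F ⊆ s) {a : E} (ha : a ∈ F) : insert x (s.erase a) ∈ h.subdivision.faces := by
  refine ⟨fun hF => ?_, ?_⟩
  · have := h.notMem
    grind
  · rwa [stellarCarrier_insert_erase hFs (h.notMem_of_mem_faces hs) ha]

theorem finite_faces_subdivision (h : IsStellarCenter K F x) (hfin : K.faces.Finite) :
    h.subdivision.faces.Finite := by
  refine (hfin.biUnion fun t _ => (insert x t).powerset.finite_toSet).subset fun s hs => ?_
  exact Set.mem_biUnion hs.2 (Finset.mem_coe.2 (Finset.mem_powerset.2 subset_insert_stellarCarrier))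

theorem isSubdivision (h : IsStellarCenter K F x) : IsSubdivision h.subdivision K := by
  have hcarrier := convexHull_subset_convexHull_stellarCarrier h.mem_convexHull
  refine ⟨?_, fun t ht => ⟨_, ht.2, hcarrier t⟩⟩
  ext p
  simp only [SimplicialComplex.mem_space_iff]
  constructor
  · rintro ⟨s, hs, hp⟩
    exact ⟨_, hs.2, hcarrier s hp⟩
  · rintro ⟨s, hs, hp⟩
    by_cases hFs : F ⊆ s
    · obtain ⟨c, hc, hpos⟩ := h.exists_isBarycentric_pos
      obtain ⟨a, ha, hpa⟩ := exists_mem_convexHull_insert_erase hc hpos h.nonempty hFs hp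
      exact ⟨_, h.insert_erase_mem_faces_subdivision hs hFs ha, hpa⟩
    · exact ⟨s, h.mem_faces_subdivision_of_not_subset hs hFs, hp⟩

end IsStellarCenter

end StellarSubdivision

section EulerCharacteristic

variable {𝕜 E : Type*} [Ring 𝕜] [PartialOrder 𝕜] [AddCommGroup E] [Module 𝕜 E]

/-- The Euler characteristic `∑ (-1) ^ dim s` over the faces `s` of a finite simplicial complex,
where the parity of `dim s = s.card - 1` is that of `s.card + 1`. For infinite complexes this is a
junk value. -/
noncomputable def eulerCharacteristic (K : SimplicialComplex 𝕜 E) : ℤ :=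
  ∑ᶠ s ∈ K.faces, (-1) ^ (s.card + 1)

variable {K : SimplicialComplex 𝕜 E}

theorem eulerCharacteristic_eq_sum_range {n : ℕ} (hfin : K.faces.Finite)
    (hdim : ∀ s ∈ K.faces, s.card ≤ n) :
    eulerCharacteristic K =
      ∑ i ∈ Finset.range n, (-1) ^ i * ({s ∈ K.faces | s.card = i + 1}.ncard : ℤ) := by
  have hcard : ∀ s ∈ K.faces, 0 < s.card := fun s hs => (K.nonempty_of_mem_faces hs).card_pos
  have hmaps : ∀ s ∈ hfin.toFinset, s.card - 1 ∈ Finset.range n := by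
    intro s hs
    have hs := hfin.mem_toFinset.1 hs
    exact Finset.mem_range.2 (Nat.sub_one_lt_of_le (hcard s hs) (hdim s hs))
  rw [eulerCharacteristic, finsum_mem_eq_finite_toFinset_sum _ hfin,
    ← Finset.sum_fiberwise_of_maps_to hmaps]
  refine Finset.sum_congr rfl fun i _ => ?_
  have hfiber : {s ∈ K.faces | s.card = i + 1} =
      (hfin.toFinset.filter fun s => s.card - 1 = i : Finset (Finset E)) := by
    ext s
    simp only [Set.mem_ofPred_eq, Finset.coe_filter, Set.Finite.mem_toFinset]
    have := hcard s
    grind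
  have hsign : ∀ s ∈ hfin.toFinset.filter fun s => s.card - 1 = i,
      (-1 : ℤ) ^ (s.card + 1) = (-1) ^ i := by
    intro s hs
    have hsi : s.card = i + 1 := (hfiber.superset hs).2
    rw [hsi, pow_succ, pow_succ, mul_assoc, neg_one_mul, neg_neg, mul_one]
  rw [Finset.sum_congr rfl hsign, hfiber, Set.ncard_coe_finset, Finset.sum_const, nsmul_eq_mul,
    mul_comm]

theorem eulerCharacteristic_eq_of_card_le_three (hfin : K.faces.Finite)
    (hdim : ∀ s ∈ K.faces, s.card ≤ 3) :
    eulerCharacteristic K =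
      ({s ∈ K.faces | s.card = 1}.ncard : ℤ) - {s ∈ K.faces | s.card = 2}.ncard
        + {s ∈ K.faces | s.card = 3}.ncard := by
  rw [eulerCharacteristic_eq_sum_range hfin hdim]
  simp [Finset.sum_range_succ, sub_eq_add_neg]

end EulerCharacteristic

section StellarEulerCharacteristic

variable {𝕜 E : Type*} [Field 𝕜] [LinearOrder 𝕜] [IsStrictOrderedRing 𝕜] [AddCommGroup E]
  [Module 𝕜 E] [DecidableEq E] {K : SimplicialComplex 𝕜 E} {F t : Finset E} {x : E}

theorem IsStellarCenter.sum_filter_stellarCarrier_eq (h : IsStellarCenter K F x)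
    (hfin' : h.subdivision.faces.Finite) (ht : t ∈ K.faces) :
    ∑ s ∈ hfin'.toFinset with stellarCarrier F x s = t, (-1 : ℤ) ^ (s.card + 1) =
      (-1) ^ (t.card + 1) := by
  have hx := h.notMem_of_mem_faces ht
  have hmem (s : Finset E) : s ∈ hfin'.toFinset.filter (stellarCarrier F x · = t) ↔
      ¬F ⊆ s ∧ stellarCarrier F x s = t := by
    simp only [Finset.mem_filter, Set.Finite.mem_toFinset, h.mem_faces_subdivision]
    grind
  by_cases hFt : F ⊆ t
  · have hfiber : hfin'.toFinset.filter (stellarCarrier F x · = t) =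
        F.ssubsets.image fun r => insert x (t \ F ∪ r) := by
      ext s
      simp only [hmem, stellarCarrier_eq_iff_of_subset hFt hx, Finset.mem_image,
        Finset.mem_ssubsets]
    rw [hfiber, Finset.sum_image (injOn_insert_sdiff_union h.notMem),
      sum_ssubsets_neg_one_pow_card_insert h.nonempty hFt hx]
  · have hfiber : hfin'.toFinset.filter (stellarCarrier F x · = t) = {t} := by
      ext s
      rw [hmem, stellarCarrier_eq_iff_of_not_subset hFt hx, Finset.mem_singleton]
      grind
    rw [hfiber, Finset.sum_singleton]

theorem IsStellarCenter.eulerCharacteristic_subdivision (h : IsStellarCenter K F x)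
    (hfin : K.faces.Finite) :
    eulerCharacteristic h.subdivision = eulerCharacteristic K := by
  have hfin' := h.finite_faces_subdivision hfin
  have hmaps : ∀ s ∈ hfin'.toFinset, stellarCarrier F x s ∈ hfin.toFinset := fun s hs =>
    hfin.mem_toFinset.2 (hfin'.mem_toFinset.1 hs).2
  rw [eulerCharacteristic, eulerCharacteristic, finsum_mem_eq_finite_toFinset_sum _ hfin,
    finsum_mem_eq_finite_toFinset_sum _ hfin', ← Finset.sum_fiberwise_of_maps_to hmaps]
  exact Finset.sum_congr rfl fun t ht =>
    h.sum_filter_stellarCarrier_eq hfin' (hfin.mem_toFinset.1 ht)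

end StellarEulerCharacteristic

section PairSubdivision

variable {𝕜 E : Type*} [Field 𝕜] [LinearOrder 𝕜] [IsStrictOrderedRing 𝕜] [AddCommGroup E]
  [Module 𝕜 E] [DecidableEq E] {K : SimplicialComplex 𝕜 E} {F G σ : Finset E}
  {x y : E}

theorem IsStellarCenter.subdivision_of_not_subset (hx : IsStellarCenter K F x)
    (hy : IsStellarCenter K G y) (hFG : ¬F ⊆ G) : IsStellarCenter hx.subdivision G y :=
  { hy with mem_faces := hx.mem_faces_subdivision_of_not_subset hy.mem_faces hFG }

theorem IsStellarCenter.pair_mem_faces_subdivision (hx : IsStellarCenter K F x)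
    (hy : IsStellarCenter hx.subdivision G y) (hσ : σ ∈ K.faces) (hFσ : F ⊆ σ) (hGσ : G ⊆ σ) :
    {x, y} ∈ hy.subdivision.faces := by
  obtain ⟨a, haF, haG⟩ := Finset.not_subset.1 hy.mem_faces.1
  obtain ⟨b, hb⟩ := hy.nonempty
  have hxb : x ≠ b := (ne_of_mem_of_not_mem (hGσ hb) (hx.notMem_of_mem_faces hσ)).symm
  have hxG : insert x G ∈ hx.subdivision.faces :=
    hx.subdivision.down_closed (hx.insert_erase_mem_faces_subdivision hσ hFσ haF)
      (by grind) (Finset.insert_nonempty x G)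
  exact hy.subdivision.down_closed
    (hy.insert_erase_mem_faces_subdivision hxG (Finset.subset_insert x G) hb)
    (by grind) (Finset.insert_nonempty x {y})

theorem subdivision_preserves_euler_sum_general (hfin : K.faces.Finite)
    (hx : IsStellarCenter K F x) (hy : IsStellarCenter K G y) (hne : F ≠ G) (hσ : σ ∈ K.faces)
    (hFσ : F ⊆ σ) (hGσ : G ⊆ σ) :
    ∃ K' : SimplicialComplex 𝕜 E, K'.faces.Finite ∧ {x, y} ∈ K'.faces ∧ IsSubdivision K' K ∧
      eulerCharacteristic K' = eulerCharacteristic K := by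
  wlog hnot : ¬F ⊆ G generalizing F G x y
  · rw [Finset.pair_comm]
    exact this hy hx hne.symm hGσ hFσ fun hGF => hne ((not_not.1 hnot).antisymm hGF)
  have hy' := hx.subdivision_of_not_subset hy hnot
  have hfin' := hx.finite_faces_subdivision hfin
  refine ⟨hy'.subdivision, hy'.finite_faces_subdivision hfin',
    hx.pair_mem_faces_subdivision hy' hσ hFσ hGσ,
    hy'.isSubdivision.trans hx.isSubdivision, ?_⟩
  rw [hy'.eulerCharacteristic_subdivision hfin', hx.eulerCharacteristic_subdivision hfin]

end PairSubdivision

/-- **Subdivision lemma.** Let `K` be a finite `2`-dimensional simplicial complex in the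
plane, `σ` a triangle of `K`, and `τ = (x, y)` a segment dividing `σ`, where `x` and `y`
lie (strictly) on two different sides `e₁`, `e₂` of `σ`.  Then there is a subdivision `K'`
of `K` (same underlying space, every simplex of `K'` contained in a simplex of `K`) in
which `{x, y}` is a `1`-simplex, and the quantity `n₀ - n₁ + n₂` is the same for `K`
and `K'`. -/
theorem subdivision_preserves_euler_sum
    (K : SimplicialComplex ℝ (EuclideanSpace ℝ (Fin 2)))
    (hfin : K.faces.Finite)
    (hdim : ∀ s ∈ K.faces, s.card ≤ 3)
    (σ : Finset (EuclideanSpace ℝ (Fin 2))) (hσ : σ ∈ K.faces) (hσ3 : σ.card = 3)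
    (e₁ e₂ : Finset (EuclideanSpace ℝ (Fin 2)))
    (he₁ : e₁ ⊆ σ) (he₂ : e₂ ⊆ σ) (hc₁ : e₁.card = 2) (hc₂ : e₂.card = 2) (hne : e₁ ≠ e₂)
    (x y : EuclideanSpace ℝ (Fin 2))
    (hx : x ∈ convexHull ℝ (e₁ : Set (EuclideanSpace ℝ (Fin 2)))) (hxv : x ∉ e₁)
    (hy : y ∈ convexHull ℝ (e₂ : Set (EuclideanSpace ℝ (Fin 2)))) (hyv : y ∉ e₂) :
    ∃ K' : SimplicialComplex ℝ (EuclideanSpace ℝ (Fin 2)),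
      K'.faces.Finite ∧
      ({x, y} : Finset (EuclideanSpace ℝ (Fin 2))) ∈ K'.faces ∧
      K'.space = K.space ∧
      (∀ t ∈ K'.faces, ∃ s ∈ K.faces,
        convexHull ℝ (t : Set (EuclideanSpace ℝ (Fin 2)))
          ⊆ convexHull ℝ (s : Set (EuclideanSpace ℝ (Fin 2)))) ∧
      ({s ∈ K'.faces | s.card = 1}.ncard : ℤ) - {s ∈ K'.faces | s.card = 2}.ncard
          + {s ∈ K'.faces | s.card = 3}.ncard
        = ({s ∈ K.faces | s.card = 1}.ncard : ℤ) - {s ∈ K.faces | s.card = 2}.ncard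
          + {s ∈ K.faces | s.card = 3}.ncard := by
  have hmem {e : Finset (EuclideanSpace ℝ (Fin 2))} (he : e ⊆ σ) (hc : e.card = 2) : e ∈ K.faces :=
    K.down_closed hσ he (Finset.card_pos.1 (by omega))
  obtain ⟨K', hfin', hxy, hsub, hχ⟩ := subdivision_preserves_euler_sum_general hfin
    (.of_card_eq_two (hmem he₁ hc₁) hc₁ hx hxv) (.of_card_eq_two (hmem he₂ hc₂) hc₂ hy hyv)
    hne hσ he₁ he₂
  rw [eulerCharacteristic_eq_of_card_le_three hfin' (hsub.card_le hdim),
    eulerCharacteristic_eq_of_card_le_three hfin hdim] at hχ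
  exact ⟨K', hfin', hxy, hsub.space_eq, hsub.exists_convexHull_subset, hχ⟩
end
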